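/- arXiv:1510.07433 — 3 statements merged into one kernel-verified Lean document; each statement's English description precedes it below -/
import Mathlib

section
/- Fix an arrangement (i,j,k,l) with {i,j,k,l} = {1,2,3,4} and set λ = b_i b_j/(b_k b_l), f₁ = (b_i + b_j − b_k − b_l)/(b_i b_j − b_k b_l), g₁ = (b_i b_j(b_k + b_l) − b_k b_l(b_i + b_j))/(b_i b_j − b_k b_l). Assume |q| < 1, |λ| < 1/|q|, λ ∉ {q^n : n ∈ ℕ, n ≥ 1}, λ does not lie in the closure of {q^n : n ∈ ℤ}, b_i + b_j ≠ b_k + b_l, and 1/b_i + 1/b_j ≠ 1/b_k + 1/b_l. Let (f⁽¹⁾, g⁽¹⁾) be a pair of functions, holomorphic on a neighborhood of 0 in ℂ, with f⁽¹⁾(0) = g⁽¹⁾(0) = 0, (f⁽¹⁾)'(0) = f₁, (g⁽¹⁾)'(0) = g₁, satisfying the relations (E1), (E2) at all t near 0 with f̄ = f⁽¹⁾(qt), ḡ = g⁽¹⁾(qt). Then there exist r > 0 and analytic functions u, v on {(t, ζ₁) ∈ ℂ² : |t| < r, |ζ₁| < r} with u(0,0) = v(0,0) = 0 such that, setting F(t,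 ζ₁) = f⁽¹⁾(t) + ζ₁(1 + u(t, ζ₁)) and G(t, ζ₁) = g⁽¹⁾(t) + ζ₁(−b_i b_j + v(t, ζ₁)), the relations (E1), (E2) hold with (t, f, g, f̄, ḡ) = (t, F(t, ζ₁), G(t, ζ₁), F(qt, qλζ₁), G(qt, qλζ₁)) for all (t, ζ₁) with |t| < r, |ζ₁| < r, |qλζ₁| < r. In particular F(t, 0) = f⁽¹⁾(t) and G(t, 0) = g⁽¹⁾(t). -/
/-!
The two relations are a composition of two maps of the same shape. Each of them, a *half step*
`HStep`, relates `(z, w)` to `(z, v)` by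
`(z w - k β₁ β₂ t²) (z v - k' β₃ β₄ t²) ∏ (z - ρᵢ) = (z w - 1) (z v - 1) ∏ (z - βᵢ t)`;
relation (E1) is such a step from `(g, f)` to `(g, f̄)`, relation (E2) one from `(f̄, g)` to
`(f̄, ḡ)`. At `t = z = w = 0` this relation is degenerate, so it is resolved by
`w = -k (z - (β₁ + β₂) t) + (z - β₁ t) (z - β₂ t) a`. In the coordinates `(t, z, a)` all four
factors `z - βᵢ t` cancel and the half step becomes holomorphic near `t = z = 0`, for every value
of `a` (`HStep.rel`, `HStep.conv`). The composition `HStep.full` of the two half steps maps `z = 0`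
to itself on `t = 0`; there it is affine in `a` with slope `μ⁻¹`, while its multiplier in the
direction of `z` is `μ = q λ` (`HStep.Link.full_zero_snd`, `HStep.Link.deriv_full`). As `|μ| < 1`,
the map has a one-dimensional stable direction over the contraction `t ↦ q t`.

Suppose the given solution lifts to a holomorphic invariant curve `(g⁽¹⁾(t), a₀(t))`. In coordinates
centred on it the stable manifold theorem `stable_lin` yields an invariant surface, parametrised
by `(t, ζ)` so that the dynamics on it is `(t, ζ) ↦ (q t, μ ζ)`. It is constructed by iterating the
backward graph transform, whose iterates converge uniformly; holomorphy of the limit, and its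
division by `ζ`, come from the Cauchy formula on a polydisc (`osgood`, `div_snd`). Returning from
`a` to `w` gives the family claimed (`HStep.Link.extend`).

It remains to find `a₀`. If neither of `bᵢ, bⱼ` equals one of `bₖ, bₗ`, the factors `g⁽¹⁾ - β t`
vanish to order exactly one and `a₀` is a quotient of holomorphic functions
(`HStep.Link.base_nondeg`). Otherwise one may take `bᵢ = bₖ`. Then `f₁ = 1 / bᵢ`, `g₁ = bᵢ`, and
comparing leading orders of a hypothetical deviation from the linear solution `f = t / bᵢ`,
`g = bᵢ t` shows that such a deviation forces `λ` to be a power of `q` (`Dev.rigid`). The linear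
solution lies on `z = β₁ t`, where `a` is not determined by `w`; `a₀` is obtained instead as an
invariant curve of the induced map of `a`, again by `stable_lin` (`HStep.Link.base_deg`).
-/

/-- The q-P(A₁) system in polynomial form: relations (E1) and (E2) for complex
quantities `(t, f, g, fb, gb)`, where `fb`, `gb` stand for `f̄`, `ḡ`. -/
def qpSys (b1 b2 b3 b4 b5 b6 b7 b8 q t f g fb gb : ℂ) : Prop :=
  ((g * f - t ^ 2) * (g * fb - q * t ^ 2) * (g - b5) * (g - b6) * (g - b7) * (g - b8) =
    (g * f - 1) * (g * fb - 1) * (g - b1 * t) * (g - b2 * t) * (g - b3 * t) * (g - b4 * t)) ∧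
  ((g * fb - q * t ^ 2) * (gb * fb - q ^ 2 * t ^ 2) * (fb - b5⁻¹) * (fb - b6⁻¹) *
      (fb - b7⁻¹) * (fb - b8⁻¹) =
    (g * fb - 1) * (gb * fb - 1) * (fb - q * t / b1) * (fb - q * t / b2) *
      (fb - q * t / b3) * (fb - q * t / b4))

open Metric Set Filter Topology

/-! ### Holomorphic functions of two variables -/

noncomputable section

open BoundedContinuousFunction

/-- The first coordinate `θ ↦ R exp(i θ₁)` of the parametrised torus, as an element of the Banach
algebra of bounded continuous functions of the two angles. -/
def circ1 (R : ℝ) : (ℝ × ℝ) →ᵇ ℂ :=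
  BoundedContinuousFunction.ofNormedAddCommGroup (fun θ => circleMap 0 R θ.1)
    (by fun_prop) |R| (by intro θ; simp)

/-- The second coordinate `θ ↦ R exp(i θ₂)` of the parametrised torus. -/
def circ2 (R : ℝ) : (ℝ × ℝ) →ᵇ ℂ :=
  BoundedContinuousFunction.ofNormedAddCommGroup (fun θ => circleMap 0 R θ.2)
    (by fun_prop) |R| (by intro θ; simp)

lemma circleMap_sub_lower {R : ℝ} (hR : 0 < R) (t : ℂ) (θ : ℝ) :
    R - ‖t‖ ≤ ‖circleMap 0 R θ - t‖ := by
  have := norm_sub_norm_le (circleMap 0 R θ) t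
  simpa [abs_of_pos hR] using this

lemma circleMap_sub_ne {R : ℝ} (hR : 0 < R) {t : ℂ} (ht : ‖t‖ < R) (θ : ℝ) :
    circleMap 0 R θ - t ≠ 0 := by
  have := circleMap_sub_lower hR t θ
  intro h
  rw [h, norm_zero] at this
  linarith

/-- The function `(s₁ - t)⁻¹` on the torus `|s₁| = |s₂| = R`, for `|t| < R`. -/
def cinv1 (R : ℝ) (hR : 0 < R) (t : ℂ) (ht : ‖t‖ < R) : (ℝ × ℝ) →ᵇ ℂ :=
  BoundedContinuousFunction.ofNormedAddCommGroup (fun θ => (circleMap 0 R θ.1 - t)⁻¹)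
    (Continuous.inv₀ (by fun_prop) fun θ => circleMap_sub_ne hR ht _) (R - ‖t‖)⁻¹ (by
      intro θ
      rw [norm_inv]
      exact inv_anti₀ (by linarith) (circleMap_sub_lower hR t _))

/-- The function `(s₂ - t)⁻¹` on the torus `|s₁| = |s₂| = R`, for `|t| < R`. -/
def cinv2 (R : ℝ) (hR : 0 < R) (t : ℂ) (ht : ‖t‖ < R) : (ℝ × ℝ) →ᵇ ℂ :=
  BoundedContinuousFunction.ofNormedAddCommGroup (fun θ => (circleMap 0 R θ.2 - t)⁻¹)
    (Continuous.inv₀ (by fun_prop) fun θ => circleMap_sub_ne hR ht _) (R - ‖t‖)⁻¹ (by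
      intro θ
      rw [norm_inv]
      exact inv_anti₀ (by linarith) (circleMap_sub_lower hR t _))

/-- The Cauchy kernel `(s₁ - p₁)⁻¹ (s₂ - p₂)⁻¹` on the torus, as an element of the Banach algebra
of bounded continuous functions. Defining it through `Ring.inverse` makes it analytic in `p`. -/
def cker (R : ℝ) (p : ℂ × ℂ) : (ℝ × ℝ) →ᵇ ℂ :=
  Ring.inverse ((circ1 R - p.1 • 1) * (circ2 R - p.2 • 1))

/-- The unit whose inverse is the Cauchy kernel at a point of the open polydisc. -/
def ckerUnit (R : ℝ) (hR : 0 < R) (p : ℂ × ℂ) (h1 : ‖p.1‖ < R) (h2 : ‖p.2‖ < R) :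
    ((ℝ × ℝ) →ᵇ ℂ)ˣ where
  val := (circ1 R - p.1 • 1) * (circ2 R - p.2 • 1)
  inv := cinv1 R hR p.1 h1 * cinv2 R hR p.2 h2
  val_inv := by
    ext θ
    have := circleMap_sub_ne hR h1 θ.1
    have := circleMap_sub_ne hR h2 θ.2
    simp [circ1, circ2, cinv1, cinv2]
    field_simp
  inv_val := by
    ext θ
    have := circleMap_sub_ne hR h1 θ.1
    have := circleMap_sub_ne hR h2 θ.2
    simp [circ1, circ2, cinv1, cinv2]
    field_simp

lemma cker_apply {R : ℝ} (hR : 0 < R) (p : ℂ × ℂ) (h1 : ‖p.1‖ < R) (h2 : ‖p.2‖ < R)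
    (θ : ℝ × ℝ) :
    cker R p θ = (circleMap 0 R θ.1 - p.1)⁻¹ * (circleMap 0 R θ.2 - p.2)⁻¹ := by
  have : cker R p = Ring.inverse ((ckerUnit R hR p h1 h2 : ((ℝ × ℝ) →ᵇ ℂ)ˣ) : (ℝ × ℝ) →ᵇ ℂ) := rfl
  rw [this, Ring.inverse_unit]
  rfl

lemma cker_analyticAt {R : ℝ} (hR : 0 < R) (p : ℂ × ℂ) (h1 : ‖p.1‖ < R) (h2 : ‖p.2‖ < R) :
    AnalyticAt ℂ (cker R) p := by
  have h := analyticAt_inverse (𝕜 := ℂ) (ckerUnit R hR p h1 h2)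
  have hu : AnalyticAt ℂ (fun p : ℂ × ℂ => (circ1 R - p.1 • 1) * (circ2 R - p.2 • 1)) p :=
    (analyticAt_const.sub (analyticAt_fst.smul analyticAt_const)).mul
      (analyticAt_const.sub (analyticAt_snd.smul analyticAt_const))
  exact AnalyticAt.comp (g := Ring.inverse) h hu

/-- Integration against a continuous density on the torus, as a bounded functional. -/
def torusCLM (ψ : ℝ × ℝ → ℂ) (hψ : Continuous ψ) : ((ℝ × ℝ) →ᵇ ℂ) →L[ℂ] ℂ :=
  LinearMap.mkContinuousOfExistsBound
    { toFun := fun k => ∫ b in (0:ℝ)..(2 * Real.pi), ∫ a in (0:ℝ)..(2 * Real.pi), ψ (a, b) * k (a, b)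
      map_add' := by
        intro k l
        have hc : ∀ k : (ℝ × ℝ) →ᵇ ℂ, Continuous fun x : ℝ × ℝ => ψ (x.2, x.1) * k (x.2, x.1) :=
          fun k => (hψ.comp continuous_swap).mul (k.continuous.comp continuous_swap)
        rw [← intervalIntegral.integral_add]
        · congr 1
          ext b
          rw [← intervalIntegral.integral_add]
          · congr 1
            ext a
            simp [mul_add]
          · exact ((hc k).comp (Continuous.prodMk_right b)).intervalIntegrable _ _
          · exact ((hc l).comp (Continuous.prodMk_right b)).intervalIntegrable _ _
        · exact (intervalIntegral.continuous_parametric_intervalIntegral_of_continuous'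
            (hc k) _ _).intervalIntegrable _ _
        · exact (intervalIntegral.continuous_parametric_intervalIntegral_of_continuous'
            (hc l) _ _).intervalIntegrable _ _
      map_smul' := by
        intro c k
        simp only [RingHom.id_apply, smul_eq_mul]
        rw [← intervalIntegral.integral_const_mul]
        congr 1
        ext b
        rw [← intervalIntegral.integral_const_mul]
        congr 1
        ext a
        simp
        ring }
    (by
      have hK : IsCompact (uIcc (0:ℝ) (2 * Real.pi) ×ˢ uIcc (0:ℝ) (2 * Real.pi)) :=
        isCompact_uIcc.prod isCompact_uIcc
      obtain ⟨C, hC⟩ := hK.exists_bound_of_continuousOn hψ.continuousOn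
      refine ⟨C * |2 * Real.pi - 0| * |2 * Real.pi - 0|, fun k => ?_⟩
      have : C * |2 * Real.pi - 0| * |2 * Real.pi - 0| * ‖k‖
        = (C * ‖k‖ * |2 * Real.pi - 0|) * |2 * Real.pi - 0| := by ring
      rw [this]
      refine intervalIntegral.norm_integral_le_of_norm_le_const fun b hb => ?_
      refine intervalIntegral.norm_integral_le_of_norm_le_const fun a ha => ?_
      have hab := hC (a, b) ⟨uIoc_subset_uIcc ha, uIoc_subset_uIcc hb⟩
      rw [norm_mul]
      exact mul_le_mul hab (k.norm_coe_le_norm _) (norm_nonneg _) ((norm_nonneg _).trans hab))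

lemma torusCLM_apply (ψ : ℝ × ℝ → ℂ) (hψ : Continuous ψ) (k : (ℝ × ℝ) →ᵇ ℂ) :
    torusCLM ψ hψ k =
      ∫ b in (0:ℝ)..(2 * Real.pi), ∫ a in (0:ℝ)..(2 * Real.pi), ψ (a, b) * k (a, b) := rfl

/-- The density turning integration over angles into the double contour integral of `f`. -/
def cdens (R : ℝ) (f : ℂ × ℂ → ℂ) (x : ℝ × ℝ) : ℂ :=
  deriv (circleMap 0 R) x.1 * deriv (circleMap 0 R) x.2 *
    f (circleMap 0 R x.1, circleMap 0 R x.2)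

lemma cdens_continuous {R : ℝ} (hR : 0 < R) {f : ℂ × ℂ → ℂ}
    (hc : ContinuousOn f (closedBall 0 R)) : Continuous (cdens R f) := by
  have h : Continuous fun x : ℝ × ℝ => f (circleMap 0 R x.1, circleMap 0 R x.2) := by
    refine hc.comp_continuous (by fun_prop) fun x => ?_
    simp [Prod.norm_def, abs_of_pos hR]
  unfold cdens
  simp only [deriv_circleMap]
  exact Continuous.mul (by fun_prop) h

/-- The iterated Cauchy formula on a polydisc for separately holomorphic functions. -/
lemma cauchy_polydisc {R : ℝ} (hR : 0 < R) {f : ℂ × ℂ → ℂ}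
    (hc : ContinuousOn f (closedBall 0 R))
    (h1 : ∀ z : ℂ, ‖z‖ ≤ R → DifferentiableOn ℂ (fun t => f (t, z)) (ball 0 R))
    (h2 : ∀ t : ℂ, ‖t‖ ≤ R → DifferentiableOn ℂ (fun z => f (t, z)) (ball 0 R))
    (p : ℂ × ℂ) (hp : p ∈ ball (0 : ℂ × ℂ) R) :
    torusCLM (cdens R f) (cdens_continuous hR hc) (cker R p) =
      (2 * Real.pi * Complex.I) ^ 2 * f p := by
  obtain ⟨t, z⟩ := p
  have ht : ‖t‖ < R := by
    have := norm_fst_le (t, z); simp at hp; exact lt_of_le_of_lt this (by simpa using hp)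
  have hz : ‖z‖ < R := by
    have := norm_snd_le (t, z); simp at hp; exact lt_of_le_of_lt this (by simpa using hp)
  have e1 : ∀ w : ℂ, ‖w‖ ≤ R →
      ∮ s in C(0, R), (s - t)⁻¹ • f (s, w) = (2 * Real.pi * Complex.I) • f (t, w) := by
    intro w hw
    refine DiffContOnCl.circleIntegral_sub_inv_smul ⟨h1 w hw, ?_⟩ (by simpa using ht)
    rw [closure_ball _ hR.ne']
    refine hc.comp (by fun_prop) fun s hs => ?_
    simp [Prod.norm_def] at hs ⊢
    exact ⟨hs, hw⟩
  have e2 : ∮ w in C(0, R), (w - z)⁻¹ • f (t, w) = (2 * Real.pi * Complex.I) • f (t, z) := by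
    refine DiffContOnCl.circleIntegral_sub_inv_smul ⟨h2 t ht.le, ?_⟩ (by simpa using hz)
    rw [closure_ball _ hR.ne']
    refine hc.comp (by fun_prop) fun s hs => ?_
    simp [Prod.norm_def] at hs ⊢
    exact ⟨ht.le, hs⟩
  rw [torusCLM_apply]
  have e3 : ∀ b : ℝ, ∫ a in (0:ℝ)..(2 * Real.pi), cdens R f (a, b) * cker R (t, z) (a, b)
      = (2 * Real.pi * Complex.I) * (deriv (circleMap 0 R) b •
        ((circleMap 0 R b - z)⁻¹ • f (t, circleMap 0 R b))) := by
    intro b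
    have := e1 (circleMap 0 R b) (by simp [abs_of_pos hR])
    rw [circleIntegral] at this
    rw [smul_eq_mul, smul_eq_mul, mul_left_comm, mul_left_comm _ _ (f _),
      ← smul_eq_mul (2 * Real.pi * Complex.I) (f _), ← this,
      ← mul_assoc, ← intervalIntegral.integral_const_mul]
    congr 1
    ext a
    rw [cker_apply hR _ ht hz]
    simp only [cdens, smul_eq_mul]
    ring
  simp only [e3]
  rw [intervalIntegral.integral_const_mul]
  rw [circleIntegral] at e2
  rw [e2, smul_eq_mul]
  ring

/-- **Osgood's lemma**: a continuous, separately holomorphic function of two variables is jointly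
analytic. The Cauchy formula writes it as a bounded functional of the Cauchy kernel, which depends
analytically on the point. -/
lemma osgood {R : ℝ} (hR : 0 < R) {f : ℂ × ℂ → ℂ}
    (hc : ContinuousOn f (closedBall 0 R))
    (h1 : ∀ z : ℂ, ‖z‖ ≤ R → DifferentiableOn ℂ (fun t => f (t, z)) (ball 0 R))
    (h2 : ∀ t : ℂ, ‖t‖ ≤ R → DifferentiableOn ℂ (fun z => f (t, z)) (ball 0 R)) :
    AnalyticOnNhd ℂ f (ball 0 R) := by
  intro p hp
  have hp' : ‖p‖ < R := by simpa using hp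
  have key : AnalyticAt ℂ (fun p => ((2 * Real.pi * Complex.I) ^ 2)⁻¹ *
      torusCLM (cdens R f) (cdens_continuous hR hc) (cker R p)) p := by
    refine analyticAt_const.mul ?_
    exact (ContinuousLinearMap.analyticAt _ _).comp
      (cker_analyticAt hR p ((norm_fst_le p).trans_lt hp') ((norm_snd_le p).trans_lt hp'))
  refine key.congr ?_
  filter_upwards [isOpen_ball.mem_nhds hp] with x hx
  rw [cauchy_polydisc hR hc h1 h2 x hx, ← mul_assoc, inv_mul_cancel₀, one_mul]
  simp [Real.pi_ne_zero]

/-- Hadamard division: an analytic function vanishing on `z = 0` is `z` times an analytic function,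
namely the Cauchy integral of `f` with the extra factor `s₂⁻¹`. -/
lemma div_snd {R : ℝ} (hR : 0 < R) {f : ℂ × ℂ → ℂ}
    (hf : AnalyticOnNhd ℂ f (closedBall 0 R)) (h0 : ∀ t : ℂ, ‖t‖ < R → f (t, 0) = 0) :
    ∃ g : ℂ × ℂ → ℂ, AnalyticOnNhd ℂ g (ball 0 R) ∧ ∀ p ∈ ball (0 : ℂ × ℂ) R, f p = p.2 * g p := by
  have hc := hf.continuousOn
  have h1 : ∀ z : ℂ, ‖z‖ ≤ R → DifferentiableOn ℂ (fun t => f (t, z)) (ball 0 R) := by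
    intro z hz t ht
    have : AnalyticAt ℂ f (t, z) := hf _ (by simp [Prod.norm_def] at ht ⊢; exact ⟨ht.le, hz⟩)
    exact (this.differentiableAt.comp t (by fun_prop)).differentiableWithinAt
  have h2 : ∀ t : ℂ, ‖t‖ ≤ R → DifferentiableOn ℂ (fun z => f (t, z)) (ball 0 R) := by
    intro t ht z hz
    have : AnalyticAt ℂ f (t, z) := hf _ (by simp [Prod.norm_def] at hz ⊢; exact ⟨ht, hz.le⟩)
    exact (this.differentiableAt.comp z (by fun_prop)).differentiableWithinAt
  have hRn : ‖(0:ℂ)‖ < R := by simpa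
  set W := cinv2 R hR 0 hRn with hW
  set T := torusCLM (cdens R f) (cdens_continuous hR hc) with hT
  refine ⟨fun p => ((2 * Real.pi * Complex.I) ^ 2)⁻¹ * T (cker R p * W), ?_, ?_⟩
  · intro p hp
    have hp' : ‖p‖ < R := by simpa using hp
    refine analyticAt_const.mul ?_
    exact (T.analyticAt _).comp ((cker_analyticAt hR p ((norm_fst_le p).trans_lt hp')
      ((norm_snd_le p).trans_lt hp')).mul analyticAt_const)
  · intro p hp
    have hp' : ‖p‖ < R := by simpa using hp
    have hp1 := (norm_fst_le p).trans_lt hp'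
    have hp2 := (norm_snd_le p).trans_lt hp'
    have e : p.2 • (cker R p * W) = cker R p - cker R (p.1, 0) := by
      ext θ
      have a1 := circleMap_sub_ne hR hp1 θ.1
      have a2 := circleMap_sub_ne hR hp2 θ.2
      have a3 := circleMap_sub_ne hR hRn θ.2
      have a4 : W θ = (circleMap 0 R θ.2 - 0)⁻¹ := rfl
      rw [BoundedContinuousFunction.sub_apply, cker_apply hR p hp1 hp2,
        cker_apply hR (p.1, 0) hp1 hRn]
      simp only [BoundedContinuousFunction.coe_smul, BoundedContinuousFunction.coe_mul,
        Pi.mul_apply, cker_apply hR p hp1 hp2, a4, smul_eq_mul]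
      rw [sub_zero] at a3 ⊢
      field_simp
      ring
    have e' : p.2 * T (cker R p * W) = T (cker R p) - T (cker R (p.1, 0)) := by
      rw [← map_sub, ← e, map_smul, smul_eq_mul]
    have hq : ((p.1, 0) : ℂ × ℂ) ∈ ball (0 : ℂ × ℂ) R := by
      simp [Prod.norm_def]; exact hp1
    rw [mul_left_comm, e', hT, cauchy_polydisc hR hc h1 h2 p hp,
      cauchy_polydisc hR hc h1 h2 _ hq, h0 _ hp1, mul_zero, sub_zero, ← mul_assoc,
      inv_mul_cancel₀, one_mul]
    simp [Real.pi_ne_zero]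
end

/-- A uniform limit of analytic functions of two variables is analytic. -/
lemma analytic_of_unif {r : ℝ} {F : ℕ → ℂ × ℂ → ℂ} {f : ℂ × ℂ → ℂ}
    (hF : ∀ k, AnalyticOnNhd ℂ (F k) (ball 0 r))
    (hu : TendstoUniformlyOn F f atTop (ball 0 r)) : AnalyticOnNhd ℂ f (ball 0 r) := by
  intro p hp
  have hp' : ‖p‖ < r := by simpa using hp
  obtain ⟨R, hpR, hRr⟩ := exists_between hp'
  have hR : 0 < R := (norm_nonneg p).trans_lt hpR
  have hsub : closedBall (0 : ℂ × ℂ) R ⊆ ball 0 r := closedBall_subset_ball hRr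
  refine osgood hR ((hu.continuousOn (Eventually.frequently
    (Eventually.of_forall fun k => (hF k).continuousOn))).mono hsub) ?_ ?_ p (by simpa using hpR)
  · intro z hz
    have hm : MapsTo (fun t : ℂ => (t, z)) (ball 0 R) (ball (0 : ℂ × ℂ) r) := fun t ht =>
      hsub (by simp [Prod.norm_def] at ht ⊢; exact ⟨ht.le, hz⟩)
    have hv := (hu.comp (fun t : ℂ => (t, z))).mono hm
    refine hv.tendstoLocallyUniformlyOn.differentiableOn (Eventually.of_forall fun k t ht => ?_)
      isOpen_ball
    exact ((hF k _ (hm ht)).differentiableAt.comp t (by fun_prop)).differentiableWithinAt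
  · intro z hz
    have hm : MapsTo (fun t : ℂ => (z, t)) (ball 0 R) (ball (0 : ℂ × ℂ) r) := fun t ht =>
      hsub (by simp [Prod.norm_def] at ht ⊢; exact ⟨hz, ht.le⟩)
    have hv := (hu.comp (fun t : ℂ => (z, t))).mono hm
    refine hv.tendstoLocallyUniformlyOn.differentiableOn (Eventually.of_forall fun k t ht => ?_)
      isOpen_ball
    exact ((hF k _ (hm ht)).differentiableAt.comp t (by fun_prop)).differentiableWithinAt

/-- If the partial derivative of `s` along the second factor vanishes at the origin, then the
Lipschitz constant of `s` in that factor is `O(m)` on the ball of radius `m`. -/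
lemma quad_lip {s : ℂ × (ℂ × ℂ) → ℂ} (hs : AnalyticAt ℂ s 0)
    (h0 : ∀ v, fderiv ℂ s 0 (0, v) = 0) :
    ∃ C > (0 : ℝ), ∃ δ > (0 : ℝ), AnalyticOnNhd ℂ s (ball 0 δ) ∧
      ∀ (m : ℝ) (t : ℂ) (w w' : ℂ × ℂ), m < δ → ‖t‖ ≤ m → ‖w‖ ≤ m → ‖w'‖ ≤ m →
        ‖s (t, w) - s (t, w')‖ ≤ C * m * ‖w - w'‖ := by
  have hd : DifferentiableAt ℂ (fderiv ℂ s) 0 := hs.fderiv.differentiableAt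
  obtain ⟨C, hC, hb⟩ := hd.isBigO_sub.exists_pos
  rw [Asymptotics.IsBigOWith] at hb
  obtain ⟨δ, hδ, hball⟩ := Metric.eventually_nhds_iff_ball.1 (hb.and hs.eventually_analyticAt)
  refine ⟨C, hC, δ, hδ, fun z hz => (hball z hz).2, ?_⟩
  intro m t w w' hm ht hw hw'
  have hmem : ∀ v ∈ closedBall (0 : ℂ × ℂ) m, (t, v) ∈ ball (0 : ℂ × ℂ × ℂ) δ ∧
      ‖(t, v)‖ ≤ m := by
    intro v hv
    have hv' : ‖v‖ ≤ m := by simpa using hv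
    have : ‖(t, v)‖ ≤ m := by rw [Prod.norm_def]; exact max_le ht hv'
    exact ⟨by simpa using this.trans_lt hm, this⟩
  have := Convex.norm_image_sub_le_of_norm_hasFDerivWithin_le (𝕜 := ℂ)
    (f := fun v => s (t, v)) (s := closedBall (0 : ℂ × ℂ) m) (x := w') (y := w) (C := C * m)
    (f' := fun v => (fderiv ℂ s (t, v)).comp (ContinuousLinearMap.inr ℂ ℂ (ℂ × ℂ)))
    (fun v hv => by
      have h1 := (hball _ (hmem v hv).1).2.differentiableAt.hasFDerivAt
      exact (h1.comp v (hasFDerivAt_prodMk_right t v)).hasFDerivWithinAt)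
    (fun v hv => by
      refine ContinuousLinearMap.opNorm_le_bound _ ?_ fun u => ?_
      · have : 0 ≤ m := (norm_nonneg _).trans hw
        positivity
      · have h2 := (hball _ (hmem v hv).1).1
        have h3 : (fderiv ℂ s (t, v)).comp (ContinuousLinearMap.inr ℂ ℂ (ℂ × ℂ)) u
          = (fderiv ℂ s (t, v) - fderiv ℂ s 0) (0, u) := by
          simp [h0]
        rw [h3]
        refine (ContinuousLinearMap.le_opNorm _ _).trans ?_
        have h4 : ‖((0 : ℂ), u)‖ = ‖u‖ := by simp [Prod.norm_def]
        rw [h4]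
        rw [sub_zero] at h2
        gcongr
        exact h2.trans (by gcongr; exact (hmem v hv).2))
    (convex_closedBall _ _) (by simpa using hw') (by simpa using hw)
  exact this

/-! ### The backward graph transform -/

/-- The linear map `(t, ζ) ↦ (q t, μ ζ)`. -/
def lsig (q μ : ℂ) (p : ℂ × ℂ) : ℂ × ℂ := (q * p.1, μ * p.2)

/-- One step of the backward graph transform for the map with linear part
`(x, y) ↦ (μ x, κ⁻¹ y + ν x)` and nonlinear remainder `(s1, s2)`: the functional equation
`w (q t, μ ζ) = (μ x + s1, κ⁻¹ y + ν x + s2)` solved for the occurrence of `w (t, ζ)`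
in the linear part. -/
noncomputable def gstep (q μ κ ν : ℂ) (s1 s2 : ℂ × (ℂ × ℂ) → ℂ) (w : ℂ × ℂ → ℂ × ℂ) (p : ℂ × ℂ) :
    ℂ × ℂ :=
  (μ⁻¹ * ((w (lsig q μ p)).1 - s1 (p.1, w p)),
    κ * ((w (lsig q μ p)).2 - ν * (w p).1 - s2 (p.1, w p)))

/-- The iterates of the graph transform, starting from `(t, ζ) ↦ (ξ ζ, 0)`. -/
noncomputable def giter (q μ κ ν ξ : ℂ) (s1 s2 : ℂ × (ℂ × ℂ) → ℂ) : ℕ → ℂ × ℂ → ℂ × ℂ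
  | 0 => fun p => (ξ * p.2, 0)
  | k + 1 => gstep q μ κ ν s1 s2 (giter q μ κ ν ξ s1 s2 k)

lemma norm_lsig_le {q μ : ℂ} {ρ : ℝ} (hq : ‖q‖ ≤ ρ) (hμ : ‖μ‖ ≤ ρ) (p : ℂ × ℂ) :
    ‖lsig q μ p‖ ≤ ρ * ‖p‖ := by
  have hρ : 0 ≤ ρ := (norm_nonneg _).trans hq
  rw [lsig, Prod.norm_def]
  refine max_le ?_ ?_
  · rw [norm_mul]; exact mul_le_mul hq (norm_fst_le p) (norm_nonneg _) hρ
  · rw [norm_mul]; exact mul_le_mul hμ (norm_snd_le p) (norm_nonneg _) hρ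

section
variable {q μ κ ν ξ : ℂ} {s1 s2 : ℂ × (ℂ × ℂ) → ℂ} {C δ ρ α θ r E E0 M : ℝ}

/-- A priori bounds for the graph transform. The first component has deviation `O(|ζ| |p|)` from
`ξ ζ`; one step multiplies it by `μ⁻¹`, but the substitution `lsig` gains `|μ|` from `|ζ|` and a
further `ρ < 1` from `|p|`. The second component is `O(|ζ|)`, and one step contracts it by
`|κ μ|`. Successive differences therefore decay like `θ ^ k`. -/
lemma giter_bounds
    (hq : ‖q‖ ≤ ρ) (hμ : ‖μ‖ ≤ ρ) (hρ : ρ ≤ 1) (hμ0 : μ ≠ 0) (hκμ : ‖κ‖ * ‖μ‖ ≤ α)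
    (hθ0 : 0 ≤ θ) (hθ1 : θ < 1) (hC : 0 ≤ C)
    (lip1 : ∀ (m : ℝ) (t : ℂ) (w w' : ℂ × ℂ), m < δ → ‖t‖ ≤ m → ‖w‖ ≤ m → ‖w'‖ ≤ m →
        ‖s1 (t, w) - s1 (t, w')‖ ≤ C * m * ‖w - w'‖)
    (lip2 : ∀ (m : ℝ) (t : ℂ) (w w' : ℂ × ℂ), m < δ → ‖t‖ ≤ m → ‖w‖ ≤ m → ‖w'‖ ≤ m →
        ‖s2 (t, w) - s2 (t, w')‖ ≤ C * m * ‖w - w'‖)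
    (z1 : ∀ t : ℂ, ‖t‖ < δ → s1 (t, 0) = 0) (z2 : ∀ t : ℂ, ‖t‖ < δ → s2 (t, 0) = 0)
    (hE : 0 ≤ E) (hE0 : 0 ≤ E0) (hEr : E * r ≤ 1) (hEr0 : E * r ≤ E0)
    (hM : M = 1 + ‖ξ‖ + (1 - θ)⁻¹ + E0 * (1 - θ)⁻¹) (hMr : M * r < δ)
    (hCM : C * M * r ≤ 1) (hE0' : ‖κ‖ * (‖ν‖ * ‖ξ‖ + ‖ξ‖) ≤ E0)
    (hE' : ‖μ‖⁻¹ * (C * M * ‖ξ‖) ≤ E)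
    (hE2 : ρ * E + ‖μ‖⁻¹ * (C * M * E0) ≤ θ * E)
    (hr2 : α * E0 + ‖κ‖ * ((‖ν‖ * E + C * M * E0) * r) ≤ θ * E0) (k : ℕ) :
    ∀ p ∈ ball (0 : ℂ × ℂ) r,
      (‖(giter q μ κ ν ξ s1 s2 k p).1 - ξ * p.2‖ ≤
          E * (∑ j ∈ Finset.range k, θ ^ j) * (‖p.2‖ * ‖p‖) ∧
        ‖(giter q μ κ ν ξ s1 s2 k p).2‖ ≤ E0 * (∑ j ∈ Finset.range k, θ ^ j) * ‖p.2‖) ∧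
      ‖giter q μ κ ν ξ s1 s2 k p‖ ≤ M * ‖p.2‖ ∧
      ‖(giter q μ κ ν ξ s1 s2 (k + 1) p).1 - (giter q μ κ ν ξ s1 s2 k p).1‖ ≤
          E * θ ^ k * (‖p.2‖ * ‖p‖) ∧
      ‖(giter q μ κ ν ξ s1 s2 (k + 1) p).2 - (giter q μ κ ν ξ s1 s2 k p).2‖ ≤
          E0 * θ ^ k * ‖p.2‖ := by
  have hS : ∀ k, ∑ j ∈ Finset.range k, θ ^ j ≤ (1 - θ)⁻¹ := fun k => by
    rw [← tsum_geometric_of_lt_one hθ0 hθ1]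
    exact (summable_geometric_of_lt_one hθ0 hθ1).sum_le_tsum _ (fun i _ => pow_nonneg hθ0 i)
  have hinv : 0 ≤ (1 - θ)⁻¹ := inv_nonneg.2 (by linarith)
  have hM0 : 0 ≤ M := by rw [hM]; positivity
  have hM1 : 1 ≤ M := by
    rw [hM]; have := norm_nonneg ξ; have := mul_nonneg hE0 hinv; linarith
  -- the size bound follows from the two component bounds
  have hsize : ∀ k, ∀ p ∈ ball (0 : ℂ × ℂ) r,
      (‖(giter q μ κ ν ξ s1 s2 k p).1 - ξ * p.2‖ ≤
          E * (∑ j ∈ Finset.range k, θ ^ j) * (‖p.2‖ * ‖p‖) ∧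
        ‖(giter q μ κ ν ξ s1 s2 k p).2‖ ≤ E0 * (∑ j ∈ Finset.range k, θ ^ j) * ‖p.2‖) →
      ‖giter q μ κ ν ξ s1 s2 k p‖ ≤ M * ‖p.2‖ := by
    intro k p hp ⟨h1, h2⟩
    have hp' : ‖p‖ ≤ r := by simpa using (mem_ball_zero_iff.1 hp).le
    have hp2 := norm_nonneg p.2
    rw [Prod.norm_def]
    refine max_le ?_ ?_
    · have e : ‖(giter q μ κ ν ξ s1 s2 k p).1‖ ≤
          ‖(giter q μ κ ν ξ s1 s2 k p).1 - ξ * p.2‖ + ‖ξ * p.2‖ := by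
        simpa using norm_add_le ((giter q μ κ ν ξ s1 s2 k p).1 - ξ * p.2) (ξ * p.2)
      have e2 : E * (∑ j ∈ Finset.range k, θ ^ j) * (‖p.2‖ * ‖p‖) ≤ (1 - θ)⁻¹ * ‖p.2‖ := by
        calc E * (∑ j ∈ Finset.range k, θ ^ j) * (‖p.2‖ * ‖p‖)
            ≤ E * (1 - θ)⁻¹ * (‖p.2‖ * r) := by
              gcongr
              exact hS k
          _ = (E * r) * ((1 - θ)⁻¹ * ‖p.2‖) := by ring
          _ ≤ 1 * ((1 - θ)⁻¹ * ‖p.2‖) := by gcongr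
          _ = _ := one_mul _
      rw [norm_mul] at e
      rw [hM]
      have := mul_nonneg (mul_nonneg hE0 hinv) hp2
      nlinarith
    · refine h2.trans ?_
      have : E0 * (∑ j ∈ Finset.range k, θ ^ j) ≤ M := by
        have h := mul_le_mul_of_nonneg_left (hS k) hE0
        rw [hM]
        have := norm_nonneg ξ
        linarith
      gcongr
  have hmδ : ∀ p ∈ ball (0 : ℂ × ℂ) r, M * ‖p‖ < δ ∧ ‖p.1‖ ≤ M * ‖p‖ ∧ M * ‖p.2‖ ≤ M * ‖p‖ := by
    intro p hp
    have hp' : ‖p‖ ≤ r := by simpa using (mem_ball_zero_iff.1 hp).le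
    refine ⟨lt_of_le_of_lt (by gcongr) hMr, ?_, by gcongr; exact norm_snd_le p⟩
    exact (norm_fst_le p).trans (le_mul_of_one_le_left (norm_nonneg _) hM1)
  have hμn : 0 < ‖μ‖ := norm_pos_iff.2 hμ0
  induction k with
  | zero =>
    intro p hp
    have hp' : ‖p‖ ≤ r := by simpa using (mem_ball_zero_iff.1 hp).le
    obtain ⟨hm1, hm2, hm3⟩ := hmδ p hp
    have hb : (‖(giter q μ κ ν ξ s1 s2 0 p).1 - ξ * p.2‖ ≤
          E * (∑ j ∈ Finset.range 0, θ ^ j) * (‖p.2‖ * ‖p‖) ∧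
        ‖(giter q μ κ ν ξ s1 s2 0 p).2‖ ≤ E0 * (∑ j ∈ Finset.range 0, θ ^ j) * ‖p.2‖) := by
      simp [giter]
    have hsz := hsize 0 p hp hb
    have hn : ‖((ξ * p.2, 0) : ℂ × ℂ)‖ = ‖ξ‖ * ‖p.2‖ := by
      rw [Prod.norm_def, norm_zero, norm_mul]
      exact max_eq_left (by positivity)
    have hδp : ‖p.1‖ < δ := hm2.trans_lt hm1
    have h0m : ‖(0 : ℂ × ℂ)‖ ≤ M * ‖p‖ := by simp; positivity
    have hs1 : ‖s1 (p.1, (ξ * p.2, 0))‖ ≤ C * (M * ‖p‖) * (‖ξ‖ * ‖p.2‖) := by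
      have := lip1 (M * ‖p‖) p.1 (ξ * p.2, 0) 0 hm1 hm2 (hsz.trans hm3) h0m
      rwa [z1 _ hδp, sub_zero, sub_zero, hn] at this
    have hs2 : ‖s2 (p.1, (ξ * p.2, 0))‖ ≤ C * (M * ‖p‖) * (‖ξ‖ * ‖p.2‖) := by
      have := lip2 (M * ‖p‖) p.1 (ξ * p.2, 0) 0 hm1 hm2 (hsz.trans hm3) h0m
      rwa [z2 _ hδp, sub_zero, sub_zero, hn] at this
    refine ⟨hb, hsz, ?_, ?_⟩
    · have e : (giter q μ κ ν ξ s1 s2 (0 + 1) p).1 - (giter q μ κ ν ξ s1 s2 0 p).1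
          = -(μ⁻¹ * s1 (p.1, (ξ * p.2, 0))) := by
        simp only [giter, gstep, lsig]
        field_simp
        ring
      rw [e, norm_neg, norm_mul, norm_inv]
      calc ‖μ‖⁻¹ * ‖s1 (p.1, (ξ * p.2, 0))‖ ≤ ‖μ‖⁻¹ * (C * (M * ‖p‖) * (‖ξ‖ * ‖p.2‖)) := by gcongr
        _ = (‖μ‖⁻¹ * (C * M * ‖ξ‖)) * (‖p.2‖ * ‖p‖) := by ring
        _ ≤ E * (‖p.2‖ * ‖p‖) := by gcongr
        _ = _ := by simp
    · have e : (giter q μ κ ν ξ s1 s2 (0 + 1) p).2 - (giter q μ κ ν ξ s1 s2 0 p).2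
          = -(κ * (ν * (ξ * p.2) + s2 (p.1, (ξ * p.2, 0)))) := by
        simp only [giter, gstep, lsig]
        ring
      rw [e, norm_neg, norm_mul]
      calc ‖κ‖ * ‖ν * (ξ * p.2) + s2 (p.1, (ξ * p.2, 0))‖
          ≤ ‖κ‖ * (‖ν‖ * (‖ξ‖ * ‖p.2‖) + (C * M * r) * (‖ξ‖ * ‖p.2‖)) := by
            gcongr
            refine (norm_add_le _ _).trans ?_
            rw [norm_mul, norm_mul]
            gcongr
            refine hs2.trans ?_
            rw [mul_assoc C M r]
            gcongr
        _ ≤ ‖κ‖ * (‖ν‖ * (‖ξ‖ * ‖p.2‖) + 1 * (‖ξ‖ * ‖p.2‖)) := by gcongr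
        _ = (‖κ‖ * (‖ν‖ * ‖ξ‖ + ‖ξ‖)) * ‖p.2‖ := by ring
        _ ≤ E0 * ‖p.2‖ := by gcongr
        _ = _ := by simp
  | succ k ih =>
    intro p hp
    have hp' : ‖p‖ ≤ r := by simpa using (mem_ball_zero_iff.1 hp).le
    have hr0 : 0 ≤ r := (norm_nonneg _).trans hp'
    obtain ⟨hm1, hm2, hm3⟩ := hmδ p hp
    obtain ⟨⟨b1, b2⟩, hsz, d1, d2⟩ := ih p hp
    have hσ := norm_lsig_le hq hμ p
    have hσb : lsig q μ p ∈ ball (0 : ℂ × ℂ) r := by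
      rw [mem_ball_zero_iff] at hp ⊢
      refine hσ.trans_lt (lt_of_le_of_lt ?_ hp)
      exact mul_le_of_le_one_left (norm_nonneg _) hρ
    obtain ⟨-, -, dσ1, dσ2⟩ := ih _ hσb
    have hσ2 : ‖(lsig q μ p).2‖ = ‖μ‖ * ‖p.2‖ := by simp [lsig]
    rw [hσ2] at dσ1 dσ2
    set w := giter q μ κ ν ξ s1 s2 k with hw
    set w' := giter q μ κ ν ξ s1 s2 (k + 1) with hw'
    have hb : (‖(w' p).1 - ξ * p.2‖ ≤
          E * (∑ j ∈ Finset.range (k + 1), θ ^ j) * (‖p.2‖ * ‖p‖) ∧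
        ‖(w' p).2‖ ≤ E0 * (∑ j ∈ Finset.range (k + 1), θ ^ j) * ‖p.2‖) := by
      rw [Finset.sum_range_succ]
      constructor
      · have := norm_add_le ((w' p).1 - (w p).1) ((w p).1 - ξ * p.2)
        rw [sub_add_sub_cancel] at this
        calc _ ≤ _ := this
          _ ≤ E * θ ^ k * (‖p.2‖ * ‖p‖) +
              E * (∑ j ∈ Finset.range k, θ ^ j) * (‖p.2‖ * ‖p‖) := add_le_add d1 b1
          _ = _ := by ring
      · have := norm_add_le ((w' p).2 - (w p).2) ((w p).2)
        rw [sub_add_cancel] at this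
        calc _ ≤ _ := this
          _ ≤ E0 * θ ^ k * ‖p.2‖ + E0 * (∑ j ∈ Finset.range k, θ ^ j) * ‖p.2‖ := add_le_add d2 b2
          _ = _ := by ring
    have hsz' := hsize (k + 1) p hp hb
    have hθk : 0 ≤ θ ^ k := pow_nonneg hθ0 k
    have hdiff : ‖w' p - w p‖ ≤ E0 * θ ^ k * ‖p.2‖ := by
      rw [Prod.norm_def]
      refine max_le (d1.trans ?_) d2
      calc E * θ ^ k * (‖p.2‖ * ‖p‖) ≤ E * θ ^ k * (‖p.2‖ * r) := by gcongr
        _ = (E * r) * (θ ^ k * ‖p.2‖) := by ring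
        _ ≤ E0 * (θ ^ k * ‖p.2‖) := by gcongr
        _ = _ := by ring
    have l1 := lip1 (M * ‖p‖) p.1 (w' p) (w p) hm1 hm2 (hsz'.trans hm3) (hsz.trans hm3)
    have l2 := lip2 (M * ‖p‖) p.1 (w' p) (w p) hm1 hm2 (hsz'.trans hm3) (hsz.trans hm3)
    have l1' : ‖s1 (p.1, w' p) - s1 (p.1, w p)‖ ≤ C * (M * ‖p‖) * (E0 * θ ^ k * ‖p.2‖) :=
      l1.trans (by gcongr)
    have l2' : ‖s2 (p.1, w' p) - s2 (p.1, w p)‖ ≤ C * (M * ‖p‖) * (E0 * θ ^ k * ‖p.2‖) :=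
      l2.trans (by gcongr)
    refine ⟨hb, hsz', ?_, ?_⟩
    · have e : (giter q μ κ ν ξ s1 s2 (k + 1 + 1) p).1 - (w' p).1
          = μ⁻¹ * (((w' (lsig q μ p)).1 - (w (lsig q μ p)).1)
              - (s1 (p.1, w' p) - s1 (p.1, w p))) := by
        have e1 : (giter q μ κ ν ξ s1 s2 (k + 1 + 1) p).1
            = μ⁻¹ * ((w' (lsig q μ p)).1 - s1 (p.1, w' p)) := rfl
        have e2 : (w' p).1 = μ⁻¹ * ((w (lsig q μ p)).1 - s1 (p.1, w p)) := rfl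
        rw [e1, e2]
        ring
      rw [e, norm_mul, norm_inv]
      calc _ ≤ ‖μ‖⁻¹ * (E * θ ^ k * (‖μ‖ * ‖p.2‖ * (ρ * ‖p‖)) +
              C * (M * ‖p‖) * (E0 * θ ^ k * ‖p.2‖)) := by
            gcongr
            refine (norm_sub_le _ _).trans (add_le_add (dσ1.trans ?_) l1')
            gcongr
        _ = (ρ * E + ‖μ‖⁻¹ * (C * M * E0)) * (θ ^ k * (‖p.2‖ * ‖p‖)) := by
            field_simp
        _ ≤ θ * E * (θ ^ k * (‖p.2‖ * ‖p‖)) := by gcongr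
        _ = _ := by ring
    · have e : (giter q μ κ ν ξ s1 s2 (k + 1 + 1) p).2 - (w' p).2
          = κ * (((w' (lsig q μ p)).2 - (w (lsig q μ p)).2) - (ν * ((w' p).1 - (w p).1)
              + (s2 (p.1, w' p) - s2 (p.1, w p)))) := by
        have e1 : (giter q μ κ ν ξ s1 s2 (k + 1 + 1) p).2
            = κ * ((w' (lsig q μ p)).2 - ν * (w' p).1 - s2 (p.1, w' p)) := rfl
        have e2 : (w' p).2 = κ * ((w (lsig q μ p)).2 - ν * (w p).1 - s2 (p.1, w p)) := rfl
        rw [e1, e2]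
        ring
      rw [e, norm_mul]
      calc _ ≤ ‖κ‖ * (E0 * θ ^ k * (‖μ‖ * ‖p.2‖) + (‖ν‖ * (E * θ ^ k * (‖p.2‖ * r)) +
              C * (M * r) * (E0 * θ ^ k * ‖p.2‖))) := by
            gcongr
            refine (norm_sub_le _ _).trans (add_le_add dσ2 ?_)
            refine (norm_add_le _ _).trans (add_le_add ?_ ?_)
            · rw [norm_mul]
              gcongr
              refine d1.trans ?_
              gcongr
            · refine l2'.trans ?_
              gcongr
        _ = ((‖κ‖ * ‖μ‖) * E0 + ‖κ‖ * ((‖ν‖ * E + C * M * E0) * r)) * (θ ^ k * ‖p.2‖) := by ring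
        _ ≤ (α * E0 + ‖κ‖ * ((‖ν‖ * E + C * M * E0) * r)) * (θ ^ k * ‖p.2‖) := by gcongr
        _ ≤ θ * E0 * (θ ^ k * ‖p.2‖) := by gcongr
        _ = _ := by ring
end

/-! ### An invariant manifold theorem with linearised dynamics -/

lemma lsig_mem {q μ : ℂ} {r : ℝ} (hq : ‖q‖ < 1) (hμ : ‖μ‖ < 1) {p : ℂ × ℂ}
    (hp : p ∈ ball (0 : ℂ × ℂ) r) : lsig q μ p ∈ ball (0 : ℂ × ℂ) r := by
  rw [mem_ball_zero_iff] at hp ⊢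
  refine lt_of_le_of_lt ?_ hp
  simpa using norm_lsig_le hq.le hμ.le p

lemma lsig_analyticAt (q μ : ℂ) (p : ℂ × ℂ) : AnalyticAt ℂ (lsig q μ) p :=
  (analyticAt_const.mul analyticAt_fst).prod (analyticAt_const.mul analyticAt_snd)

/-- A stable manifold with linearised dynamics. The map `(t, x, y) ↦ (q t, N1, N2)` fixes the curve
`x = y = 0`, and its linear part in `(x, y)` at the origin is lower triangular with diagonal
`(μ, κ⁻¹)`, where `|κ μ| < 1`. There is an invariant surface
`(x, y) = (ζ (ξ + u), ζ η)`, tangent to a prescribed multiple `ξ` in the `x`-direction, on which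
the map acts by `(t, ζ) ↦ (q t, μ ζ)`. -/
lemma stable_lin {q μ κ : ℂ} (ξ : ℂ) (hq : ‖q‖ < 1) (hμ0 : μ ≠ 0) (hμ : ‖μ‖ < 1) (hκ0 : κ ≠ 0)
    (hκμ : ‖κ * μ‖ < 1) {N1 N2 : ℂ × (ℂ × ℂ) → ℂ} (a1 : AnalyticAt ℂ N1 0)
    (a2 : AnalyticAt ℂ N2 0) (z1 : ∀ᶠ t : ℂ in 𝓝 0, N1 (t, 0) = 0)
    (z2 : ∀ᶠ t : ℂ in 𝓝 0, N2 (t, 0) = 0)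
    (d11 : fderiv ℂ N1 0 (0, (1, 0)) = μ) (d12 : fderiv ℂ N1 0 (0, (0, 1)) = 0)
    (d22 : fderiv ℂ N2 0 (0, (0, 1)) = κ⁻¹) :
    ∃ r > (0 : ℝ), ∃ u η : ℂ × ℂ → ℂ, AnalyticOnNhd ℂ u (ball 0 r) ∧
      AnalyticOnNhd ℂ η (ball 0 r) ∧ u 0 = 0 ∧ ∀ p ∈ ball (0 : ℂ × ℂ) r,
        (lsig q μ p).2 * (ξ + u (lsig q μ p)) = N1 (p.1, (p.2 * (ξ + u p), p.2 * η p)) ∧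
        (lsig q μ p).2 * η (lsig q μ p) = N2 (p.1, (p.2 * (ξ + u p), p.2 * η p)) := by
  set ν : ℂ := fderiv ℂ N2 0 (0, (1, 0)) with hν
  let P1 : ℂ × (ℂ × ℂ) →L[ℂ] ℂ :=
    (ContinuousLinearMap.fst ℂ ℂ ℂ).comp (ContinuousLinearMap.snd ℂ ℂ (ℂ × ℂ))
  let P2 : ℂ × (ℂ × ℂ) →L[ℂ] ℂ :=
    (ContinuousLinearMap.snd ℂ ℂ ℂ).comp (ContinuousLinearMap.snd ℂ ℂ (ℂ × ℂ))
  let L1 : ℂ × (ℂ × ℂ) →L[ℂ] ℂ := μ • P1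
  let L2 : ℂ × (ℂ × ℂ) →L[ℂ] ℂ := κ⁻¹ • P2 + ν • P1
  let s1 : ℂ × (ℂ × ℂ) → ℂ := fun z => N1 z - L1 z
  let s2 : ℂ × (ℂ × ℂ) → ℂ := fun z => N2 z - L2 z
  have as1 : AnalyticAt ℂ s1 0 := a1.sub (L1.analyticAt 0)
  have as2 : AnalyticAt ℂ s2 0 := a2.sub (L2.analyticAt 0)
  have hsplit : ∀ v : ℂ × ℂ, ((0, v) : ℂ × (ℂ × ℂ)) = v.1 • (0, (1, 0)) + v.2 • (0, (0, 1)) := by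
    intro v; simp
  have f1 : ∀ v, fderiv ℂ s1 0 (0, v) = 0 := by
    intro v
    have : fderiv ℂ s1 0 = fderiv ℂ N1 0 - L1 := by
      rw [fderiv_fun_sub a1.differentiableAt L1.differentiableAt, L1.fderiv]
    rw [this, hsplit, map_add, map_smul, map_smul, _root_.sub_apply,
      _root_.sub_apply, d11, d12]
    simp [L1, P1]
  have f2 : ∀ v, fderiv ℂ s2 0 (0, v) = 0 := by
    intro v
    have : fderiv ℂ s2 0 = fderiv ℂ N2 0 - L2 := by
      rw [fderiv_fun_sub a2.differentiableAt L2.differentiableAt, L2.fderiv]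
    rw [this, hsplit, map_add, map_smul, map_smul, _root_.sub_apply,
      _root_.sub_apply, d22, ← hν]
    simp [L2, P1, P2]
  obtain ⟨C1, hC1, δ1, hδ1, an1, lip1⟩ := quad_lip as1 f1
  obtain ⟨C2, hC2, δ2, hδ2, an2, lip2⟩ := quad_lip as2 f2
  obtain ⟨δ3, hδ3, hz⟩ := Metric.eventually_nhds_iff_ball.1 (z1.and z2)
  set C := max C1 C2 with hC
  set δ := min δ3 (min δ1 δ2) with hδ
  have hδ0 : 0 < δ := by positivity
  have hC0 : 0 < C := by positivity
  have lip1' : ∀ (m : ℝ) (t : ℂ) (w w' : ℂ × ℂ), m < δ → ‖t‖ ≤ m → ‖w‖ ≤ m → ‖w'‖ ≤ m →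
      ‖s1 (t, w) - s1 (t, w')‖ ≤ C * m * ‖w - w'‖ := by
    intro m t w w' hm h1 h2 h3
    have hm0 : 0 ≤ m := (norm_nonneg _).trans h1
    refine (lip1 m t w w' (hm.trans_le (by simp [hδ])) h1 h2 h3).trans ?_
    gcongr
    exact le_max_left _ _
  have lip2' : ∀ (m : ℝ) (t : ℂ) (w w' : ℂ × ℂ), m < δ → ‖t‖ ≤ m → ‖w‖ ≤ m → ‖w'‖ ≤ m →
      ‖s2 (t, w) - s2 (t, w')‖ ≤ C * m * ‖w - w'‖ := by
    intro m t w w' hm h1 h2 h3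
    have hm0 : 0 ≤ m := (norm_nonneg _).trans h1
    refine (lip2 m t w w' (hm.trans_le (by simp [hδ])) h1 h2 h3).trans ?_
    gcongr
    exact le_max_right _ _
  have z1' : ∀ t : ℂ, ‖t‖ < δ → s1 (t, 0) = 0 := by
    intro t ht
    have := (hz t (by simpa using ht.trans_le (by simp [hδ]))).1
    simp [s1, L1, P1, this]
  have z2' : ∀ t : ℂ, ‖t‖ < δ → s2 (t, 0) = 0 := by
    intro t ht
    have := (hz t (by simpa using ht.trans_le (by simp [hδ]))).2
    simp [s2, L2, P1, P2, this]
  have hball1 : ball (0 : ℂ × (ℂ × ℂ)) δ ⊆ ball 0 δ1 := ball_subset_ball (by simp [hδ])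
  have hball2 : ball (0 : ℂ × (ℂ × ℂ)) δ ⊆ ball 0 δ2 := ball_subset_ball (by simp [hδ])
  -- `E0` and `E` control the two components; they are fixed before the radius `r`, which is then
  -- taken small enough to absorb all nonlinear terms
  set ρ := max ‖q‖ ‖μ‖ with hρ
  set α := ‖κ‖ * ‖μ‖ with hα
  have hρ1 : ρ < 1 := max_lt hq hμ
  have hα1 : α < 1 := by rwa [hα, ← norm_mul]
  obtain ⟨θ, hθ, hθ1⟩ := exists_between (max_lt hρ1 hα1)
  have hρθ : ρ < θ := (le_max_left _ _).trans_lt hθ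
  have hαθ : α < θ := (le_max_right _ _).trans_lt hθ
  have hρ0 : 0 ≤ ρ := (norm_nonneg _).trans (le_max_left _ _)
  have hθ0 : 0 ≤ θ := hρ0.trans hρθ.le
  have hinv : 0 ≤ (1 - θ)⁻¹ := inv_nonneg.2 (by linarith)
  obtain ⟨E0, hE0⟩ : ∃ E0, E0 = ‖κ‖ * (‖ν‖ * ‖ξ‖ + ‖ξ‖) + 1 := ⟨_, rfl⟩
  have hE0p : 1 ≤ E0 := by
    rw [hE0]; have : 0 ≤ ‖κ‖ * (‖ν‖ * ‖ξ‖ + ‖ξ‖) := by positivity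
    linarith
  have hE0n : 0 ≤ E0 := by linarith
  obtain ⟨M, hM⟩ : ∃ M, M = 1 + ‖ξ‖ + (1 - θ)⁻¹ + E0 * (1 - θ)⁻¹ := ⟨_, rfl⟩
  have hM0 : 0 ≤ M := by rw [hM]; positivity
  have hθρ : 0 < θ - ρ := by linarith
  obtain ⟨E, hE⟩ : ∃ E, E = ‖μ‖⁻¹ * (C * M * ‖ξ‖) + ‖μ‖⁻¹ * (C * M * E0) / (θ - ρ) := ⟨_, rfl⟩
  have hEn : 0 ≤ E := by rw [hE]; positivity
  have hE' : ‖μ‖⁻¹ * (C * M * ‖ξ‖) ≤ E := by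
    rw [hE]
    have : 0 ≤ ‖μ‖⁻¹ * (C * M * E0) / (θ - ρ) := by positivity
    linarith
  have hE2 : ρ * E + ‖μ‖⁻¹ * (C * M * E0) ≤ θ * E := by
    have h1 : ‖μ‖⁻¹ * (C * M * E0) / (θ - ρ) ≤ E := by
      rw [hE]
      have : 0 ≤ ‖μ‖⁻¹ * (C * M * ‖ξ‖) := by positivity
      linarith
    rw [div_le_iff₀ hθρ] at h1
    linarith
  have small : ∀ (A B : ℝ), 0 < B → ∀ᶠ r in 𝓝[>] (0 : ℝ), A * r < B := by
    intro A B hB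
    have : Tendsto (fun r : ℝ => A * r) (𝓝 0) (𝓝 0) :=
      Continuous.tendsto' (by fun_prop) 0 0 (by simp)
    exact (this.eventually_lt_const hB).filter_mono nhdsWithin_le_nhds
  obtain ⟨r, ⟨hEr, hMr, hCMr, hr2⟩, hr0⟩ := ((((small E 1 one_pos).and ((small M δ hδ0).and
    ((small (C * M) 1 one_pos).and (small (‖κ‖ * (‖ν‖ * E + C * M * E0)) ((θ - α) * E0)
      (mul_pos (by linarith) (by linarith)))))).and self_mem_nhdsWithin).exists)
  have hr0 : 0 < r := hr0
  have bounds := giter_bounds (q := q) (μ := μ) (κ := κ) (ν := ν) (ξ := ξ) (s1 := s1) (s2 := s2)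
    (C := C) (δ := δ) (ρ := ρ) (α := α) (θ := θ) (r := r) (E := E) (E0 := E0) (M := M)
    (le_max_left _ _) (le_max_right _ _) hρ1.le hμ0 le_rfl hθ0 hθ1 hC0.le lip1' lip2' z1' z2'
    hEn hE0n hEr.le (hEr.le.trans hE0p) hM hMr hCMr.le (by rw [hE0]; linarith) hE' hE2
    (by linarith)
  set w := giter q μ κ ν ξ s1 s2 with hw
  have hS : ∀ k, ∑ j ∈ Finset.range k, θ ^ j ≤ (1 - θ)⁻¹ := fun k => by
    rw [← tsum_geometric_of_lt_one hθ0 hθ1]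
    exact (summable_geometric_of_lt_one hθ0 hθ1).sum_le_tsum _ (fun i _ => pow_nonneg hθ0 i)
  have hM1 : 1 ≤ M := by
    rw [hM]; have := norm_nonneg ξ; have := mul_nonneg hE0n hinv; linarith
  have hdom : ∀ p ∈ ball (0 : ℂ × ℂ) r, ∀ v : ℂ × ℂ, ‖v‖ ≤ M * ‖p.2‖ →
      (p.1, v) ∈ ball (0 : ℂ × (ℂ × ℂ)) δ := by
    intro p hp v hv
    rw [mem_ball_zero_iff] at hp ⊢
    refine lt_of_le_of_lt ?_ hMr
    rw [Prod.norm_def]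
    refine max_le ((norm_fst_le p).trans (hp.le.trans (le_mul_of_one_le_left hr0.le hM1)))
      (hv.trans ?_)
    have := (norm_snd_le p).trans hp.le
    gcongr
  -- analyticity of the iterates
  have anw : ∀ k, AnalyticOnNhd ℂ (w k) (ball 0 r) := by
    intro k
    induction k with
    | zero => exact fun p _ => (analyticAt_const.mul analyticAt_snd).prod analyticAt_const
    | succ k ih =>
      intro p hp
      have hσ := (ih _ (lsig_mem hq hμ hp)).comp (lsig_analyticAt q μ p)
      have hpair : AnalyticAt ℂ (fun p : ℂ × ℂ => (p.1, w k p)) p := analyticAt_fst.prod (ih p hp)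
      have hm := hdom p hp _ (bounds k p hp).2.1
      have e1 : AnalyticAt ℂ (fun p : ℂ × ℂ => s1 (p.1, w k p)) p :=
        AnalyticAt.comp (g := s1) (f := fun p : ℂ × ℂ => (p.1, w k p)) (an1 _ (hball1 hm)) hpair
      have e2 : AnalyticAt ℂ (fun p : ℂ × ℂ => s2 (p.1, w k p)) p :=
        AnalyticAt.comp (g := s2) (f := fun p : ℂ × ℂ => (p.1, w k p)) (an2 _ (hball2 hm)) hpair
      have c1 : AnalyticAt ℂ (fun p => (w k (lsig q μ p)).1) p := analyticAt_fst.comp hσ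
      have c2 : AnalyticAt ℂ (fun p => (w k (lsig q μ p)).2) p := analyticAt_snd.comp hσ
      have c3 : AnalyticAt ℂ (fun p => (w k p).1) p := analyticAt_fst.comp (ih p hp)
      exact (analyticAt_const.mul (c1.sub e1)).prod
        (analyticAt_const.mul ((c2.sub (analyticAt_const.mul c3)).sub e2))
  -- convergence
  have hdist : ∀ p ∈ ball (0 : ℂ × ℂ) r, ∀ k, dist (w k p) (w (k + 1) p) ≤ (E0 * r) * θ ^ k := by
    intro p hp k
    obtain ⟨-, -, h1, h2⟩ := bounds k p hp
    have hp' : ‖p‖ ≤ r := (mem_ball_zero_iff.1 hp).le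
    have hp2 : ‖p.2‖ ≤ r := (norm_snd_le p).trans hp'
    have hθk : 0 ≤ θ ^ k := pow_nonneg hθ0 k
    rw [dist_comm, dist_eq_norm, Prod.norm_def]
    refine max_le (h1.trans ?_) (h2.trans ?_)
    · calc E * θ ^ k * (‖p.2‖ * ‖p‖) ≤ E * θ ^ k * (r * r) := by gcongr
        _ = (E * r) * (r * θ ^ k) := by ring
        _ ≤ E0 * (r * θ ^ k) := by gcongr; exact hEr.le.trans hE0p
        _ = _ := by ring
    · calc E0 * θ ^ k * ‖p.2‖ ≤ E0 * θ ^ k * r := by gcongr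
        _ = _ := by ring
  have hex : ∀ p, ∃ a, p ∈ ball (0 : ℂ × ℂ) r → Tendsto (fun k => w k p) atTop (𝓝 a) := by
    intro p
    by_cases hp : p ∈ ball (0 : ℂ × ℂ) r
    · obtain ⟨a, ha⟩ := cauchySeq_tendsto_of_complete
        (cauchySeq_of_le_geometric θ (E0 * r) hθ1 (hdist p hp))
      exact ⟨a, fun _ => ha⟩
    · exact ⟨0, fun h => absurd h hp⟩
  choose W hW using hex
  have hunif : TendstoUniformlyOn w W atTop (ball 0 r) := by
    rw [Metric.tendstoUniformlyOn_iff]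
    intro ε hε
    have : Tendsto (fun k : ℕ => (E0 * r) * θ ^ k / (1 - θ)) atTop (𝓝 ((E0 * r) * 0 / (1 - θ))) :=
      ((tendsto_pow_atTop_nhds_zero_of_lt_one hθ0 hθ1).const_mul _).div_const _
    rw [mul_zero, zero_div] at this
    filter_upwards [this.eventually_lt_const hε] with k hk p hp
    rw [dist_comm]
    exact (dist_le_of_le_geometric_of_tendsto θ (E0 * r) hθ1 (hdist p hp) (hW p hp) k).trans_lt hk
  have anX : AnalyticOnNhd ℂ (fun p => (W p).1) (ball 0 r) :=
    analytic_of_unif (F := fun k p => (w k p).1) (fun k p hp => analyticAt_fst.comp (anw k p hp))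
      (uniformContinuous_fst.comp_tendstoUniformlyOn hunif)
  have anY : AnalyticOnNhd ℂ (fun p => (W p).2) (ball 0 r) :=
    analytic_of_unif (F := fun k p => (w k p).2) (fun k p hp => analyticAt_snd.comp (anw k p hp))
      (uniformContinuous_snd.comp_tendstoUniformlyOn hunif)
  -- bounds for the limit
  have bX : ∀ p ∈ ball (0 : ℂ × ℂ) r, ‖(W p).1 - ξ * p.2‖ ≤ E * (1 - θ)⁻¹ * (‖p.2‖ * ‖p‖) := by
    intro p hp
    have ht : Tendsto (fun k => ‖(w k p).1 - ξ * p.2‖) atTop (𝓝 ‖(W p).1 - ξ * p.2‖) :=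
      ((((continuous_fst.tendsto _).comp (hW p hp))).sub_const _).norm
    refine le_of_tendsto' ht fun k => ((bounds k p hp).1.1).trans ?_
    gcongr
    exact hS k
  have bW : ∀ p ∈ ball (0 : ℂ × ℂ) r, ‖W p‖ ≤ M * ‖p.2‖ := fun p hp =>
    le_of_tendsto' (hW p hp).norm fun k => (bounds k p hp).2.1
  have eqs : ∀ p ∈ ball (0 : ℂ × ℂ) r, (W (lsig q μ p)).1 = N1 (p.1, W p) ∧
      (W (lsig q μ p)).2 = N2 (p.1, W p) := by
    intro p hp
    have hσ := lsig_mem hq hμ hp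
    have hm := hdom p hp _ (bW p hp)
    have tp : Tendsto (fun k => (p.1, w k p)) atTop (𝓝 (p.1, W p)) :=
      tendsto_const_nhds.prodMk_nhds (hW p hp)
    have t1 := ((an1 _ (hball1 hm)).continuousAt.tendsto).comp tp
    have t2 := ((an2 _ (hball2 hm)).continuousAt.tendsto).comp tp
    have tσ1 := (continuous_fst.tendsto _).comp (hW _ hσ)
    have tσ2 := (continuous_snd.tendsto _).comp (hW _ hσ)
    have tw1 := (continuous_fst.tendsto _).comp (hW p hp)
    have l1 := (tσ1.sub t1).const_mul μ⁻¹
    have l2 := ((tσ2.sub (tw1.const_mul ν)).sub t2).const_mul κ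
    have hs := (hW p hp).comp (tendsto_add_atTop_nat 1)
    have r1 := (continuous_fst.tendsto _).comp hs
    have r2 := (continuous_snd.tendsto _).comp hs
    have q1 := tendsto_nhds_unique r1 l1
    have q2 := tendsto_nhds_unique r2 l2
    constructor
    · have : (W (lsig q μ p)).1 = μ * (W p).1 + s1 (p.1, W p) := by
        rw [q1]; field_simp; ring
      rw [this]; simp [s1, L1, P1]
    · have : (W (lsig q μ p)).2 = κ⁻¹ * (W p).2 + ν * (W p).1 + s2 (p.1, W p) := by
        rw [q2]; field_simp; ring
      rw [this]; simp [s2, L2, P1, P2]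
  -- division by the second variable
  have hr2 : (0 : ℝ) < r / 2 := by positivity
  have hcb : closedBall (0 : ℂ × ℂ) (r / 2) ⊆ ball 0 r := closedBall_subset_ball (by linarith)
  have hbb : ball (0 : ℂ × ℂ) (r / 2) ⊆ ball 0 r := ball_subset_closedBall.trans hcb
  have W0 : ∀ t : ℂ, ‖t‖ < r / 2 → W (t, 0) = 0 := by
    intro t ht
    have := bW (t, 0) (hbb (by simpa [Prod.norm_def] using ht))
    simpa using this
  obtain ⟨g1, ag1, hg1⟩ := div_snd hr2 (anX.mono hcb) (fun t ht => by simp [W0 t ht])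
  obtain ⟨g2, ag2, hg2⟩ := div_snd hr2 (anY.mono hcb) (fun t ht => by simp [W0 t ht])
  have hWe : ∀ p ∈ ball (0 : ℂ × ℂ) (r / 2), W p = (p.2 * (ξ + (g1 p - ξ)), p.2 * g2 p) := by
    intro p hp
    ext
    · simp [hg1 p hp]
    · simp [hg2 p hp]
  refine ⟨r / 2, hr2, fun p => g1 p - ξ, g2, fun p hp => (ag1 p hp).sub analyticAt_const, ag2,
    ?_, ?_⟩
  -- the deviation from `ξ ζ` is quadratic, so `u` vanishes at the origin
  · have hle : ∀ᶠ z : ℂ in 𝓝[≠] 0, ‖g1 (0, z) - ξ‖ ≤ E * (1 - θ)⁻¹ * ‖z‖ := by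
      have hb : ∀ᶠ z : ℂ in 𝓝[≠] 0, z ∈ ball (0 : ℂ) (r / 2) :=
        (isOpen_ball.mem_nhds (mem_ball_self hr2) : _) |> mem_nhdsWithin_of_mem_nhds
      filter_upwards [hb, self_mem_nhdsWithin] with z hz hz0
      have hmem : ((0, z) : ℂ × ℂ) ∈ ball (0 : ℂ × ℂ) (r / 2) := by
        simpa [Prod.norm_def] using hz
      have h := bX _ (hbb hmem)
      have h3 : (W (0, z)).1 = z * g1 (0, z) := hg1 _ hmem
      have hz0' : 0 < ‖z‖ := norm_pos_iff.2 hz0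
      have h4 : ‖((0, z) : ℂ × ℂ)‖ = ‖z‖ := by simp [Prod.norm_def]
      rw [h3, h4] at h
      have h5 : z * g1 (0, z) - ξ * ((0, z) : ℂ × ℂ).2 = z * (g1 (0, z) - ξ) := by simp; ring
      rw [h5, norm_mul] at h
      refine le_of_mul_le_mul_left ?_ hz0'
      calc _ ≤ _ := h
        _ = _ := by ring
    have hg0 : AnalyticAt ℂ g1 (0, 0) := ag1 _ (mem_ball_self hr2)
    have hcont : ContinuousAt (fun z : ℂ => g1 (0, z)) 0 :=
      ContinuousAt.comp (g := g1) (f := fun z : ℂ => ((0 : ℂ), z)) hg0.continuousAt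
        (by fun_prop)
    have ht1 : Tendsto (fun z : ℂ => ‖g1 (0, z) - ξ‖) (𝓝[≠] 0) (𝓝 ‖g1 (0, 0) - ξ‖) :=
      ((hcont.tendsto.sub_const ξ).norm).mono_left nhdsWithin_le_nhds
    have ht2 : Tendsto (fun z : ℂ => E * (1 - θ)⁻¹ * ‖z‖) (𝓝[≠] 0) (𝓝 (E * (1 - θ)⁻¹ * ‖(0:ℂ)‖)) :=
      (Continuous.tendsto (by fun_prop) 0).mono_left nhdsWithin_le_nhds
    have := le_of_tendsto_of_tendsto ht1 ht2 hle
    have h0 : g1 (0, 0) - ξ = 0 := by simpa using this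
    exact h0
  · intro p hp
    have hσ := lsig_mem hq hμ hp
    have e := eqs p (hbb hp)
    rw [hWe p hp, hWe _ hσ] at e
    exact e

/-! ### Half steps -/

noncomputable section

/-- The parameters of a half step: the slopes `βᵢ`, the constants `k`, `k'` and the roots `ρᵢ`. The
points on which the functions below are evaluated are `p = (t, (z, a))`. -/
structure HStep where
  (β₁ β₂ β₃ β₄ k k' ρ₁ ρ₂ ρ₃ ρ₄ : ℂ)

namespace HStep
variable (S : HStep) (p : ℂ × (ℂ × ℂ))

/-- The quantity `w` in terms of the resolved coordinate `a`. The constants are chosen such that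
`z w - k β₁ β₂ t² = (z - β₁ t) (z - β₂ t) A`. -/
def w : ℂ := -S.k * (p.2.1 - (S.β₁ + S.β₂) * p.1) +
  (p.2.1 - S.β₁ * p.1) * (p.2.1 - S.β₂ * p.1) * p.2.2

/-- The cofactor of `(z - β₁ t) (z - β₂ t)` in `z w - k β₁ β₂ t²`. -/
def A : ℂ := -S.k + p.2.1 * p.2.2

/-- The product `∏ (z - ρᵢ)`. -/
def R : ℂ := (p.2.1 - S.ρ₁) * (p.2.1 - S.ρ₂) * (p.2.1 - S.ρ₃) * (p.2.1 - S.ρ₄)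

/-- The difference quotient `(∏ (z - ρᵢ) - ∏ ρᵢ) / z`, as a polynomial. -/
def R₁ : ℂ := p.2.1 ^ 3 - (S.ρ₁ + S.ρ₂ + S.ρ₃ + S.ρ₄) * p.2.1 ^ 2 +
  (S.ρ₁ * S.ρ₂ + S.ρ₁ * S.ρ₃ + S.ρ₁ * S.ρ₄ + S.ρ₂ * S.ρ₃ + S.ρ₂ * S.ρ₄ + S.ρ₃ * S.ρ₄) * p.2.1 -
  (S.ρ₁ * S.ρ₂ * S.ρ₃ + S.ρ₁ * S.ρ₂ * S.ρ₄ + S.ρ₁ * S.ρ₃ * S.ρ₄ + S.ρ₂ * S.ρ₃ * S.ρ₄)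

/-- The coefficient of `c` in the relation, after division by all factors `z - βᵢ t` and by `z`. -/
def den : ℂ := S.A p * S.R p +
  (1 - p.2.1 * S.w p) * ((p.2.1 - S.β₃ * p.1) * (p.2.1 - S.β₄ * p.1))

/-- The terms free of `c` in the relation, after division by all factors `z - βᵢ t` and by `z`.
The last division is possible because of `k k' ∏ ρᵢ = 1`. -/
def num : ℂ := -S.w p + S.k' * (p.2.2 * (S.ρ₁ * S.ρ₂ * S.ρ₃ * S.ρ₄) + S.A p * S.R₁ p) +
  (1 - p.2.1 * S.w p) * (S.k' * (p.2.1 - (S.β₃ + S.β₄) * p.1))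

/-- The resolved coordinate of the new quantity `v`, in the same chart as for `w` but with the slopes
`β₃, β₄`. -/
def c : ℂ := S.num p / S.den p

/-- The new quantity `v` produced by the half step. -/
def w' : ℂ := -S.k' * (p.2.1 - (S.β₃ + S.β₄) * p.1) +
  (p.2.1 - S.β₃ * p.1) * (p.2.1 - S.β₄ * p.1) * S.c p

/-- The cofactor of `z - β₃ t` in `v - k' β₄ t`. -/
def κ₃ : ℂ := -S.k' + (p.2.1 - S.β₄ * p.1) * S.c p
/-- The cofactor of `z - β₄ t` in `v - k' β₃ t`. -/
def κ₄ : ℂ := -S.k' + (p.2.1 - S.β₃ * p.1) * S.c p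
/-- The resolved coordinate of `z` with respect to the new quantity `v`, see `HStep.conv`. It serves
as input of the next half step, in which `v` and `z` exchange their roles. -/
def a' : ℂ := S.c p / (S.k' * S.κ₃ p * S.κ₄ p)

/-- The nondegeneracy and the balancing condition `k k' ∏ ρᵢ = 1` on the parameters, the latter
being the form taken by `q = b₁ b₂ b₃ b₄ / (b₅ b₆ b₇ b₈)`. -/
structure Good : Prop where
  hk : S.k ≠ 0
  hk' : S.k' ≠ 0
  hB : S.k * S.k' * (S.ρ₁ * S.ρ₂ * S.ρ₃ * S.ρ₄) = 1

variable {S p}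

/-- The polynomial relation of a half step between `(z, w)` and `(z, v)`. -/
def Rel (S : HStep) (t z w v : ℂ) : Prop :=
  (z * w - S.k * S.β₁ * S.β₂ * t ^ 2) * (z * v - S.k' * S.β₃ * S.β₄ * t ^ 2) *
      ((z - S.ρ₁) * (z - S.ρ₂) * (z - S.ρ₃) * (z - S.ρ₄)) =
    (z * w - 1) * (z * v - 1) *
      ((z - S.β₁ * t) * (z - S.β₂ * t) * (z - S.β₃ * t) * (z - S.β₄ * t))

/-- The explicit formula solves the polynomial relation. -/
theorem rel (hS : S.Good) (hd : S.den p ≠ 0) : S.Rel p.1 p.2.1 (S.w p) (S.w' p) := by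
  have hc : S.c p * S.den p = S.num p := div_mul_cancel₀ _ hd
  have hB := hS.hB
  obtain ⟨t, z, a⟩ := p
  simp only [Rel, w', den, num] at *
  generalize S.c (t, z, a) = c at *
  simp only [w, A, R, R₁] at *
  linear_combination ((z - S.β₁ * t) * (z - S.β₂ * t) * (z - S.β₃ * t) * (z - S.β₄ * t)) *
    (z * hc + hB)

/-- Recovery of `z` from the new quantity and the new resolved coordinate: the chart has the form of
`HStep.w` for the next half step. -/
theorem conv (hS : S.Good) (h3 : S.κ₃ p ≠ 0) (h4 : S.κ₄ p ≠ 0) :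
    -S.k'⁻¹ * (S.w' p - (S.k' * S.β₄ + S.k' * S.β₃) * p.1) +
      (S.w' p - S.k' * S.β₄ * p.1) * (S.w' p - S.k' * S.β₃ * p.1) * S.a' p = p.2.1 := by
  have hk := hS.hk'
  have e3 : S.w' p - S.k' * S.β₄ * p.1 = (p.2.1 - S.β₃ * p.1) * S.κ₃ p := by
    simp only [w', κ₃]; ring
  have e4 : S.w' p - S.k' * S.β₃ * p.1 = (p.2.1 - S.β₄ * p.1) * S.κ₄ p := by
    simp only [w', κ₄]; ring
  rw [e3, e4, a', w']
  field_simp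
  ring

/-- Away from the exceptional lines a solution of the polynomial relation is given by the explicit
formula. -/
theorem uniq (hS : S.Good) (hd : S.den p ≠ 0) {v b : ℂ} (hz : p.2.1 ≠ 0)
    (h1 : p.2.1 - S.β₁ * p.1 ≠ 0) (h2 : p.2.1 - S.β₂ * p.1 ≠ 0)
    (h3 : p.2.1 - S.β₃ * p.1 ≠ 0) (h4 : p.2.1 - S.β₄ * p.1 ≠ 0)
    (g3 : v - S.k' * S.β₃ * p.1 ≠ 0) (g4 : v - S.k' * S.β₄ * p.1 ≠ 0)
    (hrel : S.Rel p.1 p.2.1 (S.w p) v)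
    (hb : -S.k'⁻¹ * (v - (S.k' * S.β₄ + S.k' * S.β₃) * p.1) +
      (v - S.k' * S.β₄ * p.1) * (v - S.k' * S.β₃ * p.1) * b = p.2.1) :
    S.w' p = v ∧ S.a' p = b := by
  have hk := hS.hk'
  have hB := hS.hB
  obtain ⟨c, hc⟩ : ∃ c, v = -S.k' * (p.2.1 - (S.β₃ + S.β₄) * p.1) +
      (p.2.1 - S.β₃ * p.1) * (p.2.1 - S.β₄ * p.1) * c := by
    refine ⟨(v + S.k' * (p.2.1 - (S.β₃ + S.β₄) * p.1)) /
      ((p.2.1 - S.β₃ * p.1) * (p.2.1 - S.β₄ * p.1)), ?_⟩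
    field_simp
    ring
  have hcc : S.c p = c := by
    rw [HStep.c, div_eq_iff hd]
    have : ((p.2.1 - S.β₁ * p.1) * (p.2.1 - S.β₂ * p.1) * (p.2.1 - S.β₃ * p.1) *
        (p.2.1 - S.β₄ * p.1) * p.2.1) * (S.num p - c * S.den p) = 0 := by
      simp only [Rel, den, num] at *
      rw [hc] at hrel
      simp only [w, A, R, R₁] at *
      linear_combination -hrel + ((p.2.1 - S.β₁ * p.1) * (p.2.1 - S.β₂ * p.1) *
        (p.2.1 - S.β₃ * p.1) * (p.2.1 - S.β₄ * p.1)) * hB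
    rcases mul_eq_zero.1 this with h | h
    · exact absurd h (by positivity)
    · linear_combination h
  have hw : S.w' p = v := by rw [hc, w', hcc]
  refine ⟨hw, ?_⟩
  have e3 : S.w' p - S.k' * S.β₄ * p.1 = (p.2.1 - S.β₃ * p.1) * S.κ₃ p := by
    simp only [w', κ₃]; ring
  have e4 : S.w' p - S.k' * S.β₃ * p.1 = (p.2.1 - S.β₄ * p.1) * S.κ₄ p := by
    simp only [w', κ₄]; ring
  have k3 : S.κ₃ p ≠ 0 := by
    intro h; rw [hw, h, mul_zero] at e3; exact g4 e3
  have k4 : S.κ₄ p ≠ 0 := by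
    intro h; rw [hw, h, mul_zero] at e4; exact g3 e4
  have := conv hS k3 k4
  rw [hw] at this
  have h5 := mul_ne_zero g4 g3
  refine mul_left_cancel₀ h5 ?_
  linear_combination this - hb

theorem den_zero (S : HStep) (a : ℂ) :
    S.den (0, (0, a)) = -S.k * (S.ρ₁ * S.ρ₂ * S.ρ₃ * S.ρ₄) := by
  simp [den, A, R, w]

theorem w'_zero (S : HStep) (a : ℂ) : S.w' (0, (0, a)) = 0 := by simp [w']
theorem κ₃_zero (S : HStep) (a : ℂ) : S.κ₃ (0, (0, a)) = -S.k' := by simp [κ₃]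
theorem κ₄_zero (S : HStep) (a : ℂ) : S.κ₄ (0, (0, a)) = -S.k' := by simp [κ₄]

theorem Good.rho (hS : S.Good) : S.ρ₁ * S.ρ₂ * S.ρ₃ * S.ρ₄ ≠ 0 := by
  intro h; have := hS.hB; rw [h] at this; simp at this

theorem Good.den_ne (hS : S.Good) (a : ℂ) : S.den (0, (0, a)) ≠ 0 := by
  rw [den_zero]; exact mul_ne_zero (neg_ne_zero.2 hS.hk) hS.rho

/-- At the origin the map of the resolved coordinate is affine. -/
theorem a'_zero (hS : S.Good) : ∃ e : ℂ, ∀ a, S.a' (0, (0, a)) = -(S.k * S.k' ^ 2)⁻¹ * a + e := by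
  have hk := hS.hk
  have hk' := hS.hk'
  have hr := hS.rho
  have hB := hS.hB
  obtain ⟨r, hr1⟩ : ∃ r, ∀ a, S.R₁ (0, (0, a)) = r := ⟨S.R₁ (0, (0, 0)), fun a => by simp [R₁]⟩
  refine ⟨r / (S.ρ₁ * S.ρ₂ * S.ρ₃ * S.ρ₄ * S.k' ^ 2), fun a => ?_⟩
  rw [a', κ₃_zero, κ₄_zero, c, den_zero, num, hr1]
  generalize S.ρ₁ * S.ρ₂ * S.ρ₃ * S.ρ₄ = B at *
  simp [A, w]
  field_simp
  ring

theorem an1 (p : ℂ × (ℂ × ℂ)) : AnalyticAt ℂ (fun p : ℂ × (ℂ × ℂ) => p.1) p := analyticAt_fst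
theorem an2 (p : ℂ × (ℂ × ℂ)) : AnalyticAt ℂ (fun p : ℂ × (ℂ × ℂ) => p.2.1) p :=
  AnalyticAt.comp (g := Prod.fst) analyticAt_fst analyticAt_snd
theorem an3 (p : ℂ × (ℂ × ℂ)) : AnalyticAt ℂ (fun p : ℂ × (ℂ × ℂ) => p.2.2) p :=
  AnalyticAt.comp (g := Prod.snd) analyticAt_snd analyticAt_snd

theorem an_w (S : HStep) (p) : AnalyticAt ℂ S.w p := by
  unfold w
  have := an1 p
  have := an2 p
  have := an3 p
  fun_prop

theorem an_den (S : HStep) (p) : AnalyticAt ℂ S.den p := by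
  unfold den A R w
  have := an1 p
  have := an2 p
  have := an3 p
  fun_prop

theorem an_num (S : HStep) (p) : AnalyticAt ℂ S.num p := by
  unfold num A R₁ w
  have := an1 p
  have := an2 p
  have := an3 p
  fun_prop

theorem an_c (h : S.den p ≠ 0) : AnalyticAt ℂ S.c p := (an_num S p).div (an_den S p) h
theorem an_w' (h : S.den p ≠ 0) : AnalyticAt ℂ S.w' p := by
  have := an_c h
  unfold w'; have := an1 p; have := an2 p; have := an3 p; fun_prop
theorem an_κ₃ (h : S.den p ≠ 0) : AnalyticAt ℂ S.κ₃ p := by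
  have := an_c h
  unfold κ₃; have := an1 p; have := an2 p; have := an3 p; fun_prop
theorem an_κ₄ (h : S.den p ≠ 0) : AnalyticAt ℂ S.κ₄ p := by
  have := an_c h
  unfold κ₄; have := an1 p; have := an2 p; have := an3 p; fun_prop
theorem an_a' (hS : S.Good) (h : S.den p ≠ 0) (h3 : S.κ₃ p ≠ 0) (h4 : S.κ₄ p ≠ 0) :
    AnalyticAt ℂ S.a' p :=
  (an_c h).div ((analyticAt_const.mul (an_κ₃ h)).mul (an_κ₄ h))
    (mul_ne_zero (mul_ne_zero hS.hk' h3) h4)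

/-- On the fibre `t = 0` the half step multiplies tangent vectors in the direction of `z` by `-k'`. -/
theorem deriv_w' (hS : S.Good) {z a : ℂ → ℂ} {m : ℂ} (hz : HasDerivAt z m 0) (z0 : z 0 = 0)
    (ha : DifferentiableAt ℂ a 0) : HasDerivAt (fun s => S.w' (0, (z s, a s))) (-S.k' * m) 0 := by
  have hc : DifferentiableAt ℂ (fun s => S.c (0, (z s, a s))) 0 := by
    have h1 : DifferentiableAt ℂ S.c (0, (z 0, a 0)) := by
      rw [z0]; exact (an_c (hS.den_ne _)).differentiableAt
    exact DifferentiableAt.comp (g := S.c) (f := fun s => ((0 : ℂ), (z s, a s))) 0 h1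
      (by have := hz.differentiableAt; fun_prop)
  have : (fun s => S.w' (0, (z s, a s))) =
      fun s => -S.k' * z s + z s * z s * S.c (0, (z s, a s)) := by
    ext s; simp [w']
  rw [this]
  have h := (hz.const_mul (-S.k')).add ((hz.mul hz).mul hc.hasDerivAt)
  refine h.congr_deriv ?_
  simp [z0]

end HStep

end

/-! ### Composition of two half steps -/

noncomputable section

namespace HStep

/-- Compatibility of two successive half steps: the chart in which `S` leaves its output is the one
`T` uses for its input, and the output chart of `T` at time `t` is the input chart of `S` at time
`q t`. -/
structure Link (S T : HStep) (q : ℂ) : Prop where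
  hS : S.Good
  hT : T.Good
  hk : T.k = S.k'⁻¹
  hk' : T.k' = S.k⁻¹
  h1 : T.β₁ = S.k' * S.β₄
  h2 : T.β₂ = S.k' * S.β₃
  h3 : T.k' * T.β₃ = q * S.β₂
  h4 : T.k' * T.β₄ = q * S.β₁

/-- The state after the first half step. -/
def mid (S : HStep) (p : ℂ × (ℂ × ℂ)) : ℂ × (ℂ × ℂ) := (p.1, (S.w' p, S.a' p))

/-- The composition of both half steps, without the time component. -/
def full (S T : HStep) (p : ℂ × (ℂ × ℂ)) : ℂ × ℂ := (T.w' (S.mid p), T.a' (S.mid p))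

/-- The condition that all denominators in the half step are nonzero at `p`. -/
def Ok (S : HStep) (p : ℂ × (ℂ × ℂ)) : Prop := S.den p ≠ 0 ∧ S.κ₃ p ≠ 0 ∧ S.κ₄ p ≠ 0

variable {S T : HStep} {q : ℂ} {p : ℂ × (ℂ × ℂ)}

theorem mid_zero (S : HStep) (a : ℂ) : S.mid (0, (0, a)) = (0, (0, S.a' (0, (0, a)))) := by
  simp [mid, w'_zero]

theorem ok_zero (hS : S.Good) (a : ℂ) : S.Ok (0, (0, a)) :=
  ⟨hS.den_ne a, by rw [κ₃_zero]; exact neg_ne_zero.2 hS.hk',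
    by rw [κ₄_zero]; exact neg_ne_zero.2 hS.hk'⟩

theorem Ok.an_mid (hS : S.Good) (h : S.Ok p) : AnalyticAt ℂ S.mid p :=
  (an1 p).prod ((an_w' h.1).prod (an_a' hS h.1 h.2.1 h.2.2))

theorem ok_nhds (h : S.Ok p) : ∀ᶠ p' in 𝓝 p, S.Ok p' :=
  ((an_den S p).continuousAt.eventually_ne h.1).and
    (((an_κ₃ h.1).continuousAt.eventually_ne h.2.1).and
      ((an_κ₄ h.1).continuousAt.eventually_ne h.2.2))

theorem an_full (hS : S.Good) (hT : T.Good) (h : S.Ok p) (h' : T.Ok (S.mid p)) :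
    AnalyticAt ℂ (full S T) p :=
  AnalyticAt.comp (g := fun p => (T.w' p, T.a' p)) (f := S.mid)
    ((an_w' h'.1).prod (an_a' hT h'.1 h'.2.1 h'.2.2)) (h.an_mid hS)

theorem ok_full_zero (hS : S.Good) (hT : T.Good) (a : ℂ) :
    S.Ok (0, (0, a)) ∧ T.Ok (S.mid (0, (0, a))) :=
  ⟨ok_zero hS a, by rw [mid_zero]; exact ok_zero hT _⟩

theorem ok_full_nhds (hS : S.Good) (hT : T.Good) (a : ℂ) :
    ∀ᶠ p in 𝓝 ((0, (0, a)) : ℂ × (ℂ × ℂ)), S.Ok p ∧ T.Ok (S.mid p) := by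
  have h := ok_full_zero hS hT a
  exact (ok_nhds h.1).and ((h.1.an_mid hS).continuousAt.eventually (ok_nhds h.2))

theorem an_full_zero (hS : S.Good) (hT : T.Good) (a : ℂ) :
    AnalyticAt ℂ (full S T) (0, (0, a)) :=
  an_full hS hT (ok_full_zero hS hT a).1 (ok_full_zero hS hT a).2

theorem Link.w_mid (hL : Link S T q) (h : S.Ok p) : T.w (S.mid p) = p.2.1 := by
  have := conv hL.hS h.2.1 h.2.2
  simp only [w, mid, hL.hk, hL.h1, hL.h2]
  exact this

theorem Link.w_full (hL : Link S T q) (h : T.Ok (S.mid p)) :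
    S.w (q * p.1, full S T p) = S.w' p := by
  have := conv hL.hT h.2.1 h.2.2
  rw [hL.h3, hL.h4, hL.hk', inv_inv] at this
  simp only [w, full]
  simp only [mid] at *
  linear_combination this

/-- The orbit of the composed map satisfies both polynomial relations. -/
theorem Link.rel_full (hL : Link S T q) (h : S.Ok p) (h' : T.Ok (S.mid p)) :
    S.Rel p.1 p.2.1 (S.w p) (S.w (q * p.1, full S T p)) ∧
      T.Rel p.1 (S.w (q * p.1, full S T p)) p.2.1 (full S T p).1 := by
  rw [hL.w_full h']
  refine ⟨rel hL.hS h.1, ?_⟩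
  have := rel hL.hT h'.1
  rw [hL.w_mid h] at this
  exact this

theorem full_zero_fst (S T : HStep) (a : ℂ) : (full S T (0, (0, a))).1 = 0 := by
  simp [full, mid_zero, w'_zero]

/-- On the exceptional fibre `t = z = 0` the composed map is affine with slope `μ⁻¹`, where `μ` is
the product of the constants `k'` of both steps. -/
theorem Link.full_zero_snd (hL : Link S T q) :
    ∃ e : ℂ, ∀ a, (full S T (0, (0, a))).2 = (S.k' * T.k')⁻¹ * a + e := by
  obtain ⟨e1, h1⟩ := a'_zero hL.hS
  obtain ⟨e2, h2⟩ := a'_zero hL.hT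
  refine ⟨-(T.k * T.k' ^ 2)⁻¹ * e1 + e2, fun a => ?_⟩
  have hk := hL.hS.hk
  have hk' := hL.hS.hk'
  rw [full, mid_zero, h2, h1, hL.hk, hL.hk']
  field_simp
  ring

/-- The multiplier of the composed map in the direction of `z` is the product of the constants `k'`. -/
theorem Link.deriv_full (hL : Link S T q) (a : ℂ) :
    HasDerivAt (fun s => (full S T (0, (s, a))).1) (S.k' * T.k') 0 := by
  have h1 := deriv_w' hL.hS (z := fun s => s) (a := fun _ => a) (hasDerivAt_id 0) rfl
    (by fun_prop)
  have ok := ok_zero hL.hS a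
  have h2 : DifferentiableAt ℂ (fun s : ℂ => S.a' (0, (s, a))) 0 :=
    DifferentiableAt.comp (g := S.a') (f := fun s : ℂ => ((0 : ℂ), (s, a))) 0
      (an_a' hL.hS ok.1 ok.2.1 ok.2.2).differentiableAt (by fun_prop)
  have h3 := deriv_w' hL.hT h1 (w'_zero S a) h2
  exact h3.congr_deriv (by ring)

/-- Away from the exceptional lines, a solution of both relations is an orbit of the composed map. -/
theorem Link.uniq_full (hL : Link S T q) {t z v x a b : ℂ} (h : S.Ok (t, (z, a)))
    (h' : T.Ok (S.mid (t, (z, a)))) (hz : z ≠ 0) (hv : v ≠ 0)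
    (h1 : z - S.β₁ * t ≠ 0) (h2 : z - S.β₂ * t ≠ 0)
    (h3 : z - S.β₃ * t ≠ 0) (h4 : z - S.β₄ * t ≠ 0)
    (k1 : v - T.β₁ * t ≠ 0) (k2 : v - T.β₂ * t ≠ 0)
    (k3 : v - T.β₃ * t ≠ 0) (k4 : v - T.β₄ * t ≠ 0)
    (l1 : x - S.β₁ * (q * t) ≠ 0) (l2 : x - S.β₂ * (q * t) ≠ 0)
    (r1 : S.Rel t z (S.w (t, (z, a))) v) (r2 : T.Rel t v z x)
    (hw : S.w (q * t, (x, b)) = v) :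
    full S T (t, (z, a)) = (x, b) := by
  have hk' := hL.hS.hk'
  obtain ⟨c, hc⟩ : ∃ c, T.w (t, (v, c)) = z := by
    refine ⟨(z + T.k * (v - (T.β₁ + T.β₂) * t)) / ((v - T.β₁ * t) * (v - T.β₂ * t)), ?_⟩
    simp only [w]
    field_simp
    ring
  obtain ⟨e1, e2⟩ := uniq hL.hS (p := (t, (z, a))) (v := v) (b := c) h.1 hz h1 h2 h3 h4
    (by rw [← hL.h2]; exact k2) (by rw [← hL.h1]; exact k1) r1
    (by rw [← hc, ← hL.h1, ← hL.h2, ← hL.hk]; simp only [w])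
  have em : S.mid (t, (z, a)) = (t, (v, c)) := by simp only [mid]; rw [e1, e2]
  rw [em] at h'
  have := uniq hL.hT (p := (t, (v, c))) (v := x) (b := b) h'.1 hv k1 k2 k3 k4
    (by rw [hL.h3]; simpa [mul_assoc, mul_comm, mul_left_comm] using l2)
    (by rw [hL.h4]; simpa [mul_assoc, mul_comm, mul_left_comm] using l1) (by rw [hc]; exact r2)
    (by
      rw [← hw, hL.h3, hL.h4, hL.hk', inv_inv]
      simp only [w]; ring)
  rw [full, em, this.1, this.2]

end HStep

/-- A directional value of the Fréchet derivative is computed along a line through the origin. -/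
theorem fderiv_line {E F : Type*} [NormedAddCommGroup E] [NormedSpace ℂ E]
    [NormedAddCommGroup F] [NormedSpace ℂ F] {f : E → F} {v : E} {d : F}
    (hf : DifferentiableAt ℂ f 0) (h : HasDerivAt (fun s : ℂ => f (s • v)) d 0) :
    fderiv ℂ f 0 v = d := by
  rw [← hf.lineDeriv_eq_fderiv]
  refine HasLineDerivAt.lineDeriv ?_
  simpa [HasLineDerivAt] using h

namespace HStep
variable {S T : HStep} {q : ℂ}

/-- An invariant holomorphic curve through the exceptional fibre extends to a one-parameter family of
solutions of both relations, with linear dynamics in the parameter. The tangent vector is normalised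
by `-k⁻¹` in `z`, which makes it `1` in `w`. -/
theorem Link.extend (hL : Link S T q) (hq : ‖q‖ < 1) (hμ : ‖S.k' * T.k'‖ < 1)
    {g0 a0 : ℂ → ℂ} (hg : AnalyticAt ℂ g0 0) (ha : AnalyticAt ℂ a0 0) (hg0 : g0 0 = 0)
    (hb : ∀ᶠ t in 𝓝 0, full S T (t, (g0 t, a0 t)) = (g0 (q * t), a0 (q * t))) :
    ∃ r > 0, ∃ u v : ℂ × ℂ → ℂ, AnalyticOnNhd ℂ u (ball 0 r) ∧ AnalyticOnNhd ℂ v (ball 0 r) ∧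
      u 0 = 0 ∧ v 0 = 0 ∧ ∃ F G : ℂ × ℂ → ℂ,
        (∀ p, F p = S.w (p.1, (g0 p.1, a0 p.1)) + p.2 * (1 + u p)) ∧
        (∀ p, G p = g0 p.1 + p.2 * (-S.k⁻¹ + v p)) ∧
        ∀ p ∈ ball (0 : ℂ × ℂ) r,
          S.Rel p.1 (G p) (F p) (F (lsig q (S.k' * T.k') p)) ∧
            T.Rel p.1 (F (lsig q (S.k' * T.k') p)) (G p) (G (lsig q (S.k' * T.k') p)) := by
  obtain ⟨μ, hμe⟩ : ∃ μ, S.k' * T.k' = μ := ⟨_, rfl⟩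
  have hkk := hL.hS.hk
  have hμ0 : μ ≠ 0 := by rw [← hμe]; exact mul_ne_zero hL.hS.hk' hL.hT.hk'
  rw [hμe] at hμ ⊢
  have hq0 : (fun t : ℂ => q * t) 0 = 0 := mul_zero q
  -- the map in coordinates centred at the base curve
  let N : ℂ × (ℂ × ℂ) → ℂ × ℂ := fun p =>
    full S T (p.1, (g0 p.1 + p.2.1, a0 p.1 + p.2.2)) - (g0 (q * p.1), a0 (q * p.1))
  have ag1 : AnalyticAt ℂ (fun p : ℂ × (ℂ × ℂ) => g0 p.1) 0 :=
    AnalyticAt.comp (g := g0) (f := fun p : ℂ × (ℂ × ℂ) => p.1) hg (an1 0)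
  have aa1 : AnalyticAt ℂ (fun p : ℂ × (ℂ × ℂ) => a0 p.1) 0 :=
    AnalyticAt.comp (g := a0) (f := fun p : ℂ × (ℂ × ℂ) => p.1) ha (an1 0)
  have aq : AnalyticAt ℂ (fun p : ℂ × (ℂ × ℂ) => q * p.1) 0 := analyticAt_const.mul (an1 0)
  have ag2 : AnalyticAt ℂ (fun p : ℂ × (ℂ × ℂ) => g0 (q * p.1)) 0 :=
    AnalyticAt.comp (g := g0) (f := fun p : ℂ × (ℂ × ℂ) => q * p.1) (by simpa using hg) aq
  have aa2 : AnalyticAt ℂ (fun p : ℂ × (ℂ × ℂ) => a0 (q * p.1)) 0 :=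
    AnalyticAt.comp (g := a0) (f := fun p : ℂ × (ℂ × ℂ) => q * p.1) (by simpa using ha) aq
  have aN : AnalyticAt ℂ N 0 := by
    refine AnalyticAt.sub ?_ (ag2.prod aa2)
    refine AnalyticAt.comp (g := full S T)
      (f := fun p : ℂ × (ℂ × ℂ) => (p.1, (g0 p.1 + p.2.1, a0 p.1 + p.2.2))) ?_
      ((an1 0).prod ((ag1.add (an2 0)).prod (aa1.add (an3 0))))
    simpa [hg0] using an_full_zero hL.hS hL.hT (a0 0)
  have aN1 : AnalyticAt ℂ (fun p => (N p).1) 0 :=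
    AnalyticAt.comp (g := Prod.fst) analyticAt_fst aN
  have aN2 : AnalyticAt ℂ (fun p => (N p).2) 0 :=
    AnalyticAt.comp (g := Prod.snd) analyticAt_snd aN
  have hN0 : ∀ᶠ t in 𝓝 (0 : ℂ), N (t, 0) = 0 := by
    filter_upwards [hb] with t ht
    simp [N, ht]
  obtain ⟨e, he⟩ := hL.full_zero_snd
  have ha0 : (full S T (0, (0, a0 0))).2 = a0 0 := by
    have := hb.self_of_nhds
    simp only [hg0, mul_zero] at this
    rw [this]
  obtain ⟨r1, hr1, v, η, av, aη, v0, hvη⟩ := stable_lin (q := q) (μ := μ) (κ := μ) (-S.k⁻¹) hq hμ0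
    hμ hμ0 (by rw [norm_mul]; nlinarith [norm_nonneg μ]) aN1 aN2
    (hN0.mono fun t ht => by rw [ht]; rfl) (hN0.mono fun t ht => by rw [ht]; rfl)
    (by
      refine fderiv_line aN1.differentiableAt ?_
      have := hL.deriv_full (a0 0)
      rw [hμe] at this
      simpa [N, hg0] using this)
    (by
      refine fderiv_line aN1.differentiableAt ?_
      have : (fun s : ℂ => (N (s • (0, (0, 1)))).1) = fun _ => 0 := by
        ext s
        simp [N, hg0, full_zero_fst]
      rw [this]
      exact hasDerivAt_const _ _)
    (by
      refine fderiv_line aN2.differentiableAt ?_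
      have : (fun s : ℂ => (N (s • (0, (0, 1)))).2) = fun s => μ⁻¹ * s := by
        ext s
        rw [he, hμe] at ha0
        simp [N, hg0, he, hμe]
        linear_combination ha0
      rw [this]
      simpa using (hasDerivAt_id (0 : ℂ)).const_mul μ⁻¹)
  -- `u` is the exact remainder when `w` is evaluated on the invariant surface
  let G : ℂ × ℂ → ℂ := fun p => g0 p.1 + p.2 * (-S.k⁻¹ + v p)
  let A : ℂ × ℂ → ℂ := fun p => a0 p.1 + p.2 * η p
  let u : ℂ × ℂ → ℂ := fun p => -S.k * v p +
    (-S.k⁻¹ + v p) * (G p + g0 p.1 - (S.β₁ + S.β₂) * p.1) * A p +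
    (g0 p.1 - S.β₁ * p.1) * (g0 p.1 - S.β₂ * p.1) * η p
  -- analyticity of the base curve near zero
  have hga : ∀ᶠ t in 𝓝 (0 : ℂ), AnalyticAt ℂ g0 t ∧ AnalyticAt ℂ a0 t :=
    hg.eventually_analyticAt.and ha.eventually_analyticAt
  have hpt : ContinuousAt (fun p : ℂ × ℂ => (p.1, (G p, A p))) 0 := by
    have c1 : ContinuousAt v 0 := (av 0 (mem_ball_self hr1)).continuousAt
    have c2 : ContinuousAt η 0 := (aη 0 (mem_ball_self hr1)).continuousAt
    have c3 : ContinuousAt (fun p : ℂ × ℂ => g0 p.1) 0 :=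
      ContinuousAt.comp (g := g0) (f := fun p : ℂ × ℂ => p.1) hg.continuousAt (by fun_prop)
    have c4 : ContinuousAt (fun p : ℂ × ℂ => a0 p.1) 0 :=
      ContinuousAt.comp (g := a0) (f := fun p : ℂ × ℂ => p.1) ha.continuousAt (by fun_prop)
    simp only [G, A]
    fun_prop
  have hok := hpt.eventually (p := fun p => S.Ok p ∧ T.Ok (S.mid p))
    (by simpa [G, A, hg0] using ok_full_nhds hL.hS hL.hT (a0 0))
  have hfst : Tendsto (fun p : ℂ × ℂ => p.1) (𝓝 0) (𝓝 0) :=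
    Continuous.tendsto' continuous_fst _ _ rfl
  obtain ⟨r2, hr2, hall⟩ := Metric.eventually_nhds_iff_ball.1
    (hok.and (hfst.eventually hga))
  have hb1 : ball (0 : ℂ × ℂ) (min r1 r2) ⊆ ball 0 r1 := ball_subset_ball (min_le_left _ _)
  have hb2 : ball (0 : ℂ × ℂ) (min r1 r2) ⊆ ball 0 r2 := ball_subset_ball (min_le_right _ _)
  refine ⟨min r1 r2, lt_min hr1 hr2, u, v, ?_, av.mono hb1, ?_, v0,
    fun p => S.w (p.1, (g0 p.1, a0 p.1)) + p.2 * (1 + u p), G, fun p => rfl, fun p => rfl, ?_⟩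
  · intro p hp
    have b1 := av p (hb1 hp)
    have b2 := aη p (hb1 hp)
    have b0 : AnalyticAt ℂ (fun p : ℂ × ℂ => p.1) p := analyticAt_fst
    have b5 : AnalyticAt ℂ (fun p : ℂ × ℂ => p.2) p := analyticAt_snd
    have b3 : AnalyticAt ℂ (fun p : ℂ × ℂ => g0 p.1) p :=
      AnalyticAt.comp (g := g0) (f := fun p : ℂ × ℂ => p.1) (hall p (hb2 hp)).2.1 b0
    have b4 : AnalyticAt ℂ (fun p : ℂ × ℂ => a0 p.1) p :=
      AnalyticAt.comp (g := a0) (f := fun p : ℂ × ℂ => p.1) (hall p (hb2 hp)).2.2 b0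
    have b6 : AnalyticAt ℂ (fun p => -S.k⁻¹ + v p) p := analyticAt_const.add b1
    have b7 : AnalyticAt ℂ G p := b3.add (b5.mul b6)
    have b8 : AnalyticAt ℂ A p := b4.add (b5.mul b2)
    exact ((analyticAt_const.mul b1).add ((b6.mul ((b7.add b3).sub (analyticAt_const.mul b0))).mul
      b8)).add (((b3.sub (analyticAt_const.mul b0)).mul (b3.sub (analyticAt_const.mul b0))).mul b2)
  · simp [u, v0, G, hg0]
  · have hF : ∀ p : ℂ × ℂ,
        S.w (p.1, (g0 p.1, a0 p.1)) + p.2 * (1 + u p) = S.w (p.1, (G p, A p)) := by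
      intro p
      simp only [w, u, G, A]
      field_simp
      ring
    intro p hp
    simp only [hF]
    have ok := (hall p (hb2 hp)).1
    have h := hvη p (hb1 hp)
    have hfull : full S T (p.1, (G p, A p)) = (G (lsig q μ p), A (lsig q μ p)) := by
      refine Prod.ext ?_ ?_
      · have h1 := h.1
        simp only [N, Prod.fst_sub] at h1
        simp only [G, A]
        rw [h1]
        simp [lsig]
      · have h1 := h.2
        simp only [N, Prod.snd_sub] at h1
        simp only [G, A]
        rw [h1]
        simp [lsig]
    have := hL.rel_full ok.1 ok.2
    rw [hfull] at this
    exact this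

end HStep
end

/-! ### Rigidity of the base curve in the degenerate case -/

/-- Comparison of leading coefficients: a common power of `t` may be cancelled at `t = 0`. -/
theorem eq_at_zero {P Q : ℂ → ℂ} (k : ℕ) (hP : ContinuousAt P 0) (hQ : ContinuousAt Q 0)
    (h : ∀ᶠ t in 𝓝 0, t ^ k * P t = t ^ k * Q t) : P 0 = Q 0 := by
  refine tendsto_nhds_unique_of_eventuallyEq (l := 𝓝[≠] (0 : ℂ))
    (hP.tendsto.mono_left nhdsWithin_le_nhds) (hQ.tendsto.mono_left nhdsWithin_le_nhds) ?_
  filter_upwards [h.filter_mono nhdsWithin_le_nhds, self_mem_nhdsWithin] with t ht ht0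
  exact mul_left_cancel₀ (pow_ne_zero k ht0) ht

theorem tendsto_qmul (q : ℂ) : Tendsto (fun t : ℂ => q * t) (𝓝 0) (𝓝 0) :=
  Continuous.tendsto' (by fun_prop) _ _ (by simp)

theorem cont_qmul {c : ℂ → ℂ} (q : ℂ) (hc : ContinuousAt c 0) :
    ContinuousAt (fun t => c (q * t)) 0 :=
  ContinuousAt.comp (g := c) (f := fun t => q * t) (by simpa using hc) (by fun_prop)

/-- A pair with the first-order terms of `(b t, b⁻¹ t)` but different from it has a common order
`m + 2` of deviation, with leading coefficients `(c 0, d 0)` not both zero. -/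
theorem pair_order {b : ℂ} {g f : ℂ → ℂ} (hg : AnalyticAt ℂ g 0) (hf : AnalyticAt ℂ f 0)
    (g0 : g 0 = 0) (f0 : f 0 = 0) (dg : deriv g 0 = b) (df : deriv f 0 = b⁻¹)
    (hne : ¬ ∀ᶠ t in 𝓝 0, g t = b * t ∧ f t = b⁻¹ * t) :
    ∃ (m : ℕ) (c d : ℂ → ℂ), AnalyticAt ℂ c 0 ∧ AnalyticAt ℂ d 0 ∧ ¬ (c 0 = 0 ∧ d 0 = 0) ∧
      ∀ᶠ t in 𝓝 0, g t = b * t + t ^ (m + 2) * c t ∧ f t = b⁻¹ * t + t ^ (m + 2) * d t := by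
  have hh : AnalyticAt ℂ (fun t => (g t - b * t, f t - b⁻¹ * t)) 0 := by fun_prop
  obtain ⟨n, h, ha, h0, he⟩ := hh.exists_eventuallyEq_pow_smul_nonzero_iff.2 (by
    intro h
    apply hne
    filter_upwards [h] with t ht
    rw [Prod.mk_eq_zero, sub_eq_zero, sub_eq_zero] at ht
    exact ht)
  have hz : n ≠ 0 := by
    rintro rfl
    have := he.self_of_nhds
    simp [g0, f0] at this
    exact h0 this.symm
  have hz1 : n ≠ 1 := by
    rintro rfl
    have h1 : HasDerivAt (fun t => (g t - b * t, f t - b⁻¹ * t)) (b - b * 1, b⁻¹ - b⁻¹ * 1) 0 := by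
      have e1 := hg.differentiableAt.hasDerivAt
      have e2 := hf.differentiableAt.hasDerivAt
      rw [dg] at e1
      rw [df] at e2
      exact (e1.sub ((hasDerivAt_id 0).const_mul b)).prodMk
        (e2.sub ((hasDerivAt_id 0).const_mul b⁻¹))
    have h2 : HasDerivAt (fun t : ℂ => (t - 0) ^ 1 • h t) (h 0) 0 := by
      have := (hasDerivAt_id (0 : ℂ)).smul ha.differentiableAt.hasDerivAt
      exact (this.congr_deriv (by simp)).congr_of_eventuallyEq (Eventually.of_forall fun t => by simp)
    have := h1.unique (h2.congr_of_eventuallyEq he)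
    apply h0
    rw [← this]
    simp
  obtain ⟨m, rfl⟩ : ∃ m, n = m + 2 := ⟨n - 2, by omega⟩
  refine ⟨m, fun t => (h t).1, fun t => (h t).2, AnalyticAt.comp (g := Prod.fst) analyticAt_fst ha,
    AnalyticAt.comp (g := Prod.snd) analyticAt_snd ha, fun hc => h0 (Prod.ext hc.1 hc.2), ?_⟩
  filter_upwards [he] with t ht
  have h1 := congrArg Prod.fst ht
  have h2 := congrArg Prod.snd ht
  simp at h1 h2
  exact ⟨by linear_combination h1, by linear_combination h2⟩

/-- A solution `(g, f)` of both relations in the degenerate case, where the slope `b` occurs twice and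
the others are `β`, `β'`. The factors with the parameters `b₅, …, b₈` enter only through continuous
functions `R₁, R₂` with values `B`, `B⁻¹` at the origin. -/
structure Dev (q b β β' B : ℂ) (R₁ R₂ g f : ℂ → ℂ) : Prop where
  q0 : q ≠ 0
  b0 : b ≠ 0
  β0 : β ≠ 0
  hβ' : β' ≠ 0
  hB : q * B = b ^ 2 * (β * β')
  c1 : ContinuousAt R₁ 0
  c2 : ContinuousAt R₂ 0
  R1 : R₁ 0 = B
  R2 : R₂ 0 = B⁻¹
  hg : AnalyticAt ℂ g 0
  hf : AnalyticAt ℂ f 0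
  g0 : g 0 = 0
  f0 : f 0 = 0
  E1 : ∀ᶠ t in 𝓝 0, (g t * f t - t ^ 2) * (g t * f (q * t) - q * t ^ 2) * R₁ (g t) =
    (g t * f t - 1) * (g t * f (q * t) - 1) *
      ((g t - b * t) ^ 2 * ((g t - β * t) * (g t - β' * t)))
  E2 : ∀ᶠ t in 𝓝 0, (g t * f (q * t) - q * t ^ 2) *
      (g (q * t) * f (q * t) - (q * t) ^ 2) * R₂ (f (q * t)) =
    (g t * f (q * t) - 1) * (g (q * t) * f (q * t) - 1) *
      ((f (q * t) - b⁻¹ * (q * t)) ^ 2 * ((f (q * t) - β⁻¹ * (q * t)) *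
        (f (q * t) - β'⁻¹ * (q * t))))

namespace Dev
variable {q b β β' B : ℂ} {R₁ R₂ g f c d : ℂ → ℂ} {m : ℕ}

/-- The leading coefficient of the first relation for a deviation from the linear solution. -/
theorem lead1 (H : Dev q b β β' B R₁ R₂ g f) (hc : AnalyticAt ℂ c 0) (hd : AnalyticAt ℂ d 0)
    (hcd : ∀ᶠ t in 𝓝 0, g t = b * t + t ^ (m + 2) * c t ∧ f t = b⁻¹ * t + t ^ (m + 2) * d t) :
    (b ^ 2 * d 0 + c 0) * (q ^ (m + 1) * (b ^ 2 * d 0) + c 0) * (β * β') =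
      c 0 ^ 2 * ((b - β) * (b - β')) := by
  have b0 := H.b0
  have q0 := H.q0
  have k1 := hc.continuousAt
  have k2 := hd.continuousAt
  have k3 : ContinuousAt d (q * 0) := by rwa [mul_zero]
  have k4 := H.hg.continuousAt
  have k5 := H.hf.continuousAt
  have k6 : ContinuousAt f (q * 0) := by rwa [mul_zero]
  have k7 : ContinuousAt R₁ (g 0) := by rw [H.g0]; exact H.c1
  have := eq_at_zero (2 * m + 6)
    (P := fun t => (b * d t + b⁻¹ * c t + t ^ (m + 1) * (c t * d t)) *
      (b * q ^ (m + 2) * d (q * t) + q * b⁻¹ * c t + t ^ (m + 1) * q ^ (m + 2) * (c t * d (q * t)))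
      * R₁ (g t))
    (Q := fun t => (g t * f t - 1) * (g t * f (q * t) - 1) * (c t ^ 2 *
      ((b - β + t ^ (m + 1) * c t) * (b - β' + t ^ (m + 1) * c t))))
    (by fun_prop) (by fun_prop) (by
      filter_upwards [H.E1, hcd, (tendsto_qmul q).eventually hcd] with t h1 h2 h3
      have e1 : g t * f t - t ^ 2 =
          t ^ (m + 3) * (b * d t + b⁻¹ * c t + t ^ (m + 1) * (c t * d t)) := by
        rw [h2.1, h2.2]; field_simp; ring
      have e2 : g t * f (q * t) - q * t ^ 2 = t ^ (m + 3) * (b * q ^ (m + 2) * d (q * t) +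
          q * b⁻¹ * c t + t ^ (m + 1) * q ^ (m + 2) * (c t * d (q * t))) := by
        rw [h2.1, h3.2]; field_simp; ring
      have e3 : g t - b * t = t ^ (m + 2) * c t := by rw [h2.1]; ring
      have e4 : g t - β * t = t * (b - β + t ^ (m + 1) * c t) := by rw [h2.1]; ring
      have e5 : g t - β' * t = t * (b - β' + t ^ (m + 1) * c t) := by rw [h2.1]; ring
      rw [e1, e2, e3, e4, e5] at h1
      linear_combination h1)
  simp [H.g0, H.R1] at this
  have hB : B = b ^ 2 * (β * β') / q := by rw [eq_div_iff q0]; linear_combination H.hB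
  rw [hB] at this
  field_simp at this
  refine mul_left_cancel₀ q0 ?_
  linear_combination this

/-- The leading coefficient of the second relation for a deviation from the linear solution. -/
theorem lead2 (H : Dev q b β β' B R₁ R₂ g f) (hc : AnalyticAt ℂ c 0) (hd : AnalyticAt ℂ d 0)
    (hcd : ∀ᶠ t in 𝓝 0, g t = b * t + t ^ (m + 2) * c t ∧ f t = b⁻¹ * t + t ^ (m + 2) * d t) :
    (b ^ 2 * d 0 + c 0) * (q ^ (m + 1) * (b ^ 2 * d 0) + c 0) * b ^ 2 =
      q ^ (m + 1) * (b ^ 2 * d 0) ^ 2 * ((b - β) * (b - β')) := by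
  have b0 := H.b0
  have q0 := H.q0
  have β0 := H.β0
  have hβ' := H.hβ'
  have k1 := hc.continuousAt
  have k2 := hd.continuousAt
  have k3 : ContinuousAt d (q * 0) := by rwa [mul_zero]
  have k3' : ContinuousAt c (q * 0) := by rwa [mul_zero]
  have k4 := H.hg.continuousAt
  have k5 := H.hf.continuousAt
  have k6 : ContinuousAt f (q * 0) := by rwa [mul_zero]
  have k6' : ContinuousAt g (q * 0) := by rwa [mul_zero]
  have k7 : ContinuousAt R₂ (f (q * 0)) := by rw [mul_zero, H.f0]; exact H.c2
  have := eq_at_zero (2 * m + 6)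
    (P := fun t =>
      (b * q ^ (m + 2) * d (q * t) + q * b⁻¹ * c t + t ^ (m + 1) * q ^ (m + 2) * (c t * d (q * t)))
      * (q ^ (m + 3) * (b * d (q * t) + b⁻¹ * c (q * t) +
        (q * t) ^ (m + 1) * (c (q * t) * d (q * t)))) * R₂ (f (q * t)))
    (Q := fun t => (g t * f (q * t) - 1) * (g (q * t) * f (q * t) - 1) *
      ((q ^ (m + 2) * d (q * t)) ^ 2 * (q ^ 2 *
      ((b⁻¹ - β⁻¹ + (q * t) ^ (m + 1) * d (q * t)) *
        (b⁻¹ - β'⁻¹ + (q * t) ^ (m + 1) * d (q * t))))))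
    (by fun_prop) (by fun_prop) (by
      filter_upwards [H.E2, hcd, (tendsto_qmul q).eventually hcd] with t h1 h2 h3
      have e1 : g (q * t) * f (q * t) - (q * t) ^ 2 =
          t ^ (m + 3) * (q ^ (m + 3) * (b * d (q * t) + b⁻¹ * c (q * t) +
        (q * t) ^ (m + 1) * (c (q * t) * d (q * t)))) := by
        rw [h3.1, h3.2]; field_simp; ring
      have e2 : g t * f (q * t) - q * t ^ 2 = t ^ (m + 3) * (b * q ^ (m + 2) * d (q * t) +
          q * b⁻¹ * c t + t ^ (m + 1) * q ^ (m + 2) * (c t * d (q * t))) := by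
        rw [h2.1, h3.2]; field_simp; ring
      have e3 : f (q * t) - b⁻¹ * (q * t) = t ^ (m + 2) * (q ^ (m + 2) * d (q * t)) := by
        rw [h3.2]; ring
      have e4 : f (q * t) - β⁻¹ * (q * t) =
          t * (q * (b⁻¹ - β⁻¹ + (q * t) ^ (m + 1) * d (q * t))) := by rw [h3.2]; ring
      have e5 : f (q * t) - β'⁻¹ * (q * t) =
          t * (q * (b⁻¹ - β'⁻¹ + (q * t) ^ (m + 1) * d (q * t))) := by rw [h3.2]; ring
      rw [e1, e2, e3, e4, e5] at h1
      linear_combination h1)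
  simp [H.g0, H.f0, H.R2] at this
  have hB : B = b ^ 2 * (β * β') / q := by rw [eq_div_iff q0]; linear_combination H.hB
  rw [hB] at this
  field_simp at this
  have hqq : q ^ (m + 4) ≠ 0 := pow_ne_zero _ q0
  refine mul_left_cancel₀ hqq ?_
  linear_combination b ^ 2 * this

/-- If `b` differs from `β` and `β'`, the two leading-order equations determine
`β / β' = q ^ (± (m + 1))`. -/
theorem double (H : Dev q b β β' B R₁ R₂ g f) (hc : AnalyticAt ℂ c 0) (hd : AnalyticAt ℂ d 0)
    (hne : ¬ (c 0 = 0 ∧ d 0 = 0)) (h1 : b - β ≠ 0) (h2 : b - β' ≠ 0)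
    (hcd : ∀ᶠ t in 𝓝 0, g t = b * t + t ^ (m + 2) * c t ∧ f t = b⁻¹ * t + t ^ (m + 2) * d t) :
    ∃ n : ℤ, q ^ n = β / β' := by
  have e1 := H.lead1 hc hd hcd
  have e2 := H.lead2 hc hd hcd
  have b0 := H.b0
  have β0 := H.β0
  have hβ' := H.hβ'
  have hQ0 : q ^ (m + 1) ≠ 0 := pow_ne_zero _ H.q0
  obtain ⟨Q, hQ⟩ : ∃ Q, q ^ (m + 1) = Q := ⟨_, rfl⟩
  have hD0 : d 0 = 0 ↔ b ^ 2 * d 0 = 0 := by simp [b0]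
  rw [hD0] at hne
  rw [hQ] at e1 e2 hQ0
  generalize b ^ 2 * d 0 = D at *
  generalize c 0 = C at *
  have e3 : C ^ 2 * b ^ 2 = Q * D ^ 2 * (β * β') := by
    refine mul_left_cancel₀ (mul_ne_zero h1 h2) ?_
    linear_combination (β * β') * e2 - b ^ 2 * e1
  have hC : C ≠ 0 := by
    rintro rfl
    apply hne
    have : D = 0 := by simpa [hQ0, β0, hβ'] using e3.symm
    exact ⟨rfl, this⟩
  have hD : D ≠ 0 := by
    rintro rfl
    have : C = 0 := by simpa [b0] using e3
    exact hC this
  have e4 : β * β' * (1 + Q) * D = -(C * b * (β + β')) := by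
    refine mul_left_cancel₀ hC ?_
    linear_combination e1 + e3
  have e5 : (β - Q * β') * (β' - Q * β) = 0 := by
    have : (β * β' * D ^ 2) * ((β - Q * β') * (β' - Q * β)) = 0 := by
      linear_combination (β * β' * (1 + Q) * D - (C * b * (β + β'))) * e4 + (β + β') ^ 2 * e3
    exact (mul_eq_zero.1 this).resolve_left
      (mul_ne_zero (mul_ne_zero β0 hβ') (pow_ne_zero 2 hD))
  rcases mul_eq_zero.1 e5 with h | h
  · refine ⟨(m + 1 : ℕ), ?_⟩
    rw [zpow_natCast, hQ, eq_div_iff hβ']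
    linear_combination -h
  · refine ⟨-(m + 1 : ℕ), ?_⟩
    rw [zpow_neg, zpow_natCast, hQ, eq_div_iff hβ', inv_mul_eq_iff_eq_mul₀ hQ0]
    linear_combination h

/-- If `b = β'`, the leading-order equations of `lead1` only give one of the factors
`g f - t²` and `g f̄ - q t²` a higher order of vanishing. Let `N` be the order of `g f - t²`.
Eliminating the common factor `g f̄ - q t²` from the two relations, the next comparison expresses
`β / b` by a power of `q`. -/
theorem triple (H : Dev q b β b B R₁ R₂ g f) (hc : AnalyticAt ℂ c 0) (hd : AnalyticAt ℂ d 0)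
    (hne : ¬ (c 0 = 0 ∧ d 0 = 0)) (h1 : b - β ≠ 0)
    (hcd : ∀ᶠ t in 𝓝 0, g t = b * t + t ^ (m + 2) * c t ∧ f t = b⁻¹ * t + t ^ (m + 2) * d t) :
    ∃ n : ℤ, q ^ n = β / b := by
  have e1 := H.lead1 hc hd hcd
  have b0 := H.b0
  have q0 := H.q0
  have β0 := H.β0
  have hB0 : B ≠ 0 := by
    intro h; have := H.hB; simp [h, b0, β0] at this
  have hD0 : d 0 = 0 ↔ b ^ 2 * d 0 = 0 := by simp [b0]
  have e1' : (b ^ 2 * d 0 + c 0) * (q ^ (m + 1) * (b ^ 2 * d 0) + c 0) = 0 := by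
    rw [sub_self, mul_zero, mul_zero] at e1
    simpa [β0, b0] using e1
  have hQ0 : q ^ (m + 1) ≠ 0 := pow_ne_zero _ H.q0
  have hcne : c 0 ≠ 0 := by
    intro h
    apply hne
    refine ⟨h, ?_⟩
    rw [h] at e1'
    simpa [b0, hQ0, q0] using e1'
  have k1 := hc.continuousAt
  have k2 := hd.continuousAt
  have k3 : ContinuousAt d (q * 0) := by rwa [mul_zero]
  have k3' : ContinuousAt c (q * 0) := by rwa [mul_zero]
  have k4 := H.hg.continuousAt
  have k5 := H.hf.continuousAt
  have k6 : ContinuousAt f (q * 0) := by rwa [mul_zero]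
  have k6' : ContinuousAt g (q * 0) := by rwa [mul_zero]
  have k7 : ContinuousAt R₁ (g 0) := by rw [H.g0]; exact H.c1
  have k8 : ContinuousAt R₂ (f (q * 0)) := by rw [mul_zero, H.f0]; exact H.c2
  have hX : AnalyticAt ℂ (fun t => g t * f t - t ^ 2) 0 :=
    (H.hg.mul H.hf).sub (analyticAt_id.pow 2)
  -- `g f - t²` has a finite order `N`, for otherwise the right-hand side of the first relation,
  -- which has exact order `3 m + 7`, would vanish
  obtain ⟨N, X, hXa, hX0, hXe⟩ := hX.exists_eventuallyEq_pow_smul_nonzero_iff.2 (by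
    intro h
    have := eq_at_zero (3 * m + 7) (P := fun t => 0)
      (Q := fun t => (g t * f t - 1) * (g t * f (q * t) - 1) *
        (c t ^ 3 * (b - β + t ^ (m + 1) * c t)))
      (by fun_prop) (by fun_prop) (by
        filter_upwards [H.E1, hcd, h] with t h1 h2 h3
        have e3 : g t - b * t = t ^ (m + 2) * c t := by rw [h2.1]; ring
        have e4 : g t - β * t = t * (b - β + t ^ (m + 1) * c t) := by rw [h2.1]; ring
        rw [h3, e3, e4] at h1
        linear_combination h1)
    simp [H.g0, hcne, h1] at this)
  have kX := hXa.continuousAt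
  have kX' : ContinuousAt X (q * 0) := by rwa [mul_zero]
  simp only [sub_zero, smul_eq_mul] at hXe
  have key := eq_at_zero (3 * m + 7 + N)
    (P := fun t => (g t * f t - 1) * (g t * f (q * t) - 1) *
        (c t ^ 3 * (b - β + t ^ (m + 1) * c t)) * (q ^ N * X (q * t)) * R₂ (f (q * t)))
    (Q := fun t => (g t * f (q * t) - 1) * (g (q * t) * f (q * t) - 1) *
      ((q ^ (m + 2) * d (q * t)) ^ 3 * (q *
      (b⁻¹ - β⁻¹ + (q * t) ^ (m + 1) * d (q * t)))) * X t * R₁ (g t))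
    (by fun_prop) (by fun_prop) (by
      filter_upwards [H.E1, H.E2, hcd, (tendsto_qmul q).eventually hcd, hXe,
        (tendsto_qmul q).eventually hXe] with t f1 f2 h2 h3 x1 x2
      have e3 : g t - b * t = t ^ (m + 2) * c t := by rw [h2.1]; ring
      have e4 : g t - β * t = t * (b - β + t ^ (m + 1) * c t) := by rw [h2.1]; ring
      have e3' : f (q * t) - b⁻¹ * (q * t) = t ^ (m + 2) * (q ^ (m + 2) * d (q * t)) := by
        rw [h3.2]; ring
      have e4' : f (q * t) - β⁻¹ * (q * t) =
          t * (q * (b⁻¹ - β⁻¹ + (q * t) ^ (m + 1) * d (q * t))) := by rw [h3.2]; ring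
      rw [e3, e4, x1] at f1
      rw [e3', e4', x2] at f2
      linear_combination (t ^ N * X t * R₁ (g t)) * f2 - ((q * t) ^ N * X (q * t) *
        R₂ (f (q * t))) * f1)
  simp [H.g0, H.f0, H.R1, H.R2] at key
  have hB : B = b ^ 2 * (β * b) / q := by rw [eq_div_iff q0]; linear_combination H.hB
  have key2 : q ^ (N + 2) * c 0 ^ 3 * b = -(q ^ (3 * m + 7) * (b ^ 2 * d 0) ^ 3 * β) := by
    rw [hB] at key
    field_simp at key
    refine mul_left_cancel₀ h1 ?_
    linear_combination (b * q) * key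
  have hD : b ^ 2 * d 0 ≠ 0 := by
    intro h
    rw [h] at e1'
    simp [hcne] at e1'
  rcases mul_eq_zero.1 e1' with h | h
  · refine ⟨(N + 2 : ℕ) - (3 * m + 7 : ℕ), ?_⟩
    rw [zpow_sub₀ q0, zpow_natCast, zpow_natCast, div_eq_div_iff (pow_ne_zero _ q0) b0]
    have hc0 : c 0 = -(b ^ 2 * d 0) := by linear_combination h
    rw [hc0] at key2
    refine mul_left_cancel₀ (pow_ne_zero 3 hD) ?_
    linear_combination -key2
  · refine ⟨(N + 2 + 3 * (m + 1) : ℕ) - (3 * m + 7 : ℕ), ?_⟩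
    rw [zpow_sub₀ q0, zpow_natCast, zpow_natCast, div_eq_div_iff (pow_ne_zero _ q0) b0]
    have hc0 : c 0 = -(q ^ (m + 1) * (b ^ 2 * d 0)) := by linear_combination h
    rw [hc0] at key2
    refine mul_left_cancel₀ (pow_ne_zero 3 hD) ?_
    linear_combination -key2

theorem swap (H : Dev q b β β' B R₁ R₂ g f) : Dev q b β' β B R₁ R₂ g f :=
  { H with
    β0 := H.hβ'
    hβ' := H.β0
    hB := by rw [H.hB]; ring
    E1 := by filter_upwards [H.E1] with t h; rw [h]; ring
    E2 := by filter_upwards [H.E2] with t h; rw [h]; ring }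

/-- Rigidity: if `β / β'` is not a power of `q`, a solution with the first-order terms of the linear
solution `g = b t`, `f = b⁻¹ t` coincides with it. -/
theorem rigid (H : Dev q b β β' B R₁ R₂ g f) (dg : deriv g 0 = b) (df : deriv f 0 = b⁻¹)
    (hlam : ∀ n : ℤ, q ^ n ≠ β / β') : ∀ᶠ t in 𝓝 0, g t = b * t ∧ f t = b⁻¹ * t := by
  by_contra hne
  obtain ⟨m, c, d, hc, hd, h0, hcd⟩ := pair_order H.hg H.hf H.g0 H.f0 dg df hne
  have hββ : β ≠ β' := by
    rintro rfl
    exact hlam 0 (by simp [div_self H.β0])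
  by_cases h1 : b = β'
  · subst h1
    obtain ⟨n, hn⟩ := H.triple hc hd h0 (sub_ne_zero.2 hββ.symm) hcd
    exact hlam n hn
  by_cases h2 : b = β
  · subst h2
    obtain ⟨n, hn⟩ := H.swap.triple hc hd h0 (sub_ne_zero.2 hββ) hcd
    exact hlam (-n) (by rw [zpow_neg, hn, inv_div])
  obtain ⟨n, hn⟩ := H.double hc hd h0 (sub_ne_zero.2 h2) (sub_ne_zero.2 h1) hcd
  exact hlam n hn

end Dev

/-! ### Lifting the base curve to the blown-up coordinates -/

/-- Division by `t` of an analytic function vanishing at `0`. -/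
theorem fac {f : ℂ → ℂ} (hf : AnalyticAt ℂ f 0) (f0 : f 0 = 0) :
    ∃ G : ℂ → ℂ, AnalyticAt ℂ G 0 ∧ G 0 = deriv f 0 ∧ ∀ t, f t = t * G t := by
  obtain ⟨p, hp⟩ := hf
  refine ⟨dslope f 0, ⟨_, hp.has_fpower_series_dslope_fslope⟩, dslope_same f 0, fun t => ?_⟩
  have := sub_smul_dslope f 0 t
  simp [f0] at this
  exact this.symm

namespace HStep
variable {S T : HStep} {q : ℂ}

/-- Lift of a given solution when its slopes avoid all exceptional lines: then `a₀` is the quotient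
of `f + k (g - (β₁ + β₂) t)`, which vanishes to second order, by `(g - β₁ t) (g - β₂ t)`. -/
theorem Link.base_nondeg (hL : Link S T q) (q0 : q ≠ 0) {gh fh : ℂ → ℂ} {g1 f1 : ℂ}
    (hg : AnalyticAt ℂ gh 0) (hf : AnalyticAt ℂ fh 0) (gh0 : gh 0 = 0) (fh0 : fh 0 = 0)
    (dg : deriv gh 0 = g1) (df : deriv fh 0 = f1) (hg1 : g1 ≠ 0) (hf1 : f1 ≠ 0)
    (hfg : f1 = -S.k * (g1 - (S.β₁ + S.β₂)))
    (h1 : g1 - S.β₁ ≠ 0) (h2 : g1 - S.β₂ ≠ 0) (h3 : g1 - S.β₃ ≠ 0) (h4 : g1 - S.β₄ ≠ 0)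
    (k1 : q * f1 - T.β₁ ≠ 0) (k2 : q * f1 - T.β₂ ≠ 0)
    (k3 : q * f1 - T.β₃ ≠ 0) (k4 : q * f1 - T.β₄ ≠ 0)
    (hrel : ∀ᶠ t in 𝓝 0, S.Rel t (gh t) (fh t) (fh (q * t)) ∧
      T.Rel t (fh (q * t)) (gh t) (gh (q * t))) :
    ∃ a0 : ℂ → ℂ, AnalyticAt ℂ a0 0 ∧ (∀ᶠ t in 𝓝 0, fh t = S.w (t, (gh t, a0 t))) ∧
      ∀ᶠ t in 𝓝 0, full S T (t, (gh t, a0 t)) = (gh (q * t), a0 (q * t)) := by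
  obtain ⟨G, aG, G0, hG⟩ := fac hg gh0
  obtain ⟨F, aF, F0, hF⟩ := fac hf fh0
  rw [dg] at G0
  rw [df] at F0
  obtain ⟨K, aK, -, hK⟩ := fac (f := fun t => F t + S.k * (G t - (S.β₁ + S.β₂))) (by fun_prop)
    (by rw [F0, G0, hfg]; ring)
  have cG := aG.continuousAt
  have cF : ContinuousAt (fun t => F (q * t)) 0 := cont_qmul q aF.continuousAt
  have cG' : ContinuousAt (fun t => G (q * t)) 0 := cont_qmul q aG.continuousAt
  have n1 : ∀ᶠ t in 𝓝 0, G t - S.β₁ ≠ 0 :=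
    (cG.sub continuousAt_const).eventually_ne (by simpa [G0] using h1)
  have n2 : ∀ᶠ t in 𝓝 0, G t - S.β₂ ≠ 0 :=
    (cG.sub continuousAt_const).eventually_ne (by simpa [G0] using h2)
  have n3 : ∀ᶠ t in 𝓝 0, G t - S.β₃ ≠ 0 :=
    (cG.sub continuousAt_const).eventually_ne (by simpa [G0] using h3)
  have n4 : ∀ᶠ t in 𝓝 0, G t - S.β₄ ≠ 0 :=
    (cG.sub continuousAt_const).eventually_ne (by simpa [G0] using h4)
  have n0 : ∀ᶠ t in 𝓝 0, G t ≠ 0 := cG.eventually_ne (by simpa [G0] using hg1)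
  have hqF : ∀ β, q * f1 - β ≠ 0 → ∀ᶠ t in 𝓝 0, q * F (q * t) - β ≠ 0 := fun β hβ =>
    ((continuousAt_const.mul cF).sub continuousAt_const).eventually_ne (by simpa [F0] using hβ)
  have m0 := hqF 0 (by simpa using ⟨q0, hf1⟩)
  let a0 : ℂ → ℂ := fun t => K t / ((G t - S.β₁) * (G t - S.β₂))
  have aa : AnalyticAt ℂ a0 0 := aK.div ((aG.sub analyticAt_const).mul (aG.sub analyticAt_const))
    (by rw [G0]; exact mul_ne_zero h1 h2)
  have hw : ∀ᶠ t in 𝓝 0, S.w (t, (gh t, a0 t)) = fh t := by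
    filter_upwards [n1, n2] with t t1 t2
    have e := hK t
    simp only [w, a0, hG t, hF t]
    have e2 : (t * G t - S.β₁ * t) * (t * G t - S.β₂ * t) * (K t / ((G t - S.β₁) * (G t - S.β₂)))
        = t * (t * K t) := by field_simp
    rw [e2, ← e]
    ring
  refine ⟨a0, aa, hw.mono fun t ht => ht.symm, ?_⟩
  have hcurve : AnalyticAt ℂ (fun t : ℂ => (t, (gh t, a0 t))) 0 :=
    analyticAt_id.prod (hg.prod aa)
  have hok := hcurve.continuousAt.eventually (p := fun p => S.Ok p ∧ T.Ok (S.mid p))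
    (by simpa [gh0] using ok_full_nhds hL.hS hL.hT (a0 0))
  have l1 : AnalyticAt ℂ (fun t => full S T (t, (gh t, a0 t))) 0 :=
    AnalyticAt.comp (g := full S T) (f := fun t : ℂ => (t, (gh t, a0 t)))
      (by simpa [gh0] using an_full_zero hL.hS hL.hT (a0 0)) hcurve
  have aq : AnalyticAt ℂ (fun t : ℂ => q * t) 0 := analyticAt_const.mul analyticAt_id
  have l2 : AnalyticAt ℂ (fun t => (gh (q * t), a0 (q * t))) 0 :=
    (AnalyticAt.comp (g := gh) (f := fun t => q * t) (by simpa using hg) aq).prod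
      (AnalyticAt.comp (g := a0) (f := fun t => q * t) (by simpa using aa) aq)
  refine (l1.frequently_eq_iff_eventually_eq l2).1 (Eventually.frequently ?_)
  have hmain : ∀ᶠ t in 𝓝 (0 : ℂ), t ≠ 0 →
      full S T (t, (gh t, a0 t)) = (gh (q * t), a0 (q * t)) := by
    filter_upwards [hok, n0, n1, n2, n3, n4, m0, hqF _ k1, hqF _ k2, hqF _ k3, hqF _ k4, hw,
      (tendsto_qmul q).eventually hw, (tendsto_qmul q).eventually n1,
      (tendsto_qmul q).eventually n2, hrel]
      with t ok t0 t1 t2 t3 t4 s0 s1 s2 s3 s4 hw1 hw2 p1 p2 hr ht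
    have key : ∀ x β y : ℂ, x - β ≠ 0 → y ≠ 0 → y * x - β * y ≠ 0 := by
      intro x β y hx hy
      have : y * x - β * y = y * (x - β) := by ring
      rw [this]
      exact mul_ne_zero hy hx
    have key2 : ∀ β : ℂ, q * F (q * t) - β ≠ 0 → q * t * F (q * t) - β * t ≠ 0 := by
      intro β hβ
      have := key _ β t hβ ht
      convert this using 2
      ring
    have hqt : q * t ≠ 0 := mul_ne_zero q0 ht
    refine hL.uniq_full (v := fh (q * t)) ok.1 ok.2 ?_ ?_ ?_ ?_ ?_ ?_ ?_ ?_ ?_ ?_ ?_ ?_ ?_ hr.2 hw2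
    · rw [hG]; exact mul_ne_zero ht t0
    · rw [hF]
      have := key2 0 s0
      simpa using this
    · rw [hG]; exact key _ _ _ t1 ht
    · rw [hG]; exact key _ _ _ t2 ht
    · rw [hG]; exact key _ _ _ t3 ht
    · rw [hG]; exact key _ _ _ t4 ht
    · rw [hF]; exact key2 _ s1
    · rw [hF]; exact key2 _ s2
    · rw [hF]; exact key2 _ s3
    · rw [hF]; exact key2 _ s4
    · rw [hG]; exact key _ _ _ p1 hqt
    · rw [hG]; exact key _ _ _ p2 hqt
    · rw [hw1]; exact hr.1
  filter_upwards [hmain.filter_mono nhdsWithin_le_nhds, self_mem_nhdsWithin] with t h1 h2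
  exact h1 h2

/-- Lift of the linear solution `z = β₁ t` when `β₁ = β₃`. This line is invariant, whatever the value of
`a`. The induced map `(t, a) ↦ (q t, a₁)` has a fixed point on `t = 0`, with multiplier `μ⁻¹`
along `a`, and `a₀` is its stable curve, on which the dynamics is `t ↦ q t`. -/
theorem Link.base_deg (hL : Link S T q) (q0 : q ≠ 0) (hq : ‖q‖ < 1) (hμ : ‖S.k' * T.k'‖ < 1)
    (hμ1 : S.k' * T.k' ≠ 1)
    (h13 : S.β₁ = S.β₃) (b0 : S.β₁ ≠ 0) (hσ : S.k' * S.β₃ * S.β₄ = q * (S.k * S.β₁ * S.β₂)) :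
    ∃ a0 : ℂ → ℂ, AnalyticAt ℂ a0 0 ∧
      ∀ᶠ t in 𝓝 0, full S T (t, (S.β₁ * t, a0 t)) = (S.β₁ * (q * t), a0 (q * t)) := by
  obtain ⟨e, he⟩ := hL.full_zero_snd
  have hμ0 : S.k' * T.k' ≠ 0 := mul_ne_zero hL.hS.hk' hL.hT.hk'
  have hkk := hL.hS.hk
  obtain ⟨μ, hμe⟩ : ∃ μ, S.k' * T.k' = μ := ⟨_, rfl⟩
  rw [hμe] at hμ hμ0 hμ1
  simp only [hμe] at he
  obtain ⟨a, ha⟩ : ∃ a, μ⁻¹ * a + e = a := by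
    have : μ - 1 ≠ 0 := sub_ne_zero.2 hμ1
    exact ⟨μ * e / (μ - 1), by field_simp; ring⟩
  have hfst : ∀ t c, (full S T (t, (S.β₁ * t, c))).1 = S.β₁ * (q * t) := by
    intro t c
    have e1 : S.k' * S.β₄ = q * (S.k * S.β₂) := by
      rw [← h13] at hσ
      refine mul_left_cancel₀ b0 ?_
      linear_combination hσ
    have e2 : T.β₃ = S.k' * S.β₄ := by
      have h3 := hL.h3
      rw [hL.hk'] at h3
      rw [e1]
      field_simp at h3
      linear_combination h3
    have e3 : S.w' (t, (S.β₁ * t, c)) = S.k' * S.β₄ * t := by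
      simp only [w']; rw [← h13]; ring
    simp only [full, mid]
    rw [e3]
    simp only [w']
    rw [e2]
    linear_combination t * hL.h4
  -- the role of the contracted variable is played by `t` itself, and the parameter of `stable_lin`
  -- is not used
  let N2 : ℂ × (ℂ × ℂ) → ℂ := fun p =>
    (full S T (p.2.1, (S.β₁ * p.2.1, a + p.2.2))).2 - a
  have aN1 : AnalyticAt ℂ (fun p : ℂ × (ℂ × ℂ) => q * p.2.1) 0 := analyticAt_const.mul (an2 0)
  have aN2 : AnalyticAt ℂ N2 0 := by
    refine AnalyticAt.sub (AnalyticAt.comp (g := Prod.snd) analyticAt_snd ?_) analyticAt_const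
    refine AnalyticAt.comp (g := full S T)
      (f := fun p : ℂ × (ℂ × ℂ) => (p.2.1, (S.β₁ * p.2.1, a + p.2.2))) ?_
      ((an2 0).prod ((analyticAt_const.mul (an2 0)).prod (analyticAt_const.add (an3 0))))
    simpa using an_full_zero hL.hS hL.hT a
  obtain ⟨r, hr, u, η, au, aη, u0, h⟩ := stable_lin (q := q) (μ := q) (κ := μ) 1 hq q0 hq hμ0
    (by rw [norm_mul]; nlinarith [norm_nonneg μ, norm_nonneg q]) aN1 aN2
    (by simp) (by simp [N2, he, ha])
    (by
      refine fderiv_line aN1.differentiableAt ?_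
      simpa using (hasDerivAt_id (0 : ℂ)).const_mul q)
    (by
      refine fderiv_line aN1.differentiableAt ?_
      simpa using hasDerivAt_const (0 : ℂ) (0 : ℂ))
    (by
      refine fderiv_line aN2.differentiableAt ?_
      have : (fun s : ℂ => N2 (s • (0, (0, 1)))) = fun s => μ⁻¹ * s := by
        ext s
        simp [N2, he]
        linear_combination ha
      rw [this]
      simpa using (hasDerivAt_id (0 : ℂ)).const_mul μ⁻¹)
  have hm : ∀ {z : ℂ}, ‖z‖ < r → ((0 : ℂ), z) ∈ ball (0 : ℂ × ℂ) r := by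
    intro z hz
    simpa [Prod.norm_def, hr] using hz
  have hlt : ∀ {z : ℂ}, ‖z‖ < r → ‖q * z‖ < r := by
    intro z hz
    rw [norm_mul]
    nlinarith [norm_nonneg z]
  -- `u` is invariant under `z ↦ q z` and vanishes at `0`, so the parameter is exactly `t`
  have step : ∀ z : ℂ, ‖z‖ < r → u (0, q * z) = u (0, z) := by
    intro z hz
    by_cases hz0 : z = 0
    · simp [hz0]
    have := (h (0, z) (hm hz)).1
    simp [lsig] at this
    have hqz : q * z ≠ 0 := mul_ne_zero q0 hz0
    have h2 : (q * z) * (1 + u (0, q * z)) = (q * z) * (1 + u (0, z)) := by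
      linear_combination this
    exact add_left_cancel (mul_left_cancel₀ hqz h2)
  have hu : ∀ z : ℂ, ‖z‖ < r → u (0, z) = 0 := by
    intro z hz
    have hit : ∀ n : ℕ, ‖q ^ n * z‖ < r ∧ u (0, q ^ n * z) = u (0, z) := by
      intro n
      induction n with
      | zero => simpa using hz
      | succ n ih =>
        have e : q ^ (n + 1) * z = q * (q ^ n * z) := by ring
        rw [e, step _ ih.1]
        exact ⟨hlt ih.1, ih.2⟩
    have t1 : Tendsto (fun n : ℕ => ((0 : ℂ), q ^ n * z)) atTop (𝓝 0) := by
      have := (tendsto_pow_atTop_nhds_zero_of_norm_lt_one hq).mul_const z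
      rw [zero_mul] at this
      exact tendsto_const_nhds.prodMk_nhds this
    have t2 := (au 0 (mem_ball_self hr)).continuousAt.tendsto.comp t1
    rw [u0] at t2
    refine tendsto_nhds_unique (tendsto_const_nhds (f := atTop (α := ℕ))) (t2.congr fun n => ?_)
    exact (hit n).2
  have aη0 : AnalyticAt ℂ (fun t : ℂ => η (0, t)) 0 :=
    AnalyticAt.comp (g := η) (f := fun t : ℂ => ((0 : ℂ), t)) (aη 0 (mem_ball_self hr))
      (analyticAt_const.prod analyticAt_id)
  refine ⟨fun t => a + t * η (0, t), analyticAt_const.add (analyticAt_id.mul aη0), ?_⟩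
  filter_upwards [ball_mem_nhds (0 : ℂ) hr] with t ht
  have ht : ‖t‖ < r := by simpa using ht
  refine Prod.ext (hfst _ _) ?_
  have := (h (0, t) (hm ht)).2
  simp [lsig, N2, hu t ht] at this
  simp only
  linear_combination -this

end HStep

/-! ### The q-P(A₁) system -/

noncomputable section

section core
variable (b5 b6 b7 b8 bi bj bk bl q : ℂ)

/-- The half step `(g, f) ↦ (g, f̄)` of relation (E1). -/
def stepS : HStep where
  β₁ := bi
  β₂ := bj
  β₃ := bk
  β₄ := bl
  k := (bi * bj)⁻¹
  k' := q / (bk * bl)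
  ρ₁ := b5
  ρ₂ := b6
  ρ₃ := b7
  ρ₄ := b8

/-- The half step `(f̄, g) ↦ (f̄, ḡ)` of relation (E2). -/
def stepT : HStep where
  β₁ := q / bk
  β₂ := q / bl
  β₃ := q / bi
  β₄ := q / bj
  k := bk * bl / q
  k' := bi * bj
  ρ₁ := b5⁻¹
  ρ₂ := b6⁻¹
  ρ₃ := b7⁻¹
  ρ₄ := b8⁻¹

variable {b5 b6 b7 b8 bi bj bk bl q}

theorem link (h5 : b5 ≠ 0) (h6 : b6 ≠ 0) (h7 : b7 ≠ 0) (h8 : b8 ≠ 0) (hi : bi ≠ 0) (hj : bj ≠ 0)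
    (hk : bk ≠ 0) (hl : bl ≠ 0) (hq : q = bi * bj * bk * bl / (b5 * b6 * b7 * b8)) :
    (stepS b5 b6 b7 b8 bi bj bk bl q).Link (stepT b5 b6 b7 b8 bi bj bk bl q) q := by
  have q0 : q ≠ 0 := by rw [hq]; positivity
  constructor
  · constructor
    · simp [stepS, *]
    · simp [stepS, *]
    · simp only [stepS, hq]; field_simp
  · constructor
    · simp [stepT, *]
    · simp [stepT, *]
    · simp only [stepT, hq]; field_simp
  all_goals simp only [stepS, stepT]; field_simp

/-- The system is the conjunction of the two half-step relations, for any ordering of `b₁, …, b₄`. -/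
theorem qpSys_iff {b1 b2 b3 b4 t f g fb gb : ℂ} (hi : bi ≠ 0) (hj : bj ≠ 0)
    (hk : bk ≠ 0) (hl : bl ≠ 0) (q0 : q ≠ 0)
    (hφ : ∀ φ : ℂ → ℂ, φ bi * φ bj * φ bk * φ bl = φ b1 * φ b2 * φ b3 * φ b4) :
    qpSys b1 b2 b3 b4 b5 b6 b7 b8 q t f g fb gb ↔
      (stepS b5 b6 b7 b8 bi bj bk bl q).Rel t g f fb ∧
        (stepT b5 b6 b7 b8 bi bj bk bl q).Rel t fb g gb := by
  have p1 := hφ (fun b => g - b * t)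
  have p2 := hφ (fun b => fb - q * t / b)
  have s1 : (bi * bj)⁻¹ * bi * bj = 1 := by field_simp
  have s2 : q / (bk * bl) * bk * bl = q := by field_simp
  have s3 : bk * bl / q * (q / bk) * (q / bl) = q := by field_simp
  have s4 : bi * bj * (q / bi) * (q / bj) = q ^ 2 := by field_simp
  have d : ∀ b, q / b * t = q * t / b := fun b => by ring
  simp only [HStep.Rel, stepS, stepT, s1, s2, s3, s4, d]
  refine and_congr ⟨fun h => ?_, fun h => ?_⟩ ⟨fun h => ?_, fun h => ?_⟩
  · linear_combination h - (g * f - 1) * (g * fb - 1) * p1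
  · linear_combination h + (g * f - 1) * (g * fb - 1) * p1
  · linear_combination h - (g * fb - 1) * (gb * fb - 1) * p2
  · linear_combination h + (g * fb - 1) * (gb * fb - 1) * p2

/-- The result for an arrangement in general position, or with `bi = bk`; all other coincidences
reduce to the latter by the symmetries `i ↔ j` and `k ↔ l`. The coincidences `bi = bj` and `bk = bl`
need no separate treatment. -/
theorem core {b1 b2 b3 b4 P lam f1 g1 : ℂ} {fh gh : ℂ → ℂ}
    (h5 : b5 ≠ 0) (h6 : b6 ≠ 0) (h7 : b7 ≠ 0) (h8 : b8 ≠ 0) (hi : bi ≠ 0) (hj : bj ≠ 0)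
    (hk : bk ≠ 0) (hl : bl ≠ 0) (hq : q = b1 * b2 * b3 * b4 / (b5 * b6 * b7 * b8))
    (hφ : ∀ φ : ℂ → ℂ, φ bi * φ bj * φ bk * φ bl = φ b1 * φ b2 * φ b3 * φ b4)
    (hP : P = bi * bj) (hlam : lam = bi * bj / (bk * bl))
    (hf1 : f1 = (bi + bj - bk - bl) / (bi * bj - bk * bl))
    (hg1 : g1 = (bi * bj * (bk + bl) - bk * bl * (bi + bj)) / (bi * bj - bk * bl))
    (hqlt : ‖q‖ < 1) (hμ : ‖q * lam‖ < 1) (hpow : ∀ n : ℤ, q ^ n ≠ lam)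
    (hsum : bi + bj ≠ bk + bl) (hsuminv : bi⁻¹ + bj⁻¹ ≠ bk⁻¹ + bl⁻¹)
    (hf : AnalyticAt ℂ fh 0) (hg : AnalyticAt ℂ gh 0)
    (hf0 : fh 0 = 0) (hg0 : gh 0 = 0) (hdf : deriv fh 0 = f1) (hdg : deriv gh 0 = g1)
    (hsol : ∀ᶠ t in 𝓝 0,
      qpSys b1 b2 b3 b4 b5 b6 b7 b8 q t (fh t) (gh t) (fh (q * t)) (gh (q * t)))
    (hcase : ((bi ≠ bk ∧ bi ≠ bl) ∧ bj ≠ bk ∧ bj ≠ bl) ∨ bi = bk) :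
    ∃ r > (0 : ℝ), ∃ u v : ℂ × ℂ → ℂ,
      (∀ p : ℂ × ℂ, ‖p.1‖ < r → ‖p.2‖ < r → AnalyticAt ℂ u p ∧ AnalyticAt ℂ v p) ∧
      u (0, 0) = 0 ∧ v (0, 0) = 0 ∧
      (∀ t ζ1 : ℂ, ‖t‖ < r → ‖ζ1‖ < r → ‖q * lam * ζ1‖ < r →
        qpSys b1 b2 b3 b4 b5 b6 b7 b8 q t
          (fh t + ζ1 * (1 + u (t, ζ1)))
          (gh t + ζ1 * (-P + v (t, ζ1)))
          (fh (q * t) + (q * lam * ζ1) * (1 + u (q * t, q * lam * ζ1)))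
          (gh (q * t) + (q * lam * ζ1) * (-P + v (q * t, q * lam * ζ1)))) := by
  have hq' : q = bi * bj * bk * bl / (b5 * b6 * b7 * b8) := by
    rw [hq]
    congr 1
    exact (hφ id).symm
  have q0 : q ≠ 0 := by rw [hq']; positivity
  have hL := link h5 h6 h7 h8 hi hj hk hl hq'
  have hiff := fun t f g fb gb => qpSys_iff (b1 := b1) (b2 := b2) (b3 := b3) (b4 := b4) (b5 := b5)
    (b6 := b6) (b7 := b7) (b8 := b8) (t := t) (f := f) (g := g) (fb := fb) (gb := gb)
    hi hj hk hl q0 hφ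
  have hμe : (stepS b5 b6 b7 b8 bi bj bk bl q).k' * (stepT b5 b6 b7 b8 bi bj bk bl q).k' =
      q * lam := by
    simp only [stepS, stepT, hlam]; ring
  have hD : bi * bj - bk * bl ≠ 0 := by
    intro h
    apply hpow 0
    rw [hlam, zpow_zero, eq_div_iff (mul_ne_zero hk hl)]
    linear_combination -h
  have base : ∃ a0 : ℂ → ℂ, AnalyticAt ℂ a0 0 ∧
      (∀ᶠ t in 𝓝 0, fh t = (stepS b5 b6 b7 b8 bi bj bk bl q).w (t, (gh t, a0 t))) ∧
      ∀ᶠ t in 𝓝 0, HStep.full (stepS b5 b6 b7 b8 bi bj bk bl q)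
        (stepT b5 b6 b7 b8 bi bj bk bl q) (t, (gh t, a0 t)) = (gh (q * t), a0 (q * t)) := by
    rcases hcase with ⟨⟨n1, n2⟩, n3, n4⟩ | hik
    -- in general position the slopes `g1` and `q f1` avoid all exceptional lines
    · have s1 := sub_ne_zero.2 n1
      have s2 := sub_ne_zero.2 n2
      have s3 := sub_ne_zero.2 n3
      have s4 := sub_ne_zero.2 n4
      have ei : g1 - bi = -(bj * (bi - bk) * (bi - bl)) / (bi * bj - bk * bl) := by
        rw [hg1]; field_simp; ring
      have ej : g1 - bj = -(bi * (bj - bk) * (bj - bl)) / (bi * bj - bk * bl) := by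
        rw [hg1]; field_simp; ring
      have ek : g1 - bk = bl * (bi - bk) * (bj - bk) / (bi * bj - bk * bl) := by
        rw [hg1]; field_simp; ring
      have el : g1 - bl = bk * (bi - bl) * (bj - bl) / (bi * bj - bk * bl) := by
        rw [hg1]; field_simp; ring
      have zi : g1 - bi ≠ 0 := by
        rw [ei]; exact div_ne_zero (neg_ne_zero.2 (mul_ne_zero (mul_ne_zero hj s1) s2)) hD
      have zj : g1 - bj ≠ 0 := by
        rw [ej]; exact div_ne_zero (neg_ne_zero.2 (mul_ne_zero (mul_ne_zero hi s3) s4)) hD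
      have zk : g1 - bk ≠ 0 := by
        rw [ek]; exact div_ne_zero (mul_ne_zero (mul_ne_zero hl s1) s3) hD
      have zl : g1 - bl ≠ 0 := by
        rw [el]; exact div_ne_zero (mul_ne_zero (mul_ne_zero hk s2) s4) hD
      have wi : q * f1 - q / bi = -(q * (g1 - bi) / (bi * bj)) := by
        rw [hg1, hf1]; field_simp; ring
      have wj : q * f1 - q / bj = -(q * (g1 - bj) / (bi * bj)) := by
        rw [hg1, hf1]; field_simp; ring
      have wk : q * f1 - q / bk = -(q * (g1 - bk) / (bk * bl)) := by
        rw [hg1, hf1]; field_simp; ring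
      have wl : q * f1 - q / bl = -(q * (g1 - bl) / (bk * bl)) := by
        rw [hg1, hf1]; field_simp; ring
      refine hL.base_nondeg q0 (g1 := g1) (f1 := f1) hg hf hg0 hf0 hdg hdf ?_ ?_ ?_ zi zj zk zl
        ?_ ?_ ?_ ?_ (hsol.mono fun t ht => (hiff _ _ _ _ _).1 ht)
      · rw [hg1]
        refine div_ne_zero (fun h => hsuminv ?_) hD
        field_simp
        linear_combination -h
      · rw [hf1]
        refine div_ne_zero (fun h => hsum ?_) hD
        linear_combination h
      · simp only [stepS]
        rw [hg1, hf1]; field_simp; ring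
      · simp only [stepT]; rw [wk]; exact neg_ne_zero.2 (by positivity)
      · simp only [stepT]; rw [wl]; exact neg_ne_zero.2 (by positivity)
      · simp only [stepT]; rw [wi]; exact neg_ne_zero.2 (by positivity)
      · simp only [stepT]; rw [wj]; exact neg_ne_zero.2 (by positivity)
    -- in the degenerate case the given solution is the linear one
    · subst hik
      have hjl : bj - bl ≠ 0 := by
        intro h
        apply hD
        linear_combination bi * h
      have hD' : bi * (bj - bl) ≠ 0 := mul_ne_zero hi hjl
      have hg1' : g1 = bi := by
        rw [hg1, div_eq_iff hD]; ring
      have hf1' : f1 = bi⁻¹ := by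
        rw [hf1, div_eq_iff hD]; field_simp; ring
      have hdev : Dev q bi bj bl (b5 * b6 * b7 * b8)
          (fun z => (z - b5) * (z - b6) * (z - b7) * (z - b8))
          (fun z => (z - b5⁻¹) * (z - b6⁻¹) * (z - b7⁻¹) * (z - b8⁻¹)) gh fh := by
        refine ⟨q0, hi, hj, hl, ?_, by fun_prop, by fun_prop, by simp, by simp; ring,
          hg, hf, hg0, hf0, ?_, ?_⟩
        · rw [hq']; field_simp
        · filter_upwards [hsol] with t ht
          have h1 := ht.1
          have p1 := hφ (fun b => gh t - b * t)
          linear_combination h1 - (gh t * fh t - 1) * (gh t * fh (q * t) - 1) * p1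
        · filter_upwards [hsol] with t ht
          have h1 := ht.2
          have p1 := hφ (fun b => fh (q * t) - q * t / b)
          linear_combination h1 - (gh t * fh (q * t) - 1) * (gh (q * t) * fh (q * t) - 1) * p1
      have hrig := hdev.rigid (by rw [hdg, hg1']) (by rw [hdf, hf1']) (by
        intro n hn
        apply hpow n
        rw [hn, hlam, mul_div_mul_left _ _ hi])
      obtain ⟨a0, ha0, hfull⟩ := hL.base_deg q0 hqlt (by rw [hμe]; exact hμ) (by
        rw [hμe]
        intro h
        apply hpow (-1)
        rw [zpow_neg_one]
        exact inv_eq_of_mul_eq_one_right h) rfl hi (by simp only [stepS]; field_simp)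
      refine ⟨a0, ha0, ?_, ?_⟩
      · filter_upwards [hrig] with t ht
        rw [ht.1, ht.2]
        simp only [HStep.w, stepS]
        field_simp
        ring
      · filter_upwards [hrig, (tendsto_qmul q).eventually hrig, hfull] with t h1 h2 h3
        rw [h1.1, h2.1]
        exact h3
  obtain ⟨a0, ha0, hw, hfull⟩ := base
  obtain ⟨r1, hr1, u, v, au, av, u0, v0, F, G, hF, hG, hrel⟩ :=
    hL.extend hqlt (by rw [hμe]; exact hμ) hg ha0 hg0 hfull
  rw [hμe] at hrel
  obtain ⟨r2, hr2, hw2⟩ := Metric.eventually_nhds_iff_ball.1 hw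
  have hmem : ∀ {t ζ : ℂ}, ‖t‖ < min r1 r2 → ‖ζ‖ < min r1 r2 → (t, ζ) ∈ ball (0 : ℂ × ℂ) r1 := by
    intro t ζ h1 h2
    simpa [Prod.norm_def] using
      ⟨h1.trans_le (min_le_left _ _), h2.trans_le (min_le_left _ _)⟩
  have hF' : ∀ {t ζ : ℂ}, ‖t‖ < min r1 r2 → F (t, ζ) = fh t + ζ * (1 + u (t, ζ)) := by
    intro t ζ h1
    rw [hF, hw2 t (by simpa using h1.trans_le (min_le_right _ _))]
  have hG' : ∀ t ζ : ℂ, G (t, ζ) = gh t + ζ * (-P + v (t, ζ)) := by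
    intro t ζ
    rw [hG]
    simp [stepS, hP]
  refine ⟨min r1 r2, lt_min hr1 hr2, u, v, fun p h1 h2 => ⟨au p (hmem h1 h2), av p (hmem h1 h2)⟩,
    u0, v0, fun t ζ ht hζ hqζ => ?_⟩
  have hqt : ‖q * t‖ < min r1 r2 := by
    rw [norm_mul]
    nlinarith [norm_nonneg t]
  rw [← hF' ht, ← hF' hqt, ← hG', ← hG', hiff]
  exact hrel (t, ζ) (hmem ht hζ)

end core

theorem stmt7 (b1 b2 b3 b4 b5 b6 b7 b8 bi bj bk bl q lam f1 g1 : ℂ)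
    (hb1 : b1 ≠ 0) (hb2 : b2 ≠ 0) (hb3 : b3 ≠ 0) (hb4 : b4 ≠ 0)
    (hb5 : b5 ≠ 0) (hb6 : b6 ≠ 0) (hb7 : b7 ≠ 0) (hb8 : b8 ≠ 0)
    (hq : q = b1 * b2 * b3 * b4 / (b5 * b6 * b7 * b8))
    (hperm : ({bi, bj, bk, bl} : Multiset ℂ) = {b1, b2, b3, b4})
    (hlam : lam = bi * bj / (bk * bl))
    (hf1 : f1 = (bi + bj - bk - bl) / (bi * bj - bk * bl))
    (hg1 : g1 = (bi * bj * (bk + bl) - bk * bl * (bi + bj)) / (bi * bj - bk * bl))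
    (hqlt : ‖q‖ < 1) (hlamlt : ‖lam‖ < ‖q‖⁻¹)
    (hlamq : lam ∉ {x : ℂ | ∃ n : ℕ, 1 ≤ n ∧ q ^ n = x})
    (hlamcl : lam ∉ closure {x : ℂ | ∃ n : ℤ, q ^ n = x})
    (hsum : bi + bj ≠ bk + bl)
    (hsuminv : bi⁻¹ + bj⁻¹ ≠ bk⁻¹ + bl⁻¹)
    (fh gh : ℂ → ℂ) (ε : ℝ) (hε : 0 < ε)
    (hfhol : ∀ t : ℂ, ‖t‖ < ε → AnalyticAt ℂ fh t)
    (hghol : ∀ t : ℂ, ‖t‖ < ε → AnalyticAt ℂ gh t)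
    (hf0 : fh 0 = 0) (hg0 : gh 0 = 0)
    (hdf : deriv fh 0 = f1) (hdg : deriv gh 0 = g1)
    (hsol : ∀ t : ℂ, ‖t‖ < ε →
      qpSys b1 b2 b3 b4 b5 b6 b7 b8 q t (fh t) (gh t) (fh (q * t)) (gh (q * t))) :
    ∃ r > (0 : ℝ), ∃ u v : ℂ × ℂ → ℂ,
      (∀ p : ℂ × ℂ, ‖p.1‖ < r → ‖p.2‖ < r → AnalyticAt ℂ u p ∧ AnalyticAt ℂ v p) ∧
      u (0, 0) = 0 ∧ v (0, 0) = 0 ∧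
      (∀ t ζ1 : ℂ, ‖t‖ < r → ‖ζ1‖ < r → ‖q * lam * ζ1‖ < r →
        qpSys b1 b2 b3 b4 b5 b6 b7 b8 q t
          (fh t + ζ1 * (1 + u (t, ζ1)))
          (gh t + ζ1 * (-(bi * bj) + v (t, ζ1)))
          (fh (q * t) + (q * lam * ζ1) * (1 + u (q * t, q * lam * ζ1)))
          (gh (q * t) + (q * lam * ζ1) * (-(bi * bj) + v (q * t, q * lam * ζ1)))) ∧
      (∀ t : ℂ, ‖t‖ < r →
        fh t + (0 : ℂ) * (1 + u (t, 0)) = fh t ∧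
        gh t + (0 : ℂ) * (-(bi * bj) + v (t, 0)) = gh t) := by
  have hφ : ∀ φ : ℂ → ℂ, φ bi * φ bj * φ bk * φ bl = φ b1 * φ b2 * φ b3 * φ b4 := by
    intro φ
    have := congrArg (fun s => (Multiset.map φ s).prod) hperm
    simpa [mul_assoc] using this
  have hne : bi * bj * bk * bl ≠ 0 := by
    have := hφ id
    simp only [id] at this
    rw [this]
    positivity
  simp only [ne_eq, mul_eq_zero, not_or] at hne
  obtain ⟨⟨⟨hi, hj⟩, hk⟩, hl⟩ := hne
  have q0 : q ≠ 0 := by rw [hq]; positivity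
  have hμ : ‖q * lam‖ < 1 := by
    rw [norm_mul]
    have := mul_lt_mul_of_pos_left hlamlt (norm_pos_iff.2 q0)
    rwa [mul_inv_cancel₀ (norm_ne_zero_iff.2 q0)] at this
  have hpow : ∀ n : ℤ, q ^ n ≠ lam := fun n hn => hlamcl (subset_closure ⟨n, hn⟩)
  have hsol' : ∀ᶠ t in 𝓝 (0 : ℂ),
      qpSys b1 b2 b3 b4 b5 b6 b7 b8 q t (fh t) (gh t) (fh (q * t)) (gh (q * t)) := by
    filter_upwards [ball_mem_nhds (0 : ℂ) hε] with t ht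
    exact hsol t (by simpa using ht)
  have hfa := hfhol 0 (by simpa using hε)
  have hga := hghol 0 (by simpa using hε)
  suffices h : ∃ r > (0 : ℝ), ∃ u v : ℂ × ℂ → ℂ,
      (∀ p : ℂ × ℂ, ‖p.1‖ < r → ‖p.2‖ < r → AnalyticAt ℂ u p ∧ AnalyticAt ℂ v p) ∧
      u (0, 0) = 0 ∧ v (0, 0) = 0 ∧
      (∀ t ζ1 : ℂ, ‖t‖ < r → ‖ζ1‖ < r → ‖q * lam * ζ1‖ < r →
        qpSys b1 b2 b3 b4 b5 b6 b7 b8 q t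
          (fh t + ζ1 * (1 + u (t, ζ1)))
          (gh t + ζ1 * (-(bi * bj) + v (t, ζ1)))
          (fh (q * t) + (q * lam * ζ1) * (1 + u (q * t, q * lam * ζ1)))
          (gh (q * t) + (q * lam * ζ1) * (-(bi * bj) + v (q * t, q * lam * ζ1)))) by
    obtain ⟨r, hr, u, v, h1, h2, h3, h4⟩ := h
    exact ⟨r, hr, u, v, h1, h2, h3, h4, fun t _ => by simp⟩
  by_cases c1 : bi = bk
  · exact core hb5 hb6 hb7 hb8 hi hj hk hl hq hφ rfl hlam hf1 hg1 hqlt hμ hpow hsum hsuminv hfa hga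
      hf0 hg0 hdf hdg hsol' (Or.inr c1)
  by_cases c2 : bi = bl
  · exact core hb5 hb6 hb7 hb8 hi hj hl hk hq (fun φ => by rw [← hφ]; ring) rfl
      (by rw [hlam]; ring) (by rw [hf1]; ring) (by rw [hg1]; ring) hqlt hμ hpow
      (by rwa [add_comm bl]) (by rwa [add_comm bl⁻¹]) hfa hga hf0 hg0 hdf hdg hsol' (Or.inr c2)
  by_cases c3 : bj = bk
  · exact core hb5 hb6 hb7 hb8 hj hi hk hl hq (fun φ => by rw [← hφ]; ring) (mul_comm _ _)
      (by rw [hlam]; ring) (by rw [hf1]; ring) (by rw [hg1]; ring) hqlt hμ hpow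
      (by rwa [add_comm bj]) (by rwa [add_comm bj⁻¹]) hfa hga hf0 hg0 hdf hdg hsol' (Or.inr c3)
  by_cases c4 : bj = bl
  · exact core hb5 hb6 hb7 hb8 hj hi hl hk hq (fun φ => by rw [← hφ]; ring) (mul_comm _ _)
      (by rw [hlam]; ring) (by rw [hf1]; ring) (by rw [hg1]; ring) hqlt hμ hpow
      (by rwa [add_comm bj, add_comm bl]) (by rwa [add_comm bj⁻¹, add_comm bl⁻¹]) hfa hga hf0 hg0
      hdf hdg hsol' (Or.inr c4)
  exact core hb5 hb6 hb7 hb8 hi hj hk hl hq hφ rfl hlam hf1 hg1 hqlt hμ hpow hsum hsuminv hfa hga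
    hf0 hg0 hdf hdg hsol' (Or.inl ⟨⟨c1, c2⟩, c3, c4⟩)

end
end

section
/- Let ξ, a, b, c, d be nonzero complex numbers with |ξ| < 1, and let Λₛ ∈ ℂ satisfy 1 < |Λₛ| < 1/|ξ|. Set q₁ = ξ·Λₛ and q₂ = 1/Λₛ (so 0 < |q₁|, |q₂| < 1). Then there exist r > 0 and an analytic function y on the polydisc {(ζ₁, ζ₂) ∈ ℂ² : |ζ₁| < r, |ζ₂| < r} with y(0,0) = 0 such that, setting x(ζ) = ζ₁(1 + y(ζ)) and t(ζ) = ζ₁ζ₂, for every ζ in the polydisc the symmetric q-P(A1) relation holds in the cleared form (x₁·x₂ − ξ·s²)(x₁·x₀ − s²/ξ)(x₁ − c)(x₁ − 1/c)(x₁ − d)(x₁ − 1/d) = (x₁·x₂ − 1)(x₁·x₀ − 1)(x₁ − a·s)(x₁ − s/a)(x₁ − b·s)(x₁ − s/b), where x₀ = x(ζ), x₁ = x(q₁ζ₁, q₂ζ₂), x₂ = x(q₁²ζ₁, q₂²ζ₂) and s = ξ·t(ζ) (note t(q₁ζ₁, q₂ζ₂) = ξ·t(ζ) since q₁q₂ =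 ξ). Moreover y is unique as a germ at (0,0). -/
/-!
Write `x = ζ₁ u` with `u = 1 + y`.  After division by `q₁⁴ ζ₁⁴` the equation becomes a polynomial
relation `G(ζ, u(ζ), u(Qζ), u(Q²ζ)) = 0`, where `Q ζ = (q₁ζ₁, q₂ζ₂)`, and its linearisation at
`ζ = 0`, `u = 1` is `(1 - T)² y = 0` with `T y = y ∘ Q`.  Both existence and uniqueness are read
off from a single application of the implicit function theorem, in the spirit of the proof of the
stable manifold theorem by sequence spaces.

Let `κ = max(|q₁|, |q₂|) < 1`.  The whole orbit of values `y(Qᵏζ)` is encoded in a bounded sequence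
`v` by `y(Qᵏζ) = κᵏ vₖ`.  Since `G` vanishes at the base point, the equations
`G(Qᵏζ, 1 + κᵏvₖ, …) = 0` can be divided by `κᵏ`; the outcome is one equation `F(ζ, v) = 0` in the
Banach algebra of bounded sequences, with `F` polynomial (`orbitMap`, `orbitMap_eq_zero_iff`).
The partial derivative of `F` in `v` is `(1 - σ)²` with `σ` equal to `κ` times the left shift
(`orbitMap_admissible`), invertible because `‖σ‖ ≤ κ < 1`.  The implicit function theorem gives an
analytic `ζ ↦ v(ζ)`, unique near the origin.  If `v` solves the equation at `ζ`, then `σ v` solves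
it at `Qζ`, so uniqueness yields `v(Qζ) = σ v(ζ)`, i.e. the zeroth coordinate `φ(ζ) = v(ζ)₀`
satisfies `φ(Qᵏζ) = κᵏ v(ζ)ₖ` and solves the functional equation.  Conversely, the orbit of
any analytic solution vanishing at the origin is `O(‖ζ‖)` in the weighted norm, hence coincides with
`v(ζ)` (`exists_unique_reduced`).
-/

open Filter

/-- The symmetric q-P(A₁) relation in cleared form, for consecutive iterates
`x0 = x(t/ξ)`-analogue, `x1`, `x2` and time variable `s`. -/
def symQPSys (a b c d ξ s x0 x1 x2 : ℂ) : Prop :=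
  (x1 * x2 - ξ * s ^ 2) * (x1 * x0 - s ^ 2 / ξ) * (x1 - c) * (x1 - c⁻¹) * (x1 - d) *
      (x1 - d⁻¹) =
    (x1 * x2 - 1) * (x1 * x0 - 1) * (x1 - a * s) * (x1 - s / a) * (x1 - b * s) * (x1 - s / b)

/-- An analytic function `y` on the polydisc of radius `r`, vanishing at the origin, such
that `x(ζ) = ζ₁(1 + y(ζ))`, `t(ζ) = ζ₁ζ₂` solve symmetric q-P(A₁) with time evolution
`ζ ↦ (q₁ζ₁, q₂ζ₂)`. -/
def symQPPolydiscSol (a b c d ξ q1 q2 : ℂ) (r : ℝ) (y : ℂ × ℂ → ℂ) : Prop :=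
  (∀ ζ : ℂ × ℂ, ‖ζ.1‖ < r → ‖ζ.2‖ < r → AnalyticAt ℂ y ζ) ∧
  y (0, 0) = 0 ∧
  ∀ ζ : ℂ × ℂ, ‖ζ.1‖ < r → ‖ζ.2‖ < r →
    symQPSys a b c d ξ (ξ * (ζ.1 * ζ.2))
      (ζ.1 * (1 + y ζ))
      ((q1 * ζ.1) * (1 + y (q1 * ζ.1, q2 * ζ.2)))
      ((q1 ^ 2 * ζ.1) * (1 + y (q1 ^ 2 * ζ.1, q2 ^ 2 * ζ.2)))

open scoped BoundedContinuousFunction ContDiff Topology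

namespace SymQP

/-! ### The reduced equation -/

/-- The Banach algebra of bounded complex sequences. -/
abbrev Sq := ℕ →ᵇ ℂ

/-- The equation divided by `q₁⁴ ζ₁⁴`, in terms of `u = x / ζ₁` at three consecutive points. -/
noncomputable def reduced (a b c d q1 q2 z1 z2 u0 u1 u2 : ℂ) : ℂ :=
  ((u1 * u2 - q2 ^ 3 * z2 ^ 2) * (u1 * u0 - q2 * z2 ^ 2)) *
    (((1 - c⁻¹ * q1 * z1 * u1) * (1 - c * q1 * z1 * u1)) *
     ((1 - d⁻¹ * q1 * z1 * u1) * (1 - d * q1 * z1 * u1))) -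
  ((1 - q1 ^ 3 * z1 ^ 2 * (u1 * u2)) * (1 - q1 * z1 ^ 2 * (u1 * u0))) *
    (((u1 - a * q2 * z2) * (u1 - a⁻¹ * q2 * z2)) *
     ((u1 - b * q2 * z2) * (u1 - b⁻¹ * q2 * z2)))

lemma sys_iff_reduced {a b c d ξ q1 q2 : ℂ} (hc : c ≠ 0) (hd : d ≠ 0) (hξ : ξ ≠ 0)
    (h : ξ = q1 * q2) (z1 z2 u0 u1 u2 : ℂ) :
    symQPSys a b c d ξ (ξ * (z1 * z2)) (z1 * u0) (q1 * z1 * u1) (q1 ^ 2 * z1 * u2) ↔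
      (q1 * z1) ^ 4 * reduced a b c d q1 q2 z1 z2 u0 u1 u2 = 0 := by
  have e1 : (ξ * (z1 * z2)) ^ 2 / ξ = ξ * (z1 * z2) ^ 2 := by field_simp
  unfold symQPSys reduced
  rw [e1, ← sub_eq_zero, h]
  have hcd : ((q1 * z1 * u1 - c) * (q1 * z1 * u1 - c⁻¹)) =
      (1 - c⁻¹ * q1 * z1 * u1) * (1 - c * q1 * z1 * u1) := by field_simp; ring
  have hdd : ((q1 * z1 * u1 - d) * (q1 * z1 * u1 - d⁻¹)) =
      (1 - d⁻¹ * q1 * z1 * u1) * (1 - d * q1 * z1 * u1) := by field_simp; ring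
  rw [mul_sub ((q1 * z1) ^ 4), ← hcd, ← hdd]
  refine Eq.congr ?_ rfl
  simp only [div_eq_mul_inv]
  generalize c⁻¹ = c', d⁻¹ = d', a⁻¹ = a', b⁻¹ = b'
  congr 1
  · have f1 : q1 * z1 * u1 * (q1 ^ 2 * z1 * u2) - q1 * q2 * (q1 * q2 * (z1 * z2)) ^ 2
        = q1 ^ 3 * z1 ^ 2 * (u1 * u2 - q2 ^ 3 * z2 ^ 2) := by ring
    have f2 : q1 * z1 * u1 * (z1 * u0) - q1 * q2 * (z1 * z2) ^ 2
        = q1 * z1 ^ 2 * (u1 * u0 - q2 * z2 ^ 2) := by ring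
    rw [f1, f2]
    generalize u1 * u2 - q2 ^ 3 * z2 ^ 2 = A, u1 * u0 - q2 * z2 ^ 2 = B, q1 * z1 * u1 - c = C,
      q1 * z1 * u1 - c' = D, q1 * z1 * u1 - d = E, q1 * z1 * u1 - d' = H
    ring
  · have g1 : q1 * z1 * u1 * (q1 ^ 2 * z1 * u2) - 1
        = -(1 - q1 ^ 3 * z1 ^ 2 * (u1 * u2)) := by ring
    have g2 : q1 * z1 * u1 * (z1 * u0) - 1 = -(1 - q1 * z1 ^ 2 * (u1 * u0)) := by ring
    have g3 : ∀ m, q1 * z1 * u1 - m * (q1 * q2 * (z1 * z2)) = q1 * z1 * (u1 - m * q2 * z2) := by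
      intro m; ring
    rw [g1, g2, mul_comm (q1 * q2 * (z1 * z2)) a', mul_comm (q1 * q2 * (z1 * z2)) b']
    simp only [g3]
    ring

/-! ### The sequence algebra and first-order expansions at the origin -/

/-- The operation with `1 + K (α ⊕ β) = (1 + K α) (1 + K β)`. -/
noncomputable def opl (K α β : Sq) : Sq := α + β + K * (α * β)

lemma opl_apply (K α β : Sq) (k : ℕ) :
    1 + K k * opl K α β k = (1 + K k * α k) * (1 + K k * β k) := by
  simp [opl]; ring

/-- `f` is analytic, vanishes at the origin, and has partial derivative `L` there in the second
variable. -/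
structure Admissible (f : (ℂ × ℂ) × Sq → Sq) (L : Sq →L[ℂ] Sq) : Prop where
  contDiff : ContDiff ℂ ω f
  zero : f 0 = 0
  deriv : HasFDerivAt (fun v => f (0, v)) L 0

lemma Admissible.opl {f g : (ℂ × ℂ) × Sq → Sq} {L M : Sq →L[ℂ] Sq} (hf : Admissible f L)
    (hg : Admissible g M) (K : Sq) : Admissible (fun p => opl K (f p) (g p)) (L + M) := by
  have f0 : f (0, 0) = 0 := hf.zero
  have g0 : g (0, 0) = 0 := hg.zero
  refine ⟨?_, by simp [SymQP.opl, hf.zero, hg.zero], ?_⟩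
  · exact (hf.contDiff.add hg.contDiff).add (contDiff_const.mul (hf.contDiff.mul hg.contDiff))
  · have := (hf.deriv.add hg.deriv).add ((hf.deriv.mul hg.deriv).const_mul K)
    refine this.congr_fderiv ?_
    ext1 v
    simp [f0, g0]

lemma Admissible.sub {f g : (ℂ × ℂ) × Sq → Sq} {L : Sq →L[ℂ] Sq} (hf : Admissible f L)
    (hg : ContDiff ℂ ω g) (g0 : ∀ v, g (0, v) = 0) : Admissible (fun p => f p - g p) L := by
  refine ⟨hf.contDiff.sub hg, ?_, ?_⟩
  · have : g 0 = 0 := g0 0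
    simp [hf.zero, this]
  · simpa [g0] using hf.deriv

lemma Admissible.sub' {f g : (ℂ × ℂ) × Sq → Sq} {L M : Sq →L[ℂ] Sq} (hf : Admissible f L)
    (hg : Admissible g M) : Admissible (fun p => f p - g p) (L - M) :=
  ⟨hf.contDiff.sub hg.contDiff, by simp [hf.zero, hg.zero], hf.deriv.sub hg.deriv⟩

lemma admissible_clm (L : Sq →L[ℂ] Sq) : Admissible (fun p => L p.2) L :=
  ⟨L.contDiff.comp contDiff_snd, by simp, L.hasFDerivAt⟩

lemma admissible_neg {g : (ℂ × ℂ) × Sq → Sq} (hg : ContDiff ℂ ω g) (g0 : ∀ v, g (0, v) = 0) :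
    Admissible (fun p => -g p) 0 := by
  refine ⟨hg.neg, ?_, ?_⟩
  · have : g 0 = 0 := g0 0
    simp [this]
  · simpa [g0] using hasFDerivAt_const (0 : Sq) (0 : Sq)

/-- The sequence of powers `wᵏ`, for `‖w‖ ≤ 1`. -/
noncomputable def powSeq (w : ℂ) (hw : ‖w‖ ≤ 1) : Sq :=
  BoundedContinuousFunction.ofNormedAddCommGroup (fun k : ℕ => w ^ k)
    (continuous_of_discreteTopology) 1 (fun k => by
      rw [norm_pow]; exact pow_le_one₀ (norm_nonneg _) hw)

@[simp] lemma powSeq_apply (w : ℂ) (hw : ‖w‖ ≤ 1) (k : ℕ) : powSeq w hw k = w ^ k := rfl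

/-- The weighted left shift `(σ v)ₖ = κ vₖ₊₁`. -/
noncomputable def shift (κ : ℂ) : Sq →L[ℂ] Sq :=
  κ • BoundedContinuousFunction.compContinuousCLM ℂ ℂ
    (⟨Nat.succ, continuous_of_discreteTopology⟩ : C(ℕ, ℕ))

@[simp] lemma shift_apply (κ : ℂ) (v : Sq) (k : ℕ) : shift κ v k = κ * v (k + 1) := rfl

lemma norm_shift_le (κ : ℂ) : ‖shift κ‖ ≤ ‖κ‖ := by
  refine ContinuousLinearMap.opNorm_le_bound _ (norm_nonneg _) fun v => ?_
  refine (BoundedContinuousFunction.norm_le (by positivity)).2 fun k => ?_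
  rw [shift_apply, norm_mul]
  gcongr
  exact v.norm_coe_le_norm _

/-! ### The orbit equation -/

section

variable (a b c d q1 q2 κ : ℂ) (K e1 e2 : Sq)

/-- The left-hand product of the reduced equation along an orbit is `1 + K * lhs`.  The intended
values are `K k = κᵏ` and `eᵢ k = (qᵢ/κ)ᵏ`, so that `K * (ζᵢ • eᵢ)` lists the coordinates `qᵢᵏ ζᵢ` and
`1 + K * p.2` lists the values of `u`. -/
noncomputable def lhs (p : (ℂ × ℂ) × Sq) : Sq :=
  opl K (opl K
      (opl K (shift κ p.2) (shift κ (shift κ p.2)) - q2 ^ 3 • (K * (p.1.2 • e2) ^ 2))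
      (opl K (shift κ p.2) p.2 - q2 • (K * (p.1.2 • e2) ^ 2)))
    (opl K
      (opl K (-((c⁻¹ * q1) • (p.1.1 • e1 * (1 + K * shift κ p.2))))
        (-((c * q1) • (p.1.1 • e1 * (1 + K * shift κ p.2)))))
      (opl K (-((d⁻¹ * q1) • (p.1.1 • e1 * (1 + K * shift κ p.2))))
        (-((d * q1) • (p.1.1 • e1 * (1 + K * shift κ p.2))))))

/-- The right-hand product of the reduced equation along an orbit is `1 + K * rhs`. -/
noncomputable def rhs (p : (ℂ × ℂ) × Sq) : Sq :=
  opl K (opl K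
      (-(q1 ^ 3 • (K * (p.1.1 • e1) ^ 2 *
        ((1 + K * shift κ p.2) * (1 + K * shift κ (shift κ p.2))))))
      (-(q1 • (K * (p.1.1 • e1) ^ 2 * ((1 + K * shift κ p.2) * (1 + K * p.2))))))
    (opl K
      (opl K (shift κ p.2 - (a * q2) • (p.1.2 • e2)) (shift κ p.2 - (a⁻¹ * q2) • (p.1.2 • e2)))
      (opl K (shift κ p.2 - (b * q2) • (p.1.2 • e2)) (shift κ p.2 - (b⁻¹ * q2) • (p.1.2 • e2))))

/-- The reduced equations along a whole orbit, the `k`-th one divided by `K k = κᵏ`. -/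
noncomputable def orbitMap (p : (ℂ × ℂ) × Sq) : Sq :=
  lhs c d q1 q2 κ K e1 e2 p - rhs a b q1 q2 κ K e1 e2 p

lemma orbitMap_admissible :
    Admissible (orbitMap a b c d q1 q2 κ K e1 e2) ((1 - shift κ) * (1 - shift κ)) := by
  have hs : ContDiff ℂ ω (fun p : (ℂ × ℂ) × Sq => shift κ p.2) :=
    (shift κ).contDiff.comp contDiff_snd
  have hss : ContDiff ℂ ω (fun p : (ℂ × ℂ) × Sq => shift κ (shift κ p.2)) :=
    (shift κ).contDiff.comp hs
  have A0 := admissible_clm (1 : Sq →L[ℂ] Sq)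
  have A1 := admissible_clm (shift κ)
  have A2 := admissible_clm (shift κ * shift κ)
  have B (m : ℂ) : Admissible (fun p => -(m • (p.1.1 • e1 * (1 + K * shift κ p.2)))) 0 :=
    admissible_neg (by fun_prop) (by simp)
  have C (m : ℂ) : Admissible (fun p => shift κ p.2 - m • (p.1.2 • e2)) (shift κ) :=
    A1.sub (by fun_prop) (by simp)
  have D (m : ℂ) {f L} (hf : Admissible f L) :
      Admissible (fun p => f p - m • (K * (p.1.2 • e2) ^ 2)) L :=
    hf.sub (by fun_prop) (by simp)
  have E1 : Admissible (fun p : (ℂ × ℂ) × Sq => -(q1 ^ 3 • (K * (p.1.1 • e1) ^ 2 *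
        ((1 + K * shift κ p.2) * (1 + K * shift κ (shift κ p.2)))))) 0 :=
    admissible_neg (by fun_prop) (by simp)
  have E2 : Admissible (fun p : (ℂ × ℂ) × Sq => -(q1 • (K * (p.1.1 • e1) ^ 2 *
        ((1 + K * shift κ p.2) * (1 + K * p.2))))) 0 :=
    admissible_neg (by fun_prop) (by simp)
  have P := ((D (q2 ^ 3) (A1.opl A2 K)).opl (D q2 (A1.opl A0 K)) K).opl
    (((B (c⁻¹ * q1)).opl (B (c * q1)) K).opl ((B (d⁻¹ * q1)).opl (B (d * q1)) K) K) K
  have R := (E1.opl E2 K).opl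
    (((C (a * q2)).opl (C (a⁻¹ * q2)) K).opl ((C (b * q2)).opl (C (b⁻¹ * q2)) K) K) K
  have := P.sub' R
  have hL : (1 - shift κ) * (1 - shift κ) = shift κ + shift κ * shift κ + (shift κ + 1) +
      (0 + 0 + (0 + 0)) - (0 + 0 + (shift κ + shift κ + (shift κ + shift κ))) := by
    simp only [mul_sub, sub_mul, one_mul, mul_one, add_zero, zero_add]
    abel
  rw [hL]
  exact this

variable {κ K e1 e2}

/-- The orbit equation says that the reduced equation holds at every point of the orbit, the values
of `y` along it being `κᵏ vₖ`. -/
lemma orbitMap_eq_zero_iff (hκ : κ ≠ 0) (hK : ∀ k, K k = κ ^ k)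
    (he1 : ∀ k, κ ^ k * e1 k = q1 ^ k) (he2 : ∀ k, κ ^ k * e2 k = q2 ^ k)
    (ζ : ℂ × ℂ) (v : Sq) :
    orbitMap a b c d q1 q2 κ K e1 e2 (ζ, v) = 0 ↔
      ∀ k, reduced a b c d q1 q2 (q1 ^ k * ζ.1) (q2 ^ k * ζ.2) (1 + κ ^ k * v k)
        (1 + κ ^ (k + 1) * v (k + 1)) (1 + κ ^ (k + 2) * v (k + 2)) = 0 := by
  rw [DFunLike.ext_iff]
  refine forall_congr' fun k => ?_
  have hKk : K k ≠ 0 := by rw [hK]; exact pow_ne_zero _ hκ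
  have o1 : ∀ α β γ : Sq, 1 + K k * (opl K α β - γ) k
      = (1 + K k * α k) * (1 + K k * β k) - K k * γ k := by
    intro α β γ
    rw [← opl_apply]; simp; ring
  have key : K k * orbitMap a b c d q1 q2 κ K e1 e2 (ζ, v) k =
      reduced a b c d q1 q2 (q1 ^ k * ζ.1) (q2 ^ k * ζ.2) (1 + κ ^ k * v k)
        (1 + κ ^ (k + 1) * v (k + 1)) (1 + κ ^ (k + 2) * v (k + 2)) := by
    have : K k * orbitMap a b c d q1 q2 κ K e1 e2 (ζ, v) k =
      (1 + K k * lhs c d q1 q2 κ K e1 e2 (ζ, v) k) -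
        (1 + K k * rhs a b q1 q2 κ K e1 e2 (ζ, v) k) := by
      simp [orbitMap]; ring
    rw [this, lhs, rhs]
    simp only [opl_apply, o1]
    have s1 : κ ^ (k + 1) * v (k + 1) = κ ^ k * (κ * v (k + 1)) := by ring
    have s2 : κ ^ (k + 2) * v (k + 2) = κ ^ k * (κ * (κ * v (k + 2))) := by ring
    unfold reduced
    rw [← he1 k, ← he2 k, s1, s2]
    simp only [BoundedContinuousFunction.coe_sub, BoundedContinuousFunction.coe_neg,
      BoundedContinuousFunction.coe_smul, BoundedContinuousFunction.coe_mul,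
      BoundedContinuousFunction.coe_add, BoundedContinuousFunction.coe_one,
      BoundedContinuousFunction.coe_pow, Pi.mul_apply, Pi.sub_apply, Pi.neg_apply, Pi.add_apply,
      Pi.one_apply, Pi.pow_apply, shift_apply, smul_eq_mul, hK, add_assoc]
    congr 1
    · congr 1
      · congr 1 <;> ring
      · congr 1 <;> (congr 1 <;> ring)
    · congr 1
      · congr 1 <;> ring
      · congr 1 <;> (congr 1 <;> ring)
  rw [← key]
  simp [hKk]

end

/-! ### Solving the reduced equation -/

/-- The `k`-th point of the orbit of `ζ` under the time evolution. -/
noncomputable def Qpow (q1 q2 : ℂ) (k : ℕ) (ζ : ℂ × ℂ) : ℂ × ℂ := (q1 ^ k * ζ.1, q2 ^ k * ζ.2)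

lemma norm_Qpow_le {q1 q2 : ℂ} {κ : ℝ} (hq1 : ‖q1‖ ≤ κ) (hq2 : ‖q2‖ ≤ κ) (k : ℕ) (ζ : ℂ × ℂ) :
    ‖Qpow q1 q2 k ζ‖ ≤ κ ^ k * ‖ζ‖ := by
  have hκ : 0 ≤ κ := (norm_nonneg _).trans hq1
  refine norm_prod_le_iff.2 ⟨?_, ?_⟩
  · simp only [Qpow, norm_mul, norm_pow]
    gcongr
    exact norm_fst_le ζ
  · simp only [Qpow, norm_mul, norm_pow]
    gcongr
    exact norm_snd_le ζ

lemma Qpow_Qpow (q1 q2 : ℂ) (j k : ℕ) (ζ : ℂ × ℂ) :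
    Qpow q1 q2 j (Qpow q1 q2 k ζ) = Qpow q1 q2 (k + j) ζ := by
  simp only [Qpow, Prod.mk.injEq]
  constructor <;> ring

/-- `y` satisfies the reduced equation at `ζ`. -/
def SolAt (a b c d q1 q2 : ℂ) (y : ℂ × ℂ → ℂ) (ζ : ℂ × ℂ) : Prop :=
  reduced a b c d q1 q2 ζ.1 ζ.2 (1 + y ζ) (1 + y (Qpow q1 q2 1 ζ)) (1 + y (Qpow q1 q2 2 ζ)) = 0

/-- The Banach space equation for orbits is uniquely solvable near the origin, analytically
in `ζ`. -/
lemma exists_implicit {F : (ℂ × ℂ) × Sq → Sq} {κ : ℂ} (hκ : ‖κ‖ < 1)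
    (hF : Admissible F ((1 - shift κ) * (1 - shift κ))) :
    ∃ ψ : ℂ × ℂ → Sq, AnalyticAt ℂ ψ 0 ∧ ψ 0 = 0 ∧ ∀ᶠ p in 𝓝 (0 : (ℂ × ℂ) × Sq),
      (F p = 0 ↔ ψ p.1 = p.2) := by
  have cdf : ContDiffAt ℂ ω F 0 := hF.contDiff.contDiffAt
  have hd : HasFDerivAt F (fderiv ℂ F 0) ((0 : ℂ × ℂ), (0 : Sq)) :=
    (cdf.differentiableAt (by simp)).hasFDerivAt
  have hL : fderiv ℂ F 0 ∘L .inr ℂ (ℂ × ℂ) Sq = (1 - shift κ) * (1 - shift κ) :=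
    (hd.comp (0 : Sq) (hasFDerivAt_prodMk_right (0 : ℂ × ℂ) (0 : Sq))).unique hF.deriv
  have hu : IsUnit (1 - shift κ) :=
    isUnit_one_sub_of_norm_lt_one (R := Sq →L[ℂ] Sq) ((norm_shift_le κ).trans_lt hκ)
  have hinv : (fderiv ℂ F 0 ∘L .inr ℂ (ℂ × ℂ) Sq).IsInvertible := by
    rw [hL]
    obtain ⟨U, hU⟩ := hu.mul hu
    exact ⟨ContinuousLinearEquiv.unitsEquiv ℂ Sq U, by rw [← hU]; rfl⟩
  refine ⟨cdf.implicitFunction (by simp) hinv, ?_, ?_, ?_⟩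
  · exact (cdf.contDiffAt_implicitFunction (by simp) hinv).analyticAt
  · exact cdf.implicitFunction_apply_self (by simp) hinv
  · simpa only [hF.zero] using cdf.eventually_apply_eq_iff_implicitFunction (by simp) hinv

/-- Existence and uniqueness of the germ solving the reduced functional equation. -/
theorem exists_unique_reduced (a b c d q1 q2 : ℂ) {κ : ℝ} (hκ0 : 0 < κ) (hκ1 : κ < 1)
    (hq1 : ‖q1‖ ≤ κ) (hq2 : ‖q2‖ ≤ κ) :
    ∃ φ : ℂ × ℂ → ℂ, AnalyticAt ℂ φ 0 ∧ φ 0 = 0 ∧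
      (∀ᶠ ζ in 𝓝 0, SolAt a b c d q1 q2 φ ζ) ∧
      ∀ y : ℂ × ℂ → ℂ, AnalyticAt ℂ y 0 → y 0 = 0 → (∀ᶠ ζ in 𝓝 0, SolAt a b c d q1 q2 y ζ) →
        y =ᶠ[𝓝 0] φ := by
  have hκC : (κ : ℂ) ≠ 0 := by exact_mod_cast hκ0.ne'
  have nκ : ‖(κ : ℂ)‖ = κ := by simp [abs_of_pos hκ0]
  have hw (q : ℂ) (hq : ‖q‖ ≤ κ) : ‖q / κ‖ ≤ 1 := by
    rw [norm_div, nκ]; exact (div_le_one hκ0).2 hq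
  have he (q : ℂ) (hq : ‖q‖ ≤ κ) (k : ℕ) : (κ : ℂ) ^ k * powSeq (q / κ) (hw q hq) k = q ^ k := by
    rw [powSeq_apply, ← mul_pow, mul_div_cancel₀ _ hκC]
  have hzero := orbitMap_eq_zero_iff a b c d q1 q2 (K := powSeq κ (by rw [nκ]; exact hκ1.le)) hκC
    (fun k => rfl) (he q1 hq1) (he q2 hq2)
  obtain ⟨ψ, ψan, ψ0, hψ⟩ := exists_implicit (by rw [nκ]; exact hκ1)
    (orbitMap_admissible a b c d q1 q2 κ (powSeq κ (by rw [nκ]; exact hκ1.le))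
      (powSeq (q1 / κ) (hw q1 hq1)) (powSeq (q2 / κ) (hw q2 hq2)))
  -- On a ball the orbit equation has `ψ` as its only small solution.
  obtain ⟨ε, ε0, hε⟩ := Metric.eventually_nhds_iff.1 hψ
  replace hε : ∀ ζ : ℂ × ℂ, ∀ v : Sq, ‖ζ‖ < ε → ‖v‖ < ε →
      ((∀ k, reduced a b c d q1 q2 (q1 ^ k * ζ.1) (q2 ^ k * ζ.2) (1 + κ ^ k * v k)
        (1 + κ ^ (k + 1) * v (k + 1)) (1 + κ ^ (k + 2) * v (k + 2)) = 0) ↔ ψ ζ = v) := by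
    intro ζ v h1 h2
    rw [← hzero]
    refine hε ?_
    rw [dist_zero_right]
    exact max_lt h1 h2
  have hψsmall : ∀ᶠ ζ in 𝓝 (0 : ℂ × ℂ), ‖ψ ζ‖ < ε := by
    have : Filter.Tendsto (fun ζ => ‖ψ ζ‖) (𝓝 0) (𝓝 0) := by
      simpa [ψ0] using ψan.continuousAt.norm.tendsto
    exact this.eventually (gt_mem_nhds ε0)
  obtain ⟨δ, δ0, hδ⟩ := Metric.eventually_nhds_iff.1 hψsmall
  have nQ (k : ℕ) (ζ : ℂ × ℂ) : ‖Qpow q1 q2 k ζ‖ ≤ ‖ζ‖ :=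
    (norm_Qpow_le hq1 hq2 k ζ).trans
      (mul_le_of_le_one_left (norm_nonneg _) (pow_le_one₀ hκ0.le hκ1.le))
  have hψeq : ∀ ζ : ℂ × ℂ, ‖ζ‖ < min ε δ → ∀ k,
      reduced a b c d q1 q2 (q1 ^ k * ζ.1) (q2 ^ k * ζ.2) (1 + κ ^ k * ψ ζ k)
        (1 + κ ^ (k + 1) * ψ ζ (k + 1)) (1 + κ ^ (k + 2) * ψ ζ (k + 2)) = 0 := by
    intro ζ h
    exact (hε ζ (ψ ζ) (h.trans_le (min_le_left _ _))
      (hδ (by simpa using h.trans_le (min_le_right _ _)))).2 rfl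
  -- The shifted sequence solves the orbit equation at `Q ζ`.
  have hcov : ∀ ζ : ℂ × ℂ, ‖ζ‖ < min ε δ → ψ (Qpow q1 q2 1 ζ) = shift κ (ψ ζ) := by
    intro ζ h
    refine (hε _ _ ((nQ 1 ζ).trans_lt (h.trans_le (min_le_left _ _))) ?_).1 fun k => ?_
    · calc ‖shift κ (ψ ζ)‖ ≤ ‖shift (κ : ℂ)‖ * ‖ψ ζ‖ := ContinuousLinearMap.le_opNorm _ _
        _ ≤ 1 * ‖ψ ζ‖ := by
            gcongr
            exact (norm_shift_le _).trans (by rw [nκ]; exact hκ1.le)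
        _ < ε := by
            rw [one_mul]
            exact hδ (by simpa using h.trans_le (min_le_right _ _))
    · have := hψeq ζ h (k + 1)
      simp only [Qpow, shift_apply]
      convert this using 1
      congr 1 <;> ring_nf
  have hφ1 : ∀ ζ : ℂ × ℂ, ‖ζ‖ < min ε δ → ψ (Qpow q1 q2 1 ζ) 0 = κ * ψ ζ 1 := by
    intro ζ h
    rw [hcov ζ h]; simp
  have hφ2 : ∀ ζ : ℂ × ℂ, ‖ζ‖ < min ε δ → ψ (Qpow q1 q2 2 ζ) 0 = κ ^ 2 * ψ ζ 2 := by
    intro ζ h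
    have := Qpow_Qpow q1 q2 1 1 ζ
    rw [show 2 = 1 + 1 from rfl, ← this, hφ1 _ ((nQ 1 ζ).trans_lt h), hcov ζ h]
    simp; ring
  have hm : 0 < min ε δ := lt_min ε0 δ0
  refine ⟨fun ζ => ψ ζ 0, ?_, by simp [ψ0], ?_, ?_⟩
  · exact ((BoundedContinuousFunction.evalCLM ℂ (0 : ℕ) : Sq →L[ℂ] ℂ).analyticAt _).comp ψan
  · refine Metric.eventually_nhds_iff.2 ⟨min ε δ, hm, fun ζ h => ?_⟩
    rw [dist_zero_right] at h
    have := hψeq ζ h 0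
    unfold SolAt
    beta_reduce
    rw [hφ1 ζ h, hφ2 ζ h]
    simpa using this
  · intro y yan y0 hy
    obtain ⟨C, C0, hC⟩ := (yan.differentiableAt.isBigO_sub).exists_pos
    have hC' := hC.bound
    obtain ⟨η, η0, hη⟩ := Metric.eventually_nhds_iff.1 (hC'.and hy)
    refine Metric.eventually_nhds_iff.2 ⟨min (min ε η) (ε / C), by positivity, fun ζ h => ?_⟩
    rw [dist_zero_right, lt_min_iff, lt_min_iff] at h
    obtain ⟨⟨h1, h2⟩, h3⟩ := h
    have hin (k : ℕ) : dist (Qpow q1 q2 k ζ) 0 < η := by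
      rw [dist_zero_right]; exact (nQ k ζ).trans_lt h2
    have hb (k : ℕ) : ‖y (Qpow q1 q2 k ζ) / κ ^ k‖ ≤ C * ‖ζ‖ := by
      have := (hη (hin k)).1
      rw [y0, sub_zero, sub_zero] at this
      rw [norm_div, norm_pow, nκ, div_le_iff₀ (by positivity)]
      calc _ ≤ C * ‖Qpow q1 q2 k ζ‖ := this
        _ ≤ C * (κ ^ k * ‖ζ‖) := by gcongr; exact norm_Qpow_le hq1 hq2 k ζ
        _ = _ := by ring
    let v : Sq := BoundedContinuousFunction.ofNormedAddCommGroup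
      (fun k : ℕ => y (Qpow q1 q2 k ζ) / κ ^ k) continuous_of_discreteTopology (C * ‖ζ‖) hb
    have hv (k : ℕ) : (κ : ℂ) ^ k * v k = y (Qpow q1 q2 k ζ) :=
      mul_div_cancel₀ _ (pow_ne_zero _ hκC)
    have hvn : ‖v‖ < ε := by
      refine lt_of_le_of_lt ((BoundedContinuousFunction.norm_le (by positivity)).2 hb) ?_
      rw [lt_div_iff₀ C0] at h3
      linarith
    have key := (hε ζ v h1 hvn).1 fun k => by
      have := (hη (hin k)).2
      unfold SolAt at this
      rw [Qpow_Qpow, Qpow_Qpow] at this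
      rw [hv, hv, hv]
      exact this
    have h0 := hv 0
    rw [← key] at h0
    simp only [pow_zero, one_mul, Qpow] at h0
    exact h0.symm

/-! ### Passing between the original and the reduced equation -/

lemma continuous_reduced (a b c d q1 q2 : ℂ) {X : Type*} [TopologicalSpace X] {x : X}
    {z1 z2 u0 u1 u2 : X → ℂ} (h1 : ContinuousAt z1 x) (h2 : ContinuousAt z2 x)
    (h3 : ContinuousAt u0 x) (h4 : ContinuousAt u1 x) (h5 : ContinuousAt u2 x) :
    ContinuousAt (fun t => reduced a b c d q1 q2 (z1 t) (z2 t) (u0 t) (u1 t) (u2 t)) x := by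
  unfold reduced
  fun_prop

/-- A solution of the original equation solves the reduced one, also on the line `ζ₁ = 0` where the
original equation is void: there the reduced equation follows by continuity. -/
lemma solAt_of_polydiscSol {a b c d ξ q1 q2 : ℂ} {r : ℝ} {y : ℂ × ℂ → ℂ} (hr : 0 < r)
    (hc : c ≠ 0) (hd : d ≠ 0) (hξ : ξ ≠ 0) (hq : ξ = q1 * q2) (hq1 : ‖q1‖ ≤ 1) (hq2 : ‖q2‖ ≤ 1)
    (h : symQPPolydiscSol a b c d ξ q1 q2 r y) :
    ∀ᶠ ζ in 𝓝 (0 : ℂ × ℂ), SolAt a b c d q1 q2 y ζ := by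
  obtain ⟨han, -, hs⟩ := h
  have hq10 : q1 ≠ 0 := by rintro rfl; simp at hq; exact hξ hq
  have hne : ∀ ζ : ℂ × ℂ, ‖ζ.1‖ < r → ‖ζ.2‖ < r → ζ.1 ≠ 0 → SolAt a b c d q1 q2 y ζ := by
    intro ζ h1 h2 h0
    have := (sys_iff_reduced hc hd hξ hq _ _ _ _ _).1 (hs ζ h1 h2)
    have h4 : (q1 * ζ.1) ^ 4 ≠ 0 := pow_ne_zero _ (mul_ne_zero hq10 h0)
    simpa [SolAt, Qpow] using (mul_eq_zero.1 this).resolve_left h4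
  have ysub : ∀ k, ∀ w : ℂ, ‖w‖ < r →
      ContinuousAt (fun z : ℂ => 1 + y (Qpow q1 q2 k (z, w))) 0 := by
    intro k w hw
    refine continuousAt_const.add ?_
    have hc1 : ContinuousAt (fun z : ℂ => Qpow q1 q2 k (z, w)) 0 := by
      unfold Qpow; fun_prop
    refine ContinuousAt.comp (g := y) (han _ ?_ ?_).continuousAt hc1
    · simpa [Qpow] using hr
    · simp only [Qpow, norm_mul, norm_pow]
      exact (mul_le_of_le_one_left (norm_nonneg _)
        (pow_le_one₀ (norm_nonneg _) hq2)).trans_lt hw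
  refine Metric.eventually_nhds_iff.2 ⟨r, hr, fun ζ h => ?_⟩
  rw [dist_zero_right] at h
  obtain ⟨z, w⟩ := ζ
  have hz : ‖z‖ < r := (norm_fst_le (z, w)).trans_lt h
  have hw : ‖w‖ < r := (norm_snd_le (z, w)).trans_lt h
  by_cases h0 : z = 0
  · subst h0
    have hcont := continuous_reduced a b c d q1 q2 (x := (0 : ℂ)) (z1 := fun z => z)
      (z2 := fun _ => w) continuousAt_id continuousAt_const (ysub 0 w hw) (ysub 1 w hw)
      (ysub 2 w hw)
    have hlim := hcont.tendsto.mono_left (nhdsWithin_le_nhds (s := {0}ᶜ))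
    have hev : ∀ᶠ z in 𝓝[≠] (0 : ℂ), reduced a b c d q1 q2 z w (1 + y (Qpow q1 q2 0 (z, w)))
        (1 + y (Qpow q1 q2 1 (z, w))) (1 + y (Qpow q1 q2 2 (z, w))) = 0 := by
      have hr' : ∀ᶠ z in 𝓝[≠] (0 : ℂ), ‖z‖ < r := nhdsWithin_le_nhds
        (Metric.eventually_nhds_iff.2 ⟨r, hr, fun z hz => by simpa using hz⟩)
      filter_upwards [hr', self_mem_nhdsWithin] with z h1 h2
      have := hne (z, w) h1 hw h2
      simpa [SolAt, Qpow] using this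
    have := tendsto_nhds_unique hlim
      (tendsto_const_nhds.congr' (hev.mono fun z hz => hz.symm))
    simpa [SolAt, Qpow] using this
  · exact hne _ hz hw h0

end SymQP

open SymQP

theorem stmt8 (ξ a b c d Λs q1 q2 : ℂ)
    (hξ : ξ ≠ 0) (ha : a ≠ 0) (hb : b ≠ 0) (hc : c ≠ 0) (hd : d ≠ 0)
    (hξlt : ‖ξ‖ < 1) (hΛlow : 1 < ‖Λs‖) (hΛhigh : ‖Λs‖ < ‖ξ‖⁻¹)
    (hq1 : q1 = ξ * Λs) (hq2 : q2 = Λs⁻¹) :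
    (∃ r > (0 : ℝ), ∃ y : ℂ × ℂ → ℂ, symQPPolydiscSol a b c d ξ q1 q2 r y) ∧
      (∀ (r r' : ℝ) (y y' : ℂ × ℂ → ℂ), 0 < r → 0 < r' →
        symQPPolydiscSol a b c d ξ q1 q2 r y →
        symQPPolydiscSol a b c d ξ q1 q2 r' y' →
        y =ᶠ[nhds ((0 : ℂ), (0 : ℂ))] y') := by
  have hΛ0 : Λs ≠ 0 := by rintro rfl; simp at hΛlow; linarith
  have hξ0 : 0 < ‖ξ‖ := norm_pos_iff.2 hξ
  have hq : ξ = q1 * q2 := by rw [hq1, hq2]; field_simp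
  have n1 : ‖q1‖ < 1 := by
    rw [hq1, norm_mul]
    calc ‖ξ‖ * ‖Λs‖ < ‖ξ‖ * ‖ξ‖⁻¹ := by gcongr
      _ = 1 := mul_inv_cancel₀ hξ0.ne'
  have n2 : ‖q2‖ < 1 := by
    rw [hq2, norm_inv]
    exact inv_lt_one_of_one_lt₀ hΛlow
  have n20 : 0 < ‖q2‖ := by
    rw [hq2]; exact norm_pos_iff.2 (inv_ne_zero hΛ0)
  obtain ⟨φ, φan, φ0, hφ, huniq⟩ := exists_unique_reduced a b c d q1 q2
    (lt_max_of_lt_right n20) (max_lt n1 n2) (le_max_left _ _) (le_max_right _ _)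
  refine ⟨?_, fun r r' y y' hr hr' hy hy' => ?_⟩
  · obtain ⟨r, hr, h⟩ := Metric.eventually_nhds_iff.1 (φan.eventually_analyticAt.and hφ)
    have h' : ∀ ζ : ℂ × ℂ, ‖ζ.1‖ < r → ‖ζ.2‖ < r → dist ζ 0 < r := fun ζ h1 h2 => by
      rw [dist_zero_right]; exact max_lt h1 h2
    refine ⟨r, hr, φ, fun ζ h1 h2 => (h (h' ζ h1 h2)).1, φ0, fun ζ h1 h2 => ?_⟩
    refine (sys_iff_reduced hc hd hξ hq _ _ _ _ _).2 ?_
    have := (h (h' ζ h1 h2)).2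
    simp only [SolAt, Qpow, pow_one] at this
    rw [this, mul_zero]
  · have e := huniq y (hy.1 0 (by simpa using hr) (by simpa using hr)) hy.2.1
      (solAt_of_polydiscSol hr hc hd hξ hq n1.le n2.le hy)
    have e' := huniq y' (hy'.1 0 (by simpa using hr') (by simpa using hr')) hy'.2.1
      (solAt_of_polydiscSol hr' hc hd hξ hq n1.le n2.le hy')
    exact e.trans e'.symm
end

section
/- Let A₀, A₁ be 3×3 complex matrices with entries A_i = ((α_i, β_i, γ_i), (δ_i, ε_i, ζ_i), (κ_i, λ_i, μ_i)) for i = 0, 1. For x ∈ ℂ let X(x) = (x², x, 1) ∈ ℂ³, let f(x) = (A₀X(x)) × (A₁X(x)) and g(y) = (A₀ᵀX(y)) × (A₁ᵀX(y)), where × is the cross product on ℂ³, with components f = (f₁, f₂, f₃) and g = (g₁, g₂, g₃). Let P ∈ ℂ and set A = α₀ − α₁P, B = β₀ − β₁P, G = γ₀ − γ₁P, D = δ₀ − δ₁P, E = ε₀ − ε₁P, Z = ζ₀ − ζ₁P, K = κ₀ − κ₁P, L = λ₀ − λ₁P, U = μ₀ − μ₁P. Suppose (x, y, x̄, ȳ)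 ∈ ℂ⁴ satisfy: (inv1) A x²y² + B x²y + D xy² + G x² + E xy + K y² + Z x + L y + U = 0; and the McMillan relations (Ay² + By + G)(x̄ + x) = −(Dy² + Ey + Z) with Ay² + By + G ≠ 0, and (A x̄² + D x̄ + K)(ȳ + y) = −(B x̄² + E x̄ + L) with A x̄² + D x̄ + K ≠ 0. Then x̄ and ȳ satisfy the QRT mapping relations in cleared form: x̄·(f₂(y) − x·f₃(y)) = f₁(y) − x·f₂(y) and ȳ·(g₂(x̄) − y·g₃(x̄)) = g₁(x̄) − y·g₂(x̄). -/
/-!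
Write `w = u - P v`, where `u = A₀ X` and `v = A₁ X`, so that `u × v = w × v` is orthogonal to `w`.
For `w = (p, q, r)` the invariant says that `x` is a root of `p t² + q t + r`, and the McMillan
relation says that `x'` is the other root. By Vieta, `p (x + x') = -q` and `p x x' = r`, so `p`
times the QRT relation `(x + x') f₂ - x x' f₃ - f₁ = 0` is `-w · (u × v) = 0`
(`qrt_of_mcmillan`). As `x'` is again a root (`root_of_mcmillan`), the point `(x', y)` satisfies
the invariant too, and the same argument applied to the transposed matrices gives the second
relation.
-/

/-- The QRT relation for one variable, with the components of `u × v` written out. -/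
lemma qrt_of_mcmillan {p q r x x' P u0 u1 u2 v0 v1 v2 : ℂ}
    (hp : p = u0 - P * v0) (hq : q = u1 - P * v1) (hr : r = u2 - P * v2)
    (hroot : p * x ^ 2 + q * x + r = 0) (hp0 : p ≠ 0) (hmc : p * (x' + x) = -q) :
    x' * ((u2 * v0 - u0 * v2) - x * (u0 * v1 - u1 * v0)) =
      (u1 * v2 - u2 * v1) - x * (u2 * v0 - u0 * v2) := by
  have hprod : p * (x * x') = r := by linear_combination x * hmc - hroot
  obtain rfl : u0 = p + P * v0 := by linear_combination -hp
  obtain rfl : u1 = q + P * v1 := by linear_combination -hq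
  obtain rfl : u2 = r + P * v2 := by linear_combination -hr
  apply mul_left_cancel₀ hp0
  linear_combination (r * v0 - p * v2) * hmc - (p * v1 - q * v0) * hprod

lemma root_of_mcmillan {p q r x x' : ℂ}
    (hroot : p * x ^ 2 + q * x + r = 0) (hmc : p * (x' + x) = -q) :
    p * x' ^ 2 + q * x' + r = 0 := by
  linear_combination hroot + (x' - x) * hmc

theorem stmt9 (a0 b0 g0 d0 e0 z0 k0 l0 u0 a1 b1 g1 d1 e1 z1 k1 l1 u1 : ℂ)
    (A0 A1 : Matrix (Fin 3) (Fin 3) ℂ)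
    (hA0 : A0 = !![a0, b0, g0; d0, e0, z0; k0, l0, u0])
    (hA1 : A1 = !![a1, b1, g1; d1, e1, z1; k1, l1, u1])
    (Xv : ℂ → Fin 3 → ℂ) (hXv : ∀ x : ℂ, Xv x = ![x ^ 2, x, 1])
    (f g : ℂ → Fin 3 → ℂ)
    (hf : ∀ x : ℂ, f x = crossProduct (A0.mulVec (Xv x)) (A1.mulVec (Xv x)))
    (hg : ∀ y : ℂ, g y = crossProduct (A0.transpose.mulVec (Xv y)) (A1.transpose.mulVec (Xv y)))
    (P : ℂ) (A B G D E Z K L U : ℂ)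
    (hA : A = a0 - a1 * P) (hB : B = b0 - b1 * P) (hG : G = g0 - g1 * P)
    (hD : D = d0 - d1 * P) (hE : E = e0 - e1 * P) (hZ : Z = z0 - z1 * P)
    (hK : K = k0 - k1 * P) (hL : L = l0 - l1 * P) (hU : U = u0 - u1 * P)
    (x y xb yb : ℂ)
    (hinv1 : A * x ^ 2 * y ^ 2 + B * x ^ 2 * y + D * x * y ^ 2 + G * x ^ 2 + E * x * y +
      K * y ^ 2 + Z * x + L * y + U = 0)
    (hden1 : A * y ^ 2 + B * y + G ≠ 0)
    (hmc1 : (A * y ^ 2 + B * y + G) * (xb + x) = -(D * y ^ 2 + E * y + Z))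
    (hden2 : A * xb ^ 2 + D * xb + K ≠ 0)
    (hmc2 : (A * xb ^ 2 + D * xb + K) * (yb + y) = -(B * xb ^ 2 + E * xb + L)) :
    xb * (f y 1 - x * f y 2) = f y 0 - x * f y 1 ∧
    yb * (g xb 1 - y * g xb 2) = g xb 0 - y * g xb 1 := by
  have hroot : (A * y ^ 2 + B * y + G) * x ^ 2 + (D * y ^ 2 + E * y + Z) * x +
      (K * y ^ 2 + L * y + U) = 0 := by linear_combination hinv1
  have hroot' : (A * xb ^ 2 + D * xb + K) * y ^ 2 + (B * xb ^ 2 + E * xb + L) * y +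
      (G * xb ^ 2 + Z * xb + U) = 0 := by
    linear_combination root_of_mcmillan hroot hmc1
  subst hA0 hA1
  constructor
  · have h := qrt_of_mcmillan (P := P)
      (u0 := a0 * y ^ 2 + b0 * y + g0) (u1 := d0 * y ^ 2 + e0 * y + z0)
      (u2 := k0 * y ^ 2 + l0 * y + u0) (v0 := a1 * y ^ 2 + b1 * y + g1)
      (v1 := d1 * y ^ 2 + e1 * y + z1) (v2 := k1 * y ^ 2 + l1 * y + u1)
      (by rw [hA, hB, hG]; ring) (by rw [hD, hE, hZ]; ring) (by rw [hK, hL, hU]; ring)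
      hroot hden1 hmc1
    simp [hf, hXv, cross_apply, Matrix.mulVec, dotProduct, Fin.sum_univ_three]
    linear_combination h
  · have h := qrt_of_mcmillan (P := P)
      (u0 := a0 * xb ^ 2 + d0 * xb + k0) (u1 := b0 * xb ^ 2 + e0 * xb + l0)
      (u2 := g0 * xb ^ 2 + z0 * xb + u0) (v0 := a1 * xb ^ 2 + d1 * xb + k1)
      (v1 := b1 * xb ^ 2 + e1 * xb + l1) (v2 := g1 * xb ^ 2 + z1 * xb + u1)
      (by rw [hA, hD, hK]; ring) (by rw [hB, hE, hL]; ring) (by rw [hG, hZ, hU]; ring)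
      hroot' hden2 hmc2
    simp [hg, hXv, cross_apply, Matrix.mulVec, dotProduct, Fin.sum_univ_three]
    linear_combination h
end
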